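/- Let d be a positive integer and suppose u : D(0,2)^d → [−1,1] is separately subharmonic, i.e. for each coordinate i and any fixed values of the other coordinates, z_i ↦ u(z₁,…,z_d) is subharmonic on D(0,2). Let ω ∈ 𝕋^d satisfy a Diophantine condition and assume that for some n ≥ 1, sup_{θ ∈ 𝕋^d} |u(θ + ω) − u(θ)| < 1/n. Then there exist σ > 0, τ > 0 and c₀ > 0, depending only on d and the Diophantine parameters, such that mes{θ ∈ 𝕋^d : |u(θ) − ⟨u⟩| > n^{−τ}} < exp(−c₀ n^σ), where ⟨u⟩ = ∫_{𝕋^d} u(θ) dθ. -/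

import Mathlib

open MeasureTheory Filter

noncomputable section

/-- Distance from a real number to the nearest integer. -/
def distToInt (x : ℝ) : ℝ := ⨅ k : ℤ, |x - (k : ℝ)|

/-- `ω ∈ 𝕋^d(p,q)`: the standard Diophantine condition `‖k·ω‖ ≥ p/|k|^q`. -/
def Diophantine (d : ℕ) (p q : ℝ) (ω : Fin d → ℝ) : Prop :=
  ∀ k : Fin d → ℤ, k ≠ 0 →
    p / (((∑ i, |k i| : ℤ) : ℝ) ^ q) ≤ distToInt (∑ i, (k i : ℝ) * ω i)

/-- Subharmonicity on a planar domain: upper semicontinuity together with the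
sub-mean value inequality on all sufficiently small circles. -/
def SubharmonicOn (v : ℂ → ℝ) (s : Set ℂ) : Prop :=
  UpperSemicontinuousOn v s ∧
    ∀ z₀ ∈ s, ∃ r₀ > 0, ∀ r : ℝ, 0 < r → r < r₀ →
      v z₀ ≤ (1 / (2 * Real.pi)) *
        ∫ θ in (0 : ℝ)..(2 * Real.pi), v (z₀ + r * Complex.exp (θ * Complex.I))

section Helpers

open Set Metric Topology

/-! ### From local to global sub-mean value inequalities -/

/-- A bounded measurable function is integrable on every circle. -/
theorem circleIntegrable_of_bounded {v : ℂ → ℝ} (hv : Measurable v) {C : ℝ}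
    (hC : ∀ z, |v z| ≤ C) (c : ℂ) (r : ℝ) : CircleIntegrable v c r := by
  unfold CircleIntegrable
  rw [intervalIntegrable_iff]
  refine Measure.integrableOn_of_bounded (M := C) measure_Ioc_lt_top.ne
    (hv.comp (continuous_circleMap c r).measurable).aestronglyMeasurable ?_
  exact ae_of_all _ fun θ => hC _

/-- Maximum principle for upper semicontinuous functions with a local sub-mean value property. -/
theorem nonpos_of_local_submean {K O : Set ℂ} {f : ℂ → ℝ} (hK : IsCompact K)
    (hf : UpperSemicontinuousOn f K)
    (hO : ∀ z ∈ K ∩ O, ∃ r > 0, sphere z r ⊆ K ∧ CircleIntegrable f z r ∧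
      f z ≤ Real.circleAverage f z r)
    (hb : ∀ z ∈ K \ O, f z ≤ 0) : ∀ z ∈ K, f z ≤ 0 := by
  intro z hz
  by_contra! hpos
  obtain ⟨a, haK, hamax⟩ := hf.exists_isMaxOn ⟨z, hz⟩ hK
  have hcomp := hf.isCompact_inter_preimage_Ici hK (f a)
  obtain ⟨b, ⟨hbK, hba⟩, hbmax⟩ := hcomp.exists_isMaxOn ⟨a, haK, le_refl (f a)⟩
    Complex.continuous_re.continuousOn
  have hza : f z ≤ f a := hamax hz
  have hba' : f b = f a := le_antisymm (hamax hbK) hba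
  have hbO : b ∈ O := by
    by_contra hbO
    have := hb b ⟨hbK, hbO⟩
    linarith
  obtain ⟨r, hr, hrK, hinteg, hmean⟩ := hO b ⟨hbK, hbO⟩
  have hmem : ∀ θ, circleMap b r θ ∈ K := fun θ => hrK (circleMap_mem_sphere b hr.le θ)
  have hnn : ∀ θ, 0 ≤ f a - f (circleMap b r θ) := fun θ => sub_nonneg.2 (hamax (hmem θ))
  have hi : ∀ s t : ℝ, s ∈ Icc 0 (2 * Real.pi) → t ∈ Icc 0 (2 * Real.pi) →
      IntervalIntegrable (fun θ => f a - f (circleMap b r θ)) volume s t := by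
    intro s t hs ht
    have h0 : IntervalIntegrable (fun θ => f a - f (circleMap b r θ)) volume 0 (2 * Real.pi) :=
      (intervalIntegrable_const).sub hinteg
    refine h0.mono_set ?_
    rw [uIcc_of_le Real.two_pi_pos.le]
    exact uIcc_subset_Icc hs ht
  have hpi := Real.pi_pos
  have h1 : 0 < ∫ θ in (0 : ℝ)..(Real.pi / 2), (f a - f (circleMap b r θ)) := by
    refine intervalIntegral.intervalIntegral_pos_of_pos_on
      (hi _ _ ⟨le_rfl, by linarith⟩ ⟨by linarith, by linarith⟩) ?_ (by linarith)
    intro θ hθ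
    rcases (hnn θ).lt_or_eq with h | h
    · exact h
    · exfalso
      have hm : circleMap b r θ ∈ K ∩ f ⁻¹' Ici (f a) := ⟨hmem θ, by
        simp only [mem_preimage, mem_Ici]; linarith⟩
      have h2 : (circleMap b r θ).re ≤ b.re := hbmax hm
      have h3 : (circleMap b r θ).re = b.re + r * Real.cos θ := by
        simp [circleMap, Complex.exp_ofReal_mul_I_re]
      have h4 : 0 < Real.cos θ := Real.cos_pos_of_mem_Ioo ⟨by linarith [hθ.1], hθ.2⟩
      nlinarith [mul_pos hr h4]
  have h2 : 0 ≤ ∫ θ in (Real.pi / 2)..(2 * Real.pi), (f a - f (circleMap b r θ)) :=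
    intervalIntegral.integral_nonneg (by linarith) fun θ _ => hnn θ
  have h3 := intervalIntegral.integral_add_adjacent_intervals
    (hi 0 (Real.pi / 2) ⟨le_rfl, by linarith⟩ ⟨by linarith, by linarith⟩)
    (hi (Real.pi / 2) (2 * Real.pi) ⟨by linarith, by linarith⟩ ⟨by linarith, by linarith⟩)
  rw [intervalIntegral.integral_sub intervalIntegrable_const hinteg] at h3
  simp only [intervalIntegral.integral_const, smul_eq_mul, sub_zero] at h3
  rw [Real.circleAverage_def, smul_eq_mul, hba'] at hmean
  have h5 : 2 * Real.pi * f a ≤ ∫ θ in (0 : ℝ)..2 * Real.pi, f (circleMap b r θ) := by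
    have := mul_le_mul_of_nonneg_left hmean Real.two_pi_pos.le
    rwa [← mul_assoc, mul_inv_cancel₀ Real.two_pi_pos.ne', one_mul] at this
  linarith

/-- A bounded upper semicontinuous function is a pointwise limit of continuous functions
lying above it. -/
theorem exists_seq_continuous_of_upperSemicontinuous {X : Type*} [PseudoMetricSpace X]
    {f : X → ℝ} (hf : UpperSemicontinuous f) (hb : ∀ x, |f x| ≤ 1) :
    ∃ g : ℕ → X → ℝ, (∀ k, Continuous (g k)) ∧ (∀ k x, f x ≤ g k x) ∧ (∀ k x, |g k x| ≤ 1) ∧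
      ∀ x, Tendsto (fun k => g k x) atTop (𝓝 (f x)) := by
  rcases isEmpty_or_nonempty X with hX | hX
  · exact ⟨fun _ x => 0, fun k => continuous_const, fun k x => isEmptyElim x,
      fun k x => isEmptyElim x, fun x => isEmptyElim x⟩
  have hbdd : ∀ (k : ℕ) x, BddAbove (range fun y => f y - k * dist x y) := by
    rintro k x
    refine ⟨1, ?_⟩
    rintro _ ⟨y, rfl⟩
    have := (abs_le.1 (hb y)).2
    have : 0 ≤ (k : ℝ) * dist x y := by positivity
    simp only; linarith
  have hle : ∀ (k : ℕ) x, f x ≤ ⨆ y, (f y - k * dist x y) := fun k x => by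
    simpa using le_ciSup (hbdd k x) x
  refine ⟨fun k x => ⨆ y, (f y - k * dist x y), ?_, hle, ?_, ?_⟩
  · intro k
    refine (LipschitzWith.of_le_add_mul (k : NNReal) ?_).continuous
    intro x y
    refine ciSup_le fun z => ?_
    have h1 := le_ciSup (hbdd k y) z
    have h2 : (k : ℝ) * dist y z ≤ k * (dist x y + dist x z) := by
      gcongr
      rw [dist_comm x y]
      exact dist_triangle y x z
    simp only [NNReal.coe_natCast] at *
    linarith
  · intro k x
    refine abs_le.2 ⟨(abs_le.1 (hb x)).1.trans (hle k x), ciSup_le fun y => ?_⟩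
    have := (abs_le.1 (hb y)).2
    have : 0 ≤ (k : ℝ) * dist x y := by positivity
    linarith
  · intro x
    rw [tendsto_order]
    refine ⟨fun a ha => Eventually.of_forall fun k => ha.trans_le (hle k x), fun a ha => ?_⟩
    obtain ⟨a', ha', ha''⟩ := exists_between ha
    have hev := (upperSemicontinuousAt_iff.1 (hf.upperSemicontinuousAt x)) a' ha'
    obtain ⟨δ, hδ, hδ'⟩ := Metric.eventually_nhds_iff.1 hev
    obtain ⟨N, hN⟩ := exists_nat_gt ((1 - a') / δ)
    filter_upwards [eventually_ge_atTop N] with k hk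
    refine lt_of_le_of_lt (ciSup_le fun y => ?_) ha''
    rcases lt_or_ge (dist y x) δ with h | h
    · have := hδ' h
      have : 0 ≤ (k : ℝ) * dist x y := by positivity
      linarith
    · have h1 := (abs_le.1 (hb y)).2
      have h2 : 1 - a' < k * δ := by
        rw [div_lt_iff₀ hδ] at hN
        have : (N : ℝ) * δ ≤ k * δ := by gcongr
        linarith
      have : (k : ℝ) * δ ≤ k * dist x y := by rw [dist_comm]; gcongr
      linarith

/-- Trigonometric polynomials are sums of a holomorphic and an antiholomorphic function. -/
theorem exists_differentiable_of_mem_span_fourier {T : ℝ} {P : C(AddCircle T, ℂ)}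
    (hP : P ∈ Submodule.span ℂ (range (@fourier T))) :
    ∃ h₁ h₂ : ℂ → ℂ, Differentiable ℂ h₁ ∧ Differentiable ℂ h₂ ∧
      ∀ x, P x = h₁ (fourier 1 x) + (starRingEnd ℂ) (h₂ (fourier 1 x)) := by
  have hpow : ∀ (n : ℕ) (x : AddCircle T), fourier (n : ℤ) x = (fourier 1 x : ℂ) ^ n := by
    intro n x
    induction n with
    | zero => simp
    | succ n ih => rw [Nat.cast_succ, fourier_add, ih, pow_succ]
  induction hP using Submodule.span_induction with
  | mem P hP =>
    obtain ⟨k, rfl⟩ := hP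
    rcases Int.eq_nat_or_neg k with ⟨n, rfl | rfl⟩
    · exact ⟨fun z => z ^ n, fun _ => 0, by fun_prop, by fun_prop, fun x => by simp [hpow n x]⟩
    · exact ⟨fun _ => 0, fun z => z ^ n, by fun_prop, by fun_prop, fun x => by
        rw [fourier_neg, hpow n x]; simp⟩
  | zero => exact ⟨fun _ => 0, fun _ => 0, by fun_prop, by fun_prop, fun x => by simp⟩
  | add P Q _ _ hP hQ =>
    obtain ⟨h₁, h₂, d₁, d₂, h⟩ := hP
    obtain ⟨k₁, k₂, e₁, e₂, k⟩ := hQ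
    refine ⟨fun z => h₁ z + k₁ z, fun z => h₂ z + k₂ z, by fun_prop, by fun_prop, fun x => ?_⟩
    simp only [ContinuousMap.add_apply, h, k, map_add]; ring
  | smul a P _ hP =>
    obtain ⟨h₁, h₂, d₁, d₂, h⟩ := hP
    refine ⟨fun z => a * h₁ z, fun z => (starRingEnd ℂ) a * h₂ z, by fun_prop, by fun_prop,
      fun x => ?_⟩
    simp only [ContinuousMap.smul_apply, h, map_mul, Complex.conj_conj, smul_eq_mul]; ring

/-- A continuous function on a circle is uniformly approximated by boundary values of real parts
of entire functions. -/
theorem exists_re_differentiable_approx {g : ℂ → ℝ} (hg : Continuous g) (c : ℂ) {R : ℝ}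
    (hR : 0 < R) {ε : ℝ} (hε : 0 < ε) :
    ∃ h : ℂ → ℂ, Differentiable ℂ h ∧ ∀ z ∈ sphere c R, |(h z).re - g z| ≤ ε := by
  have : Fact (0 < 2 * Real.pi) := ⟨Real.two_pi_pos⟩
  let G : C(AddCircle (2 * Real.pi), ℂ) :=
    ⟨fun x => (g (c + R * (fourier 1 x : ℂ)) : ℂ), by fun_prop⟩
  have hG : G ∈ (Submodule.span ℂ (range (@fourier (2 * Real.pi)))).topologicalClosure := by
    rw [span_fourier_closure_eq_top]; trivial
  obtain ⟨P, hP, hPG⟩ := Metric.mem_closure_iff.1 hG ε hε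
  obtain ⟨h₁, h₂, d₁, d₂, h⟩ := exists_differentiable_of_mem_span_fourier hP
  refine ⟨fun z => h₁ ((z - c) / R) + h₂ ((z - c) / R), by fun_prop, fun z hz => ?_⟩
  obtain ⟨θ, rfl⟩ : ∃ θ, circleMap c R θ = z := by
    have : z ∈ range (circleMap c R) := by rw [range_circleMap, abs_of_pos hR]; exact hz
    exact this
  have hf : (fourier 1 (θ : AddCircle (2 * Real.pi)) : ℂ) = Complex.exp (θ * Complex.I) := by
    rw [fourier_coe_apply]
    congr 1
    have : (Real.pi : ℂ) ≠ 0 := Complex.ofReal_ne_zero.2 Real.pi_ne_zero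
    push_cast
    field_simp
  have h1 : (circleMap c R θ - c) / R = fourier 1 (θ : AddCircle (2 * Real.pi)) := by
    rw [hf, circleMap]
    have : (R : ℂ) ≠ 0 := Complex.ofReal_ne_zero.2 hR.ne'
    field_simp
    ring
  have h2 : circleMap c R θ = c + R * (fourier 1 (θ : AddCircle (2 * Real.pi)) : ℂ) := by
    rw [hf, circleMap]
  have h3 : ‖G θ - P θ‖ ≤ ε := by
    rw [← dist_eq_norm]; exact (ContinuousMap.dist_apply_le_dist _).trans hPG.le
  have h4 := (Complex.abs_re_le_norm _).trans h3
  rw [Complex.sub_re, abs_sub_comm] at h4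
  have h5 : (P θ).re = (h₁ (fourier 1 (θ : AddCircle (2 * Real.pi))) +
      h₂ (fourier 1 (θ : AddCircle (2 * Real.pi)))).re := by rw [h]; simp
  have h6 : (G θ).re = g (circleMap c R θ) := by
    simp only [G, ContinuousMap.coe_mk, h2, Complex.ofReal_re]
  rw [h5, h6] at h4
  simp only [h1]
  exact h4

/-- The local sub-mean value property of a bounded upper semicontinuous function holds on every
disc contained in the domain. -/
theorem le_circleAverage_of_local {v : ℂ → ℝ} (husc : UpperSemicontinuous v)
    (hb : ∀ z, |v z| ≤ 1) {s : Set ℂ}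
    (hloc : ∀ z ∈ s, ∃ r₀ > 0, ∀ r, 0 < r → r < r₀ → v z ≤ Real.circleAverage v z r)
    {c : ℂ} {R : ℝ} (hR : 0 < R) (hs : closedBall c R ⊆ s) :
    v c ≤ Real.circleAverage v c R := by
  have key : ∀ g : ℂ → ℝ, Continuous g → (∀ z, v z ≤ g z) → v c ≤ Real.circleAverage g c R := by
    intro g hg hvg
    refine le_of_forall_pos_le_add fun ε hε => ?_
    obtain ⟨h, hd, happ⟩ := exists_re_differentiable_approx hg c hR (half_pos hε)
    have hcont : Continuous fun z => (h z).re := Complex.continuous_re.comp hd.continuous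
    have hmean : ∀ z r, Real.circleAverage (fun z => (h z).re) z r = (h z).re := by
      intro z r
      have h1 := Complex.reCLM.circleAverage_comp_comm (f := h) (c := z) (R := r)
        (hd.continuous.continuousOn.circleIntegrable')
      rw [DiffContOnCl.circleAverage hd.diffContOnCl] at h1
      simpa [Function.comp_def] using h1
    have hle : ∀ z ∈ closedBall c R, v z - ((h z).re + ε / 2) ≤ 0 := by
      refine nonpos_of_local_submean (O := ball c R) (isCompact_closedBall c R) ?_ ?_ ?_
      · have h2 : UpperSemicontinuous fun z => -((h z).re + ε / 2) :=
          (hcont.add continuous_const).neg.upperSemicontinuous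
        simpa [sub_eq_add_neg] using (husc.add h2).upperSemicontinuousOn _
      · rintro z ⟨-, hz⟩
        obtain ⟨r₀, hr₀, hr⟩ := hloc z (hs (ball_subset_closedBall hz))
        obtain ⟨r₁, hr₁, hsub⟩ := Metric.isOpen_iff.1 isOpen_ball z hz
        have hmin : 0 < min r₀ r₁ := lt_min hr₀ hr₁
        have hvint := circleIntegrable_of_bounded husc.measurable hb z (min r₀ r₁ / 2)
        have hhint : CircleIntegrable (fun z => (h z).re + ε / 2) z (min r₀ r₁ / 2) :=
          (hcont.add continuous_const).continuousOn.circleIntegrable'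
        refine ⟨min r₀ r₁ / 2, half_pos hmin, ?_, hvint.sub hhint, ?_⟩
        · intro w hw
          refine ball_subset_closedBall (hsub ?_)
          rw [mem_ball, mem_sphere.1 hw]
          linarith [min_le_right r₀ r₁]
        · rw [Real.circleAverage_fun_sub hvint hhint,
            Real.circleAverage_fun_add (f₁ := fun z => (h z).re)
              (hcont.continuousOn.circleIntegrable')
              (continuous_const.continuousOn.circleIntegrable'), hmean, Real.circleAverage_const]
          have := hr (min r₀ r₁ / 2) (half_pos hmin) (by linarith [min_le_left r₀ r₁])
          linarith
      · rintro z ⟨hz, hz'⟩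
        have hzs : z ∈ sphere c R := by
          rw [mem_sphere]
          exact le_antisymm hz (not_lt.1 hz')
        have := abs_le.1 (happ z hzs)
        have := hvg z
        linarith
    have h3 := hle c (mem_closedBall_self hR.le)
    have h4 : (h c).re ≤ Real.circleAverage g c R + ε / 2 := by
      rw [← hmean c R]
      have : Real.circleAverage (fun z => g z + ε / 2) c R = Real.circleAverage g c R + ε / 2 := by
        rw [Real.circleAverage_fun_add (hg.continuousOn.circleIntegrable')
              (continuous_const.continuousOn.circleIntegrable'), Real.circleAverage_const]
      rw [← this]
      refine Real.circleAverage_mono (hcont.continuousOn.circleIntegrable')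
        ((hg.add continuous_const).continuousOn.circleIntegrable') fun z hz => ?_
      rw [abs_of_pos hR] at hz
      have := abs_le.1 (happ z hz)
      linarith
    linarith
  obtain ⟨g, hgc, hvg, hgb, hlim⟩ := exists_seq_continuous_of_upperSemicontinuous husc hb
  have htend : Tendsto (fun k => Real.circleAverage (g k) c R) atTop
      (𝓝 (Real.circleAverage v c R)) := by
    simp only [Real.circleAverage_def]
    refine Tendsto.const_smul ?_ _
    refine intervalIntegral.tendsto_integral_filter_of_dominated_convergence (fun _ => 1) ?_ ?_ ?_ ?_
    · exact Eventually.of_forall fun k =>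
        ((hgc k).comp (continuous_circleMap c R)).aestronglyMeasurable
    · exact Eventually.of_forall fun k => ae_of_all _ fun θ _ => hgb k _
    · exact intervalIntegrable_const
    · exact ae_of_all _ fun θ _ => hlim _
  exact ge_of_tendsto' htend fun k => key _ (hgc k) (hvg k)

/-- The sub-mean value inequality on every closed disc contained in `s`. -/
def SubmeanOn (v : ℂ → ℝ) (s : Set ℂ) : Prop :=
  ∀ (c : ℂ) (R : ℝ), 0 < R → closedBall c R ⊆ s → v c ≤ Real.circleAverage v c R

/-- A bounded measurable function is integrable for a finite measure. -/
theorem integrable_of_abs_le {X : Type*} [MeasurableSpace X] {μ : Measure X} [IsFiniteMeasure μ]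
    {f : X → ℝ} (hf : Measurable f) {C : ℝ} (hC : ∀ x, |f x| ≤ C) : Integrable f μ :=
  Integrable.of_bound hf.aestronglyMeasurable C (ae_of_all _ hC)

/-- Sub-mean value inequality over discs. -/
theorem SubmeanOn.setIntegral_ball_nonneg {v : ℂ → ℝ} {s : Set ℂ} (h : SubmeanOn v s)
    (hv : Measurable v) {C : ℝ} (hC : ∀ z, |v z| ≤ C) {c : ℂ} {r : ℝ} (hs : ball c r ⊆ s) :
    0 ≤ ∫ ζ in ball c r, (v ζ - v c) := by
  have h1 : ∫ ζ in ball c r, (v ζ - v c) =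
      ∫ ζ, (ball (0 : ℂ) r).indicator (fun ζ => v (c + ζ) - v c) ζ := by
    rw [← integral_indicator measurableSet_ball,
      ← integral_add_left_eq_self (fun ζ => (ball c r).indicator (fun ζ => v ζ - v c) ζ) c]
    congr 1
    ext ζ
    simp [indicator]
  rw [h1, ← Complex.integral_comp_polarCoord_symm]
  by_cases hinteg : IntegrableOn (fun p : ℝ × ℝ => p.1 • (ball (0 : ℂ) r).indicator
      (fun ζ => v (c + ζ) - v c) (Complex.polarCoord.symm p)) polarCoord.target
  swap
  · rw [integral_undef hinteg]
  rw [polarCoord_target] at hinteg ⊢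
  rw [Measure.volume_eq_prod, setIntegral_prod _ hinteg]
  refine setIntegral_nonneg measurableSet_Ioi fun ρ hρ => ?_
  rw [mem_Ioi] at hρ
  simp only [smul_eq_mul]
  rw [integral_const_mul]
  refine mul_nonneg hρ.le ?_
  have hsymm : ∀ θ : ℝ, Complex.polarCoord.symm (ρ, θ) = ρ * Complex.exp (θ * Complex.I) := by
    intro θ
    rw [Complex.polarCoord_symm_apply, Complex.exp_mul_I]
    push_cast
    ring
  rcases lt_or_ge ρ r with hρr | hρr
  · have hfun : ∀ θ : ℝ, (ball (0 : ℂ) r).indicator (fun ζ => v (c + ζ) - v c)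
        (Complex.polarCoord.symm (ρ, θ)) = v (circleMap c ρ θ) - v c := by
      intro θ
      rw [hsymm, indicator_of_mem]
      · rfl
      · simp [Complex.norm_exp_ofReal_mul_I, abs_of_pos hρ, hρr]
    simp only [hfun]
    rw [← integral_Ioc_eq_integral_Ioo, ← intervalIntegral.integral_of_le (by linarith [Real.pi_pos])]
    have hci : CircleIntegrable v c ρ := circleIntegrable_of_bounded hv hC c ρ
    have hper : Function.Periodic (fun θ => v (circleMap c ρ θ) - v c) (2 * Real.pi) := by
      intro θ
      simp only [periodic_circleMap c ρ θ]
    have hshift := hper.intervalIntegral_add_eq (-Real.pi) 0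
    rw [show -Real.pi + 2 * Real.pi = Real.pi by ring, zero_add] at hshift
    rw [hshift, intervalIntegral.integral_sub hci intervalIntegrable_const]
    have := h c ρ hρ ((closedBall_subset_ball hρr).trans hs)
    rw [Real.circleAverage_def, smul_eq_mul] at this
    have h5 : 2 * Real.pi * v c ≤ ∫ θ in (0 : ℝ)..2 * Real.pi, v (circleMap c ρ θ) := by
      have := mul_le_mul_of_nonneg_left this Real.two_pi_pos.le
      rwa [← mul_assoc, mul_inv_cancel₀ Real.two_pi_pos.ne', one_mul] at this
    simp only [intervalIntegral.integral_const, smul_eq_mul, sub_zero]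
    linarith
  · have hfun : ∀ θ : ℝ, (ball (0 : ℂ) r).indicator (fun ζ => v (c + ζ) - v c)
        (Complex.polarCoord.symm (ρ, θ)) = 0 := by
      intro θ
      rw [hsymm, indicator_of_notMem]
      simp [Complex.norm_exp_ofReal_mul_I, abs_of_pos hρ, hρr]
    simp only [hfun, integral_zero, le_refl]

/-- Reverse Fatou lemma for uniformly bounded families, along a countably generated filter. -/
theorem eventually_integral_lt {X ι : Type*} [MeasurableSpace X] {μ : Measure X}
    [IsFiniteMeasure μ] {l : Filter ι} [l.IsCountablyGenerated] {F : ι → X → ℝ} {f : X → ℝ}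
    {C : ℝ} (hF : ∀ i, Measurable (F i)) (hFC : ∀ i x, |F i x| ≤ C) (hf : Measurable f)
    (hfC : ∀ x, |f x| ≤ C) (hlim : ∀ᵐ x ∂μ, ∀ a, f x < a → ∀ᶠ i in l, F i x < a)
    {a : ℝ} (ha : ∫ x, f x ∂μ < a) : ∀ᶠ i in l, ∫ x, F i x ∂μ < a := by
  have hconv : ∀ g : X → ℝ, Measurable g → (∀ x, |g x| ≤ C) →
      ∫⁻ x, ENNReal.ofReal (C - g x) ∂μ = ENNReal.ofReal (∫ x, (C - g x) ∂μ) := by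
    intro g hg hgC
    exact (ofReal_integral_eq_lintegral_ofReal
      ((integrable_const C).sub (integrable_of_abs_le hg hgC))
      (ae_of_all _ fun x => sub_nonneg.2 (abs_le.1 (hgC x)).2)).symm
  have hsub : ∀ g : X → ℝ, Measurable g → (∀ x, |g x| ≤ C) →
      ∫ x, (C - g x) ∂μ = ∫ x, C ∂μ - ∫ x, g x ∂μ := fun g hg hgC =>
    integral_sub (integrable_const C) (integrable_of_abs_le hg hgC)
  have hfatou := lintegral_liminf_le (μ := μ) (u := l) (f := fun i x => ENNReal.ofReal (C - F i x))
    (fun i => (measurable_const.sub (hF i)).ennreal_ofReal)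
  have h1 : ∫⁻ x, ENNReal.ofReal (C - f x) ∂μ ≤
      ∫⁻ x, liminf (fun i => ENNReal.ofReal (C - F i x)) l ∂μ := by
    refine lintegral_mono_ae ?_
    filter_upwards [hlim] with x hx
    refine le_of_forall_lt fun b hb => ?_
    obtain ⟨b', hb', hb''⟩ := exists_between hb
    refine hb'.trans_le (le_liminf_of_le (by isBoundedDefault) ?_)
    have hbt : b' ≠ ⊤ := (hb''.trans_le le_top).ne
    have h2 : b'.toReal < C - f x := by
      rw [← ENNReal.ofReal_toReal hbt] at hb''
      exact (ENNReal.ofReal_lt_ofReal_iff_of_nonneg ENNReal.toReal_nonneg).1 hb''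
    filter_upwards [hx (C - b'.toReal) (by linarith)] with i hi
    rw [← ENNReal.ofReal_toReal hbt]
    exact ENNReal.ofReal_le_ofReal (by linarith)
  have h3 := h1.trans hfatou
  rw [hconv f hf hfC, hsub f hf hfC] at h3
  by_cases hneg : ∫ x, C ∂μ - a < 0
  · refine Eventually.of_forall fun i => ?_
    have : ∫ x, F i x ∂μ ≤ ∫ x, C ∂μ := integral_mono (integrable_of_abs_le (hF i) (hFC i))
      (integrable_const C) fun x => (abs_le.1 (hFC i x)).2
    linarith
  · push Not at hneg
    have h4 : ENNReal.ofReal (∫ x, C ∂μ - a) <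
        liminf (fun i => ∫⁻ x, ENNReal.ofReal (C - F i x) ∂μ) l :=
      lt_of_lt_of_le ((ENNReal.ofReal_lt_ofReal_iff_of_nonneg hneg).2 (by linarith)) h3
    filter_upwards [eventually_lt_of_lt_liminf h4] with i hi
    rw [hconv _ (hF i) (hFC i), hsub _ (hF i) (hFC i),
      ENNReal.ofReal_lt_ofReal_iff_of_nonneg hneg] at hi
    linarith

/-- Averages of upper semicontinuous functions are upper semicontinuous. -/
theorem upperSemicontinuous_integral {X Y : Type*} [MeasurableSpace X] [TopologicalSpace Y]
    [FirstCountableTopology Y] {μ : Measure X}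
    [IsFiniteMeasure μ] {F : X → Y → ℝ} {C : ℝ} (hF : ∀ y, Measurable fun x => F x y)
    (hC : ∀ x y, |F x y| ≤ C) (husc : ∀ x, UpperSemicontinuous (F x)) :
    UpperSemicontinuous fun y => ∫ x, F x y ∂μ := by
  intro y
  refine upperSemicontinuousAt_iff.2 fun a ha => ?_
  exact eventually_integral_lt (l := 𝓝 y) (F := fun y x => F x y) hF (fun y x => hC x y) (hF y)
    (fun x => hC x y) (ae_of_all _ fun x b hb =>
      upperSemicontinuousAt_iff.1 ((husc x).upperSemicontinuousAt y) b hb) ha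

/-- Averages commute with circle averages. -/
theorem circleAverage_integral {X : Type*} [MeasurableSpace X] {μ : Measure X}
    [IsFiniteMeasure μ] {F : X → ℂ → ℝ} {C : ℝ} (hF : Measurable (Function.uncurry F))
    (hC : ∀ x y, |F x y| ≤ C) (c : ℂ) (r : ℝ) :
    Real.circleAverage (fun z => ∫ x, F x z ∂μ) c r = ∫ x, Real.circleAverage (F x) c r ∂μ := by
  simp only [Real.circleAverage_def, smul_eq_mul]
  rw [integral_const_mul]
  congr 1
  simp only [intervalIntegral.integral_of_le Real.two_pi_pos.le]
  rw [integral_integral_swap]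
  refine integrable_of_abs_le (C := C) ?_ fun p => hC _ _
  have : Measurable fun p : ℝ × X => (p.2, circleMap c r p.1) :=
    measurable_snd.prodMk ((continuous_circleMap c r).measurable.comp measurable_fst)
  exact hF.comp this

theorem abs_circleAverage_le {v : ℂ → ℝ} (hv : Measurable v) {C : ℝ} (hC : ∀ z, |v z| ≤ C)
    (c : ℂ) (r : ℝ) : |Real.circleAverage v c r| ≤ C := by
  refine Real.abs_circleAverage_le_circleAverage_abs.trans ?_
  exact Real.circleAverage_mono_on_of_le_circle
    (circleIntegrable_of_bounded hv.abs (C := C) (by simpa using hC) c r) fun z _ => hC z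

/-- Averages of functions with the sub-mean value property have the sub-mean value property. -/
theorem SubmeanOn.integral {X : Type*} [MeasurableSpace X] {μ : Measure X}
    [IsFiniteMeasure μ] {F : X → ℂ → ℝ} {C : ℝ} {s : Set ℂ} (hF : Measurable (Function.uncurry F))
    (hC : ∀ x y, |F x y| ≤ C) (hs : ∀ᵐ x ∂μ, SubmeanOn (F x) s) :
    SubmeanOn (fun z => ∫ x, F x z ∂μ) s := by
  intro c r hr hcs
  rw [circleAverage_integral hF hC]
  have hb : ∀ x, |Real.circleAverage (F x) c r| ≤ C := fun x =>
    abs_circleAverage_le (hF.comp (measurable_const.prodMk measurable_id)) (hC x) c r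
  refine integral_mono_ae (integrable_of_abs_le (hF.comp (measurable_id.prodMk measurable_const))
    fun x => hC x c) ?_ (hs.mono fun x hx => hx c r hr hcs)
  have hm : Measurable fun x => Real.circleAverage (F x) c r := by
    simp only [Real.circleAverage_def, smul_eq_mul,
      intervalIntegral.integral_of_le Real.two_pi_pos.le]
    refine Measurable.const_mul ?_ _
    have : Measurable fun p : X × ℝ => (p.1, circleMap c r p.2) :=
      measurable_fst.prodMk ((continuous_circleMap c r).measurable.comp measurable_snd)
    exact ((hF.comp this).stronglyMeasurable.integral_prod_right' (ν := volume.restrict _)).measurable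
  exact integrable_of_abs_le hm hb

/-! ### Logarithmic potentials -/

/-- The logarithmic potential of Lebesgue measure on a set of reals. -/
def logPotential (K : Set ℝ) (z : ℂ) : ℝ := ∫ t in K, Real.log ‖z - t‖

theorem integrableOn_log_norm_sub {K : Set ℝ} {a b : ℝ} (hK : K ⊆ Icc a b) (z : ℂ) :
    IntegrableOn (fun t : ℝ => Real.log ‖z - t‖) K := by
  rcases le_or_gt a b with hab | hab
  · refine IntegrableOn.mono_set ?_ hK
    rw [← intervalIntegrable_iff_integrableOn_Icc_of_le hab]
    refine MeromorphicOn.intervalIntegrable_log_norm (f := fun t : ℝ => z - (t : ℂ)) fun t _ => ?_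
    have : AnalyticAt ℝ (fun t : ℝ => z - (t : ℂ)) t :=
      analyticAt_const.sub (Complex.ofRealCLM.analyticAt t)
    exact this.meromorphicAt
  · rw [Icc_eq_empty (not_le.2 hab)] at hK
    rw [subset_empty_iff.1 hK]
    exact integrableOn_empty

theorem integral_log_sub_log_abs (x : ℝ) {a : ℝ} (ha : 0 < a) :
    ∫ t in Icc (x - a) (x + a), (Real.log a - Real.log |x - t|) = 2 * a := by
  rw [integral_Icc_eq_integral_Ioc, ← intervalIntegral.integral_of_le (by linarith)]
  simp only [Real.log_abs]
  rw [intervalIntegral.integral_comp_sub_left (fun t => Real.log a - Real.log t) x]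
  rw [intervalIntegral.integral_sub intervalIntegrable_const
    intervalIntegral.intervalIntegrable_log', integral_log]
  have : Real.log (x - (x + a)) = Real.log a := by
    rw [show x - (x + a) = -a by ring, Real.log_neg_eq_log]
  rw [this]
  simp only [intervalIntegral.integral_const, smul_eq_mul, sub_sub_cancel]
  ring

theorem abs_re_sub_le_norm (z : ℂ) (t : ℝ) : |z.re - t| ≤ ‖z - t‖ := by
  simpa using Complex.abs_re_le_norm (z - t)

/-- Among sets of given measure the potential is smallest for centred intervals. -/
theorem le_logPotential {K : Set ℝ} {b c : ℝ} (hK : K ⊆ Icc b c) (hm : MeasurableSet K) (z : ℂ)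
    {a : ℝ} (ha : 0 < a) : volume.real K * Real.log a - 2 * a ≤ logPotential K z := by
  have hfin : volume K ≠ ⊤ := (measure_mono hK).trans_lt measure_Icc_lt_top |>.ne
  have hinteg := integrableOn_log_norm_sub hK z
  have hne : ∀ᵐ t : ℝ ∂volume, t ≠ z.re := by simp [ae_iff]
  have hJ : IntegrableOn (fun t => Real.log a - Real.log |z.re - t|)
      (Icc (z.re - a) (z.re + a)) := by
    by_contra h
    have := integral_log_sub_log_abs z.re ha
    rw [integral_undef h] at this
    linarith
  have hpos : ∀ t ∈ Icc (z.re - a) (z.re + a), t ≠ z.re →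
      0 ≤ Real.log a - Real.log |z.re - t| := by
    intro t ht hne
    refine sub_nonneg.2 (Real.log_le_log (abs_pos.2 (sub_ne_zero.2 hne.symm)) ?_)
    rw [abs_le]
    constructor <;> linarith [ht.1, ht.2]
  have h1 : ∫ t in K, (Real.log a - Real.log ‖z - t‖) ≤ 2 * a := by
    rw [← integral_log_sub_log_abs z.re ha, ← integral_indicator hm,
      ← integral_indicator measurableSet_Icc]
    refine integral_mono_ae ?_ ((integrable_indicator_iff measurableSet_Icc).2 hJ) ?_
    · rw [integrable_indicator_iff hm]
      exact (integrableOn_const hfin).sub hinteg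
    · filter_upwards [hne] with t ht
      have hlog : Real.log |z.re - t| ≤ Real.log ‖z - t‖ :=
        Real.log_le_log (abs_pos.2 (sub_ne_zero.2 ht.symm)) (abs_re_sub_le_norm z t)
      by_cases htJ : t ∈ Icc (z.re - a) (z.re + a)
      · rw [indicator_of_mem htJ]
        have := hpos t htJ ht
        by_cases htK : t ∈ K
        · rw [indicator_of_mem htK]; linarith
        · rw [indicator_of_notMem htK]; exact this
      · rw [indicator_of_notMem htJ]
        by_cases htK : t ∈ K
        · rw [indicator_of_mem htK]
          have : a ≤ |z.re - t| := by
            by_contra! h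
            rw [abs_lt] at h
            exact htJ ⟨by linarith, by linarith⟩
          have := Real.log_le_log ha this
          linarith
        · rw [indicator_of_notMem htK]
  rw [integral_sub (integrableOn_const (C := Real.log a) hfin).integrable hinteg] at h1
  simp only [integral_const, smul_eq_mul, measureReal_restrict_apply_univ] at h1
  unfold logPotential
  linarith

theorem log_one_add_le_two_mul_sqrt {y : ℝ} (hy : 0 ≤ y) : Real.log (1 + y) ≤ 2 * √y := by
  have h1 : 1 + y ≤ (1 + √y) ^ 2 := by nlinarith [Real.sq_sqrt hy, Real.sqrt_nonneg y]
  have h2 : 0 < 1 + √y := by positivity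
  calc Real.log (1 + y) ≤ Real.log ((1 + √y) ^ 2) := Real.log_le_log (by linarith) h1
    _ = 2 * Real.log (1 + √y) := by rw [Real.log_pow]; norm_num
    _ ≤ 2 * √y := by linarith [Real.log_le_sub_one_of_pos h2]

theorem log_le_two_mul_sqrt {y : ℝ} (hy : 0 ≤ y) : Real.log y ≤ 2 * √y := by
  rcases hy.eq_or_lt with rfl | h
  · simp
  · exact (Real.log_le_log h (by linarith)).trans (log_one_add_le_two_mul_sqrt hy)

theorem integrableOn_rpow_neg_half (x : ℝ) :
    IntegrableOn (fun t : ℝ => |x - t| ^ (-(1 / 2) : ℝ)) (Icc (x - 1) (x + 1)) ∧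
      ∫ t in Icc (x - 1) (x + 1), |x - t| ^ (-(1 / 2) : ℝ) = 4 := by
  have h0 : IntervalIntegrable (fun t : ℝ => t ^ (-(1 / 2) : ℝ)) volume 0 1 :=
    intervalIntegral.intervalIntegrable_rpow' (by norm_num)
  have hint1 : ∫ t in (0 : ℝ)..1, t ^ (-(1 / 2) : ℝ) = 2 := by
    rw [integral_rpow (Or.inl (by norm_num))]
    norm_num
  have ha : IntervalIntegrable (fun t : ℝ => |t| ^ (-(1 / 2) : ℝ)) volume 0 1 := by
    refine h0.congr ?_
    intro t ht
    rw [uIoc_of_le zero_le_one] at ht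
    simp only [abs_of_pos ht.1]
  have hb : IntervalIntegrable (fun t : ℝ => |t| ^ (-(1 / 2) : ℝ)) volume (-1) 0 := by
    have := (ha.comp_sub_left 0).symm
    simpa using this
  have hia : ∫ t in (0 : ℝ)..1, |t| ^ (-(1 / 2) : ℝ) = 2 := by
    refine Eq.trans ?_ hint1
    refine intervalIntegral.integral_congr fun t ht => ?_
    rw [uIcc_of_le zero_le_one] at ht
    simp only [abs_of_nonneg ht.1]
  have hib : ∫ t in (-1 : ℝ)..0, |t| ^ (-(1 / 2) : ℝ) = 2 := by
    have := intervalIntegral.integral_comp_sub_left (a := -1) (b := 0)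
      (fun t : ℝ => |t| ^ (-(1 / 2) : ℝ)) 0
    simp only [zero_sub, abs_neg, neg_neg, neg_zero] at this
    rw [this, hia]
  have hc : IntervalIntegrable (fun t : ℝ => |t| ^ (-(1 / 2) : ℝ)) volume (-1) 1 := hb.trans ha
  have hd := (hc.comp_sub_left x).symm
  have hi : ∫ t in (x - 1)..(x + 1), |x - t| ^ (-(1 / 2) : ℝ) = 4 := by
    rw [intervalIntegral.integral_comp_sub_left (fun t : ℝ => |t| ^ (-(1 / 2) : ℝ)) x,
      show x - (x + 1) = -1 by ring, show x - (x - 1) = 1 by ring,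
      ← intervalIntegral.integral_add_adjacent_intervals hb ha, hia, hib]
    norm_num
  rw [show x - -1 = x + 1 by ring] at hd
  refine ⟨(intervalIntegrable_iff_integrableOn_Icc_of_le (by linarith)).1 hd, ?_⟩
  rw [integral_Icc_eq_integral_Ioc, ← intervalIntegral.integral_of_le (by linarith), hi]

/-- The potential is Hölder continuous of exponent one half. -/
theorem logPotential_sub_le {K : Set ℝ} {b c : ℝ} (hK : K ⊆ Icc b c) (z w : ℂ) :
    logPotential K z - logPotential K w ≤ 2 * (4 + volume.real K) * √‖z - w‖ := by
  have hfin : volume K ≠ ⊤ := (measure_mono hK).trans_lt measure_Icc_lt_top |>.ne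
  have hzint := integrableOn_log_norm_sub hK z
  have hwint := integrableOn_log_norm_sub hK w
  obtain ⟨hi, hi4⟩ := integrableOn_rpow_neg_half w.re
  set S := Icc (w.re - 1) (w.re + 1)
  set φ : ℝ → ℝ := fun t => |w.re - t| ^ (-(1 / 2) : ℝ)
  have hI : Integrable (S.indicator φ) := (integrable_indicator_iff measurableSet_Icc).2 hi
  have hφ0 : ∀ t, 0 ≤ φ t := fun t => Real.rpow_nonneg (abs_nonneg _) _
  have hbound : ∀ t : ℝ, t ≠ w.re → t ≠ z.re → Real.log ‖z - t‖ - Real.log ‖w - t‖ ≤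
      2 * √‖z - w‖ * (S.indicator φ t + 1) := by
    intro t htw htz
    have hwt : 0 < |w.re - t| := abs_pos.2 (sub_ne_zero.2 htw.symm)
    have hwt' : 0 < ‖w - t‖ := hwt.trans_le (abs_re_sub_le_norm w t)
    have hzt' : 0 < ‖z - t‖ := (abs_pos.2 (sub_ne_zero.2 htz.symm)).trans_le
      (abs_re_sub_le_norm z t)
    have h1 : ‖z - t‖ / ‖w - t‖ ≤ 1 + ‖z - w‖ / |w.re - t| := by
      have h2 : ‖z - t‖ ≤ ‖w - t‖ + ‖z - w‖ := by
        have := norm_add_le (w - (t : ℂ)) (z - w)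
        rwa [show w - (t : ℂ) + (z - w) = z - t by ring] at this
      calc ‖z - t‖ / ‖w - t‖ ≤ (‖w - t‖ + ‖z - w‖) / ‖w - t‖ := by gcongr
        _ = 1 + ‖z - w‖ / ‖w - t‖ := by field_simp
        _ ≤ _ := by gcongr; exact abs_re_sub_le_norm w t
    have h3 : √(‖z - w‖ / |w.re - t|) = √‖z - w‖ * φ t := by
      rw [Real.sqrt_div (norm_nonneg _), div_eq_mul_inv]
      congr 1
      simp only [φ]
      rw [Real.rpow_neg hwt.le, Real.sqrt_eq_rpow]
    have h4 : φ t ≤ S.indicator φ t + 1 := by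
      by_cases hS : t ∈ S
      · rw [indicator_of_mem hS]; linarith
      · rw [indicator_of_notMem hS]
        have : 1 ≤ |w.re - t| := by
          by_contra! h
          rw [abs_lt] at h
          exact hS ⟨by linarith, by linarith⟩
        have := Real.rpow_le_one_of_one_le_of_nonpos this (z := (-(1 / 2) : ℝ)) (by norm_num)
        simpa [φ] using this
    calc Real.log ‖z - t‖ - Real.log ‖w - t‖ = Real.log (‖z - t‖ / ‖w - t‖) := by
          rw [Real.log_div hzt'.ne' hwt'.ne']
      _ ≤ Real.log (1 + ‖z - w‖ / |w.re - t|) := Real.log_le_log (by positivity) h1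
      _ ≤ 2 * √(‖z - w‖ / |w.re - t|) := log_one_add_le_two_mul_sqrt (by positivity)
      _ = 2 * √‖z - w‖ * φ t := by rw [h3]; ring
      _ ≤ _ := by gcongr
  have hne : ∀ᵐ t : ℝ ∂(volume.restrict K), t ≠ w.re ∧ t ≠ z.re := by
    refine ae_restrict_of_ae ?_
    have h1 : ∀ᵐ t : ℝ ∂volume, t ≠ w.re := by simp [ae_iff]
    have h2 : ∀ᵐ t : ℝ ∂volume, t ≠ z.re := by simp [ae_iff]
    exact h1.and h2
  have h5 : ∫ t in K, S.indicator φ t ≤ 4 := by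
    rw [← hi4, ← integral_indicator measurableSet_Icc (f := φ)]
    exact setIntegral_le_integral hI (ae_of_all _ fun t => indicator_nonneg (fun t _ => hφ0 t) t)
  unfold logPotential
  rw [← integral_sub hzint hwint]
  calc _ ≤ ∫ t in K, 2 * √‖z - w‖ * (S.indicator φ t + 1) := by
        refine integral_mono_ae (hzint.sub hwint)
          ((hI.integrableOn.add (integrableOn_const hfin)).const_mul _) ?_
        filter_upwards [hne] with t ht using hbound t ht.1 ht.2
    _ = 2 * √‖z - w‖ * ((∫ t in K, S.indicator φ t) + volume.real K) := by
        rw [integral_const_mul, integral_add hI.integrableOn (integrableOn_const hfin)]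
        simp
    _ ≤ 2 * √‖z - w‖ * (4 + volume.real K) := by gcongr
    _ = _ := by ring

theorem continuous_logPotential {K : Set ℝ} {b c : ℝ} (hK : K ⊆ Icc b c) :
    Continuous (logPotential K) := by
  rw [continuous_iff_continuousAt]
  intro z
  rw [ContinuousAt, tendsto_iff_norm_sub_tendsto_zero]
  have hlim : Tendsto (fun w => 2 * (4 + volume.real K) * √‖w - z‖) (𝓝 z) (𝓝 0) := by
    have : Continuous fun w => 2 * (4 + volume.real K) * √‖w - z‖ := by fun_prop
    simpa using this.tendsto z
  refine squeeze_zero (fun _ => norm_nonneg _) (fun w => ?_) hlim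
  rw [Real.norm_eq_abs, abs_le]
  have h1 := logPotential_sub_le hK w z
  have h2 := logPotential_sub_le hK z w
  rw [norm_sub_rev z w] at h2
  constructor <;> linarith

/-- The potential of a compact set is harmonic off that set. -/
theorem circleAverage_logPotential {K : Set ℝ} (hK : IsCompact K) {z : ℂ} {r : ℝ} (hr : 0 < r)
    (hd : ∀ t ∈ K, (t : ℂ) ∉ closedBall z r) :
    Real.circleAverage (logPotential K) z r = logPotential K z := by
  have hcont : ContinuousOn (fun p : ℝ × ℝ => Real.log ‖circleMap z r p.1 - p.2‖)
      (Icc 0 (2 * Real.pi) ×ˢ K) := by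
    refine ContinuousOn.log (by fun_prop) ?_
    rintro ⟨θ, t⟩ ⟨-, ht⟩ h
    rw [norm_eq_zero, sub_eq_zero] at h
    refine hd t ht ?_
    simp only at h
    rw [← h]
    exact circleMap_mem_closedBall z hr.le θ
  have hinteg : IntegrableOn (fun p : ℝ × ℝ => Real.log ‖circleMap z r p.1 - p.2‖)
      (Ioc 0 (2 * Real.pi) ×ˢ K) :=
    (hcont.integrableOn_compact (isCompact_Icc.prod hK)).mono_set
      (prod_mono_left Ioc_subset_Icc_self)
  have hKm := hK.measurableSet
  unfold logPotential
  rw [Real.circleAverage_def, smul_eq_mul, intervalIntegral.integral_of_le Real.two_pi_pos.le]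
  rw [integral_integral_swap (f := fun (θ t : ℝ) => Real.log ‖circleMap z r θ - t‖), ← integral_const_mul]
  · refine setIntegral_congr_fun hKm fun t ht => ?_
    have h1 := circleAverage_log_norm_sub_const_eq_log_radius_add_posLog (a := (t : ℂ)) (c := z) hr.ne'
    rw [Real.circleAverage_def, smul_eq_mul, intervalIntegral.integral_of_le Real.two_pi_pos.le] at h1
    rw [h1]
    have h2 : r < ‖z - t‖ := by
      have := hd t ht
      rw [mem_closedBall, not_le, dist_comm, dist_eq_norm] at this
      exact this
    have h3 : 0 < ‖z - t‖ := hr.trans h2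
    have h4 : 1 ≤ |r⁻¹ * ‖z - t‖| := by
      rw [abs_of_pos (by positivity), inv_mul_eq_div, le_div_iff₀ hr]
      linarith
    rw [Real.posLog_eq_log h4, Real.log_mul (inv_ne_zero hr.ne') h3.ne', Real.log_inv]
    ring
  · rw [Measure.prod_restrict]
    exact hinteg

/-- Comparison of a subharmonic function with a multiple of a logarithmic potential. -/
theorem le_add_mul_logPotential {v : ℂ → ℝ} (husc : UpperSemicontinuous v) {C : ℝ}
    (hb : ∀ z, |v z| ≤ C) {s : Set ℂ} (hsub : SubmeanOn v s) {c : ℂ} {R : ℝ}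
    (hs : closedBall c R ⊆ s) {G : Set ℝ} (hG : IsCompact G) {α β : ℝ}
    (hsph : ∀ z ∈ sphere c R, v z ≤ β + α * logPotential G z)
    (hGv : ∀ t ∈ G, v t ≤ β + α * logPotential G t) :
    ∀ z ∈ closedBall c R, v z ≤ β + α * logPotential G z := by
  obtain ⟨b, hb'⟩ := hG.isBounded.subset_closedBall 0
  rw [Real.closedBall_eq_Icc] at hb'
  have hcont : Continuous fun z => β + α * logPotential G z :=
    continuous_const.add (continuous_const.mul (continuous_logPotential hb'))
  have hcl : IsClosed ((fun t : ℝ => (t : ℂ)) '' G) :=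
    (hG.image Complex.continuous_ofReal).isClosed
  have key := nonpos_of_local_submean (K := closedBall c R)
    (O := ball c R ∩ ((fun t : ℝ => (t : ℂ)) '' G)ᶜ)
    (f := fun z => v z - (β + α * logPotential G z)) (isCompact_closedBall c R) ?_ ?_ ?_
  · intro z hz
    have := key z hz
    linarith
  · have := husc.add hcont.neg.upperSemicontinuous
    simpa [sub_eq_add_neg] using this.upperSemicontinuousOn _
  · rintro z ⟨-, hz⟩
    obtain ⟨r, hr, hsubr⟩ := Metric.isOpen_iff.1 (isOpen_ball.inter hcl.isOpen_compl) z hz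
    have hcb : closedBall z (r / 2) ⊆ ball c R ∩ ((fun t : ℝ => (t : ℂ)) '' G)ᶜ :=
      (closedBall_subset_ball (by linarith)).trans hsubr
    have hvint := circleIntegrable_of_bounded husc.measurable hb z (r / 2)
    have hpint : CircleIntegrable (fun z => β + α * logPotential G z) z (r / 2) :=
      hcont.continuousOn.circleIntegrable'
    refine ⟨r / 2, by linarith, fun w hw => ball_subset_closedBall
      (hcb (sphere_subset_closedBall hw)).1, hvint.sub hpint, ?_⟩
    have h1 := hsub z (r / 2) (by linarith)
      (fun w hw => hs (ball_subset_closedBall (hcb hw).1))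
    have h2 : Real.circleAverage (logPotential G) z (r / 2) = logPotential G z :=
      circleAverage_logPotential hG (by linarith) fun t ht hmem => (hcb hmem).2 ⟨t, ht, rfl⟩
    have h3 : Real.circleAverage (fun z => α * logPotential G z) z (r / 2) =
        α * logPotential G z := by
      have := Real.circleAverage_fun_smul (a := α) (f := logPotential G) (c := z) (R := r / 2)
      simp only [smul_eq_mul] at this
      rw [this, h2]
    rw [Real.circleAverage_fun_sub hvint hpint,
      Real.circleAverage_fun_add (f₁ := fun _ => β) (f₂ := fun z => α * logPotential G z)
        (continuous_const.continuousOn.circleIntegrable')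
        ((continuous_const.mul (continuous_logPotential hb')).continuousOn.circleIntegrable'),
      Real.circleAverage_const, h3]
    linarith
  · rintro z ⟨hz, hz'⟩
    by_cases hzb : z ∈ ball c R
    · have : z ∈ (fun t : ℝ => (t : ℂ)) '' G := by
        by_contra h
        exact hz' ⟨hzb, h⟩
      obtain ⟨t, ht, rfl⟩ := this
      have := hGv t ht
      linarith
    · have := hsph z (le_antisymm hz (not_lt.1 hzb))
      linarith

theorem SubmeanOn.comp_add_left {v : ℂ → ℝ} {s t : Set ℂ} (h : SubmeanOn v s) (a : ℂ)
    (ht : ∀ z ∈ t, a + z ∈ s) : SubmeanOn (fun z => v (a + z)) t := by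
  intro c R hR hc
  have h1 := h (a + c) R hR fun z hz => by
    have : z - a ∈ closedBall c R := by
      rw [mem_closedBall, dist_eq_norm] at hz ⊢
      rwa [show z - a - c = z - (a + c) by ring]
    simpa using ht _ (hc this)
  have h2 : Real.circleAverage (fun z => v (a + z)) c R = Real.circleAverage v (a + c) R := by
    simp only [Real.circleAverage_def, circleMap, add_assoc]
  rw [h2]
  exact h1

theorem UpperSemicontinuous.comp_add_left {v : ℂ → ℝ} (h : UpperSemicontinuous v) (a : ℂ) :
    UpperSemicontinuous fun z => v (a + z) :=
  h.comp (continuous_const.add continuous_id)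

theorem logPotential_Icc_zero : logPotential (Icc (-(1 / 3)) (1 / 3)) 0 =
    2 / 3 * Real.log (1 / 3) - 2 / 3 := by
  have h1 := integral_log_sub_log_abs 0 (a := 1 / 3) (by norm_num)
  rw [integral_sub] at h1
  · have h2 : logPotential (Icc (-(1 / 3)) (1 / 3)) 0 =
        ∫ t in Icc (0 - 1 / 3 : ℝ) (0 + 1 / 3), Real.log |0 - t| := by
      unfold logPotential
      rw [zero_sub, zero_add]
      refine setIntegral_congr_fun measurableSet_Icc fun t _ => ?_
      simp
    rw [h2]
    simp only [integral_const, smul_eq_mul, measureReal_restrict_apply_univ] at h1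
    rw [Real.volume_real_Icc_of_le (by norm_num)] at h1
    linarith
  · exact integrableOn_const measure_Icc_lt_top.ne
  · have := integrableOn_log_norm_sub (subset_refl (Icc (0 - 1 / 3 : ℝ) (0 + 1 / 3))) 0
    refine this.congr_fun (fun t _ => ?_) measurableSet_Icc
    simp

theorem logPotential_nonpos {B : Set ℝ} (hm : MeasurableSet B) {z : ℂ}
    (h : ∀ t ∈ B, ‖z - t‖ ≤ 1) : logPotential B z ≤ 0 :=
  setIntegral_nonpos hm fun t ht => Real.log_nonpos (norm_nonneg _) (h t ht)

/-- A subharmonic function bounded above by `M` on most of a real interval is not much larger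
than `M` at nearby points. -/
theorem le_add_sqrt_of_measure_lt {v : ℂ → ℝ} (husc : UpperSemicontinuous v)
    (hb : ∀ z, |v z| ≤ 1) (hsub : SubmeanOn v (ball 0 (3 / 4))) {M δ : ℝ} (hM : -1 ≤ M) (hδ : 0 < δ)
    (hδ1 : δ ≤ 1)
    (hbad : volume {t ∈ Icc (-(1 / 3) : ℝ) (1 / 3) | M < v t} < ENNReal.ofReal δ)
    {z : ℂ} (hz : ‖z‖ ≤ 2 / 3) : v z ≤ M + 30 * √‖z‖ + 12 * √δ := by
  set J := Icc (-(1 / 3) : ℝ) (1 / 3) with hJ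
  have hvm : Measurable fun t : ℝ => v t := husc.measurable.comp Complex.measurable_ofReal
  have hA : MeasurableSet {t ∈ J | v t ≤ M} :=
    measurableSet_Icc.inter (measurableSet_le hvm measurable_const)
  have hAJ : {t ∈ J | v t ≤ M} ⊆ J := fun t ht => ht.1
  obtain ⟨G, hGA, hGc, hGlt⟩ := hA.exists_isCompact_sdiff_lt (μ := volume)
    ((measure_mono hAJ).trans_lt measure_Icc_lt_top).ne (tsub_pos_of_lt hbad).ne'
  have hGJ : G ⊆ J := hGA.trans hAJ
  set B := J \ G
  have hBm : MeasurableSet B := measurableSet_Icc.diff hGc.measurableSet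
  have hBJ : B ⊆ J := sdiff_subset
  have hBvol : volume B < ENNReal.ofReal δ := by
    have : B ⊆ {t ∈ J | M < v t} ∪ ({t ∈ J | v t ≤ M} \ G) := by
      intro t ht
      rcases lt_or_ge M (v t) with h | h
      · exact Or.inl ⟨ht.1, h⟩
      · exact Or.inr ⟨⟨ht.1, h⟩, ht.2⟩
    calc volume B ≤ _ := measure_mono this
      _ ≤ volume {t ∈ J | M < v t} + volume ({t ∈ J | v t ≤ M} \ G) := measure_union_le _ _
      _ < volume {t ∈ J | M < v t} + (ENNReal.ofReal δ - volume {t ∈ J | M < v t}) :=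
          ENNReal.add_lt_add_left (hbad.trans_le le_top).ne hGlt
      _ = ENNReal.ofReal δ := add_tsub_cancel_of_le hbad.le
  have hBreal : volume.real B ≤ δ := by
    rw [measureReal_def]
    exact ENNReal.toReal_le_of_le_ofReal hδ.le hBvol.le
  have hsplit : ∀ z, logPotential G z = logPotential J z - logPotential B z := by
    intro z
    have h1 := setIntegral_sdiff (f := fun t : ℝ => Real.log ‖z - t‖) (μ := volume)
      hGc.measurableSet (integrableOn_log_norm_sub subset_rfl z) hGJ
    unfold logPotential
    linarith
  have hL0 := logPotential_Icc_zero
  rw [← hJ] at hL0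
  have hJvol : volume.real J = 2 / 3 := by
    rw [Real.volume_real_Icc_of_le (by norm_num)]; norm_num
  have hJmin : ∀ z, logPotential J 0 ≤ logPotential J z := by
    intro z
    have := le_logPotential (subset_refl J) measurableSet_Icc z (a := 1 / 3) (by norm_num)
    rw [hJvol] at this
    linarith
  have hBneg : ∀ z : ℂ, ‖z‖ ≤ 2 / 3 → logPotential B z ≤ 0 := by
    intro z hz
    refine logPotential_nonpos hBm fun t ht => ?_
    have h1 := abs_le.2 (hBJ ht)
    calc ‖z - t‖ ≤ ‖z‖ + ‖(t : ℂ)‖ := norm_sub_le _ _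
      _ = ‖z‖ + |t| := by rw [Complex.norm_real, Real.norm_eq_abs]
      _ ≤ 1 := by linarith
  have hsphere : ∀ z : ℂ, ‖z‖ = 2 / 3 → logPotential J 0 + 2 / 3 ≤ logPotential J z := by
    intro z hz
    rw [hL0]
    have h1 : ∫ t in J, Real.log (1 / 3) ≤ ∫ t in J, Real.log ‖z - t‖ := by
      refine setIntegral_mono_on (integrableOn_const measure_Icc_lt_top.ne)
        (integrableOn_log_norm_sub subset_rfl z) measurableSet_Icc fun t ht => ?_
      refine Real.log_le_log (by norm_num) ?_
      have h1 := abs_le.2 ht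
      have h2 := norm_sub_norm_le z t
      rw [Complex.norm_real, Real.norm_eq_abs] at h2
      linarith
    simp only [integral_const, smul_eq_mul, measureReal_restrict_apply_univ, hJvol] at h1
    unfold logPotential
    linarith
  have key := le_add_mul_logPotential husc hb hsub (c := 0) (R := 2 / 3)
    (closedBall_subset_ball (by norm_num)) hGc (α := 3) (β := M - 3 * logPotential J 0) ?_ ?_ z
    (by simpa using hz)
  · rw [hsplit] at key
    have h1 := logPotential_sub_le (subset_refl J) z 0
    rw [hJvol, sub_zero] at h1
    have h2 := le_logPotential hBJ hBm z hδ
    have h3 : volume.real B * Real.log δ ≥ δ * Real.log δ := by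
      have := Real.log_nonpos hδ.le hδ1
      nlinarith
    have hs : √δ * √δ = δ := Real.mul_self_sqrt hδ.le
    have hs1 : √δ ≤ 1 := Real.sqrt_le_one.2 hδ1
    have hs0 : 0 < √δ := Real.sqrt_pos.2 hδ
    have h4 : -(2 * √δ) ≤ δ * Real.log δ := by
      have h5 := log_le_two_mul_sqrt (y := δ⁻¹) (by positivity)
      rw [Real.log_inv, Real.sqrt_inv] at h5
      have h6 : δ * (√δ)⁻¹ = √δ := by
        rw [← div_eq_mul_inv, Real.div_sqrt]
      nlinarith
    have h5 : δ ≤ √δ := by nlinarith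
    have := Real.sqrt_nonneg ‖z‖
    nlinarith
  · intro z hz
    have hz : ‖z‖ = 2 / 3 := by simpa using hz
    rw [hsplit]
    have := hBneg z hz.le
    have := hsphere z hz
    have := (abs_le.1 (hb z)).2
    linarith
  · intro t ht
    rw [hsplit]
    have h1 := abs_le.2 (hGJ ht)
    have := hBneg t (by rw [Complex.norm_real, Real.norm_eq_abs]; linarith)
    have := hJmin t
    have := (hGA ht).2
    linarith

/-! ### Cartan type estimates -/

/-- Cartan type estimate for compact sets on which a subharmonic function is very negative. -/
theorem volume_real_le_of_isCompact {v : ℂ → ℝ} (husc : UpperSemicontinuous v) {C : ℝ}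
    (hb : ∀ z, |v z| ≤ C) {x s m lam k : ℝ} (hs : 0 < s) {S : Set ℂ} (hsub : SubmeanOn v S)
    (hS : closedBall (x : ℂ) s ⊆ S) (hm : ∀ z ∈ closedBall (x : ℂ) s, v z ≤ m)
    (hk : 0 < k) (hx : m - k ≤ v x) (hlam : 0 < lam) {E : Set ℝ} (hE : IsCompact E)
    (hEx : E ⊆ Icc (x - s / 4) (x + s / 4)) (hEv : ∀ t ∈ E, v t ≤ m - lam) :
    volume.real E ≤ 8 * s * Real.exp (-(lam / k)) := by
  set δ := volume.real E with hδ
  rcases (measureReal_nonneg (μ := volume) (s := E)).eq_or_lt with h0 | hpos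
  · rw [hδ, ← h0]; positivity
  rw [← hδ] at hpos
  have hδs : δ ≤ s / 2 := by
    have h1 : δ ≤ volume.real (Icc (x - s / 4) (x + s / 4)) :=
      measureReal_mono hEx measure_Icc_lt_top.ne
    rw [Real.volume_real_Icc_of_le (by linarith)] at h1
    linarith
  set L := Real.log (s / δ) + 2 with hL
  have hlogs : 0 ≤ Real.log (s / δ) := Real.log_nonneg (by rw [le_div_iff₀ hpos]; linarith)
  have hLpos : 0 < L := by linarith
  have hinteg : ∀ z : ℂ, IntegrableOn (fun t : ℝ => Real.log ‖z - t‖) E :=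
    fun z => integrableOn_log_norm_sub hEx z
  have hEfin : volume E ≠ ⊤ := hE.measure_lt_top.ne
  have hconst : ∀ a : ℝ, ∫ t in E, a = δ * a := fun a => by simp [hδ]
  have hlogsd : Real.log (s / δ) = Real.log s - Real.log δ := Real.log_div hs.ne' hpos.ne'
  have hγ : 0 < lam / (L * δ) := by positivity
  set γ := lam / (L * δ) with hγdef
  have hγL : γ * δ * L = lam := by rw [hγdef]; field_simp
  have h34 : Real.log (3 / 4 * s) ≤ Real.log s := Real.log_le_log (by positivity) (by linarith)
  have key := le_add_mul_logPotential husc hb hsub hS hE (α := γ)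
    (β := m - γ * δ * Real.log (3 / 4 * s)) ?_ ?_ x (mem_closedBall_self hs.le)
  · have h1 : logPotential E x ≤ δ * Real.log (s / 4) := by
      rw [← hconst]
      unfold logPotential
      refine integral_mono_ae (hinteg x) (integrableOn_const hEfin) ?_
      have hne : ∀ᵐ t : ℝ ∂(volume.restrict E), t ≠ x :=
        ae_restrict_of_ae (by simp [ae_iff])
      filter_upwards [hne, ae_restrict_mem hE.measurableSet] with t ht htE
      have h2 : ‖(x : ℂ) - t‖ = |x - t| := by
        rw [← Complex.ofReal_sub, Complex.norm_real, Real.norm_eq_abs]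
      rw [h2]
      refine Real.log_le_log (abs_pos.2 (sub_ne_zero.2 ht.symm)) (abs_le.2 ?_)
      constructor <;> linarith [(hEx htE).1, (hEx htE).2]
    have h3 : Real.log (3 / 4 * s) - Real.log (s / 4) = Real.log 3 := by
      rw [← Real.log_div (by positivity) (by positivity)]
      congr 1; field_simp
    have h4 : (1 : ℝ) ≤ Real.log 3 := by
      rw [Real.le_log_iff_exp_le (by norm_num)]
      linarith [Real.exp_one_lt_d9]
    have h5 : γ * δ ≤ k := by
      have h6 : γ * logPotential E x ≤ γ * (δ * Real.log (s / 4)) := by gcongr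
      have h7 : γ * δ ≤ γ * δ * Real.log 3 := by
        have : 0 < γ * δ := by positivity
        nlinarith
      have h8 : γ * δ * Real.log 3 = γ * δ * Real.log (3 / 4 * s) - γ * (δ * Real.log (s / 4)) := by
        rw [← h3]; ring
      linarith
    have h9 : lam / k ≤ L := by
      rw [div_le_iff₀ hk, ← hγL]
      nlinarith
    have h10 : Real.exp 2 ≤ 8 := by
      have : Real.exp 2 = Real.exp 1 * Real.exp 1 := by rw [← Real.exp_add]; norm_num
      rw [this]
      nlinarith [Real.exp_one_lt_d9, Real.exp_pos 1]
    calc δ = s * Real.exp (-Real.log (s / δ)) := by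
          rw [Real.exp_neg, Real.exp_log (by positivity)]; field_simp
      _ ≤ s * Real.exp (2 + -(lam / k)) := by
          gcongr; linarith
      _ = Real.exp 2 * (s * Real.exp (-(lam / k))) := by rw [Real.exp_add]; ring
      _ ≤ 8 * (s * Real.exp (-(lam / k))) := by gcongr
      _ = _ := by ring
  · intro z hz
    have h1 : δ * Real.log (3 / 4 * s) ≤ logPotential E z := by
      rw [← hconst]
      unfold logPotential
      refine setIntegral_mono_on (integrableOn_const hEfin) (hinteg z) hE.measurableSet
        fun t ht => Real.log_le_log (by positivity) ?_
      have h1 : ‖z - x‖ = s := by rwa [mem_sphere, dist_eq_norm] at hz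
      have h2 : ‖(t : ℂ) - x‖ ≤ s / 4 := by
        rw [← Complex.ofReal_sub, Complex.norm_real, Real.norm_eq_abs, abs_le]
        constructor <;> linarith [(hEx ht).1, (hEx ht).2]
      have h3 := norm_sub_norm_le (z - x) ((t : ℂ) - x)
      rw [show z - x - ((t : ℂ) - x) = z - t by ring] at h3
      linarith
    have := hm z (sphere_subset_closedBall hz)
    have := mul_le_mul_of_nonneg_left h1 hγ.le
    linarith
  · intro t ht
    have h1 := le_logPotential hEx hE.measurableSet t hpos
    rw [← hδ] at h1
    have h2 := hEv t ht
    have h3 : γ * δ * (Real.log δ - 2) - γ * δ * Real.log (3 / 4 * s) ≥ -lam := by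
      have h4 : γ * δ * (Real.log δ - 2) - γ * δ * Real.log s = -lam := by
        rw [← hγL, hL, hlogsd]; ring
      have h5 : γ * δ * Real.log (3 / 4 * s) ≤ γ * δ * Real.log s := by gcongr
      linarith
    have h6 : γ * (δ * Real.log δ - 2 * δ) ≤ γ * logPotential E t := by gcongr
    have h7 : γ * (δ * Real.log δ - 2 * δ) = γ * δ * (Real.log δ - 2) := by ring
    linarith

/-- Cartan type estimate for sublevel sets of subharmonic functions. -/
theorem volume_le_of_cartan {v : ℂ → ℝ} (husc : UpperSemicontinuous v) {C : ℝ}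
    (hb : ∀ z, |v z| ≤ C) {x s m lam k : ℝ} (hs : 0 < s) {S : Set ℂ} (hsub : SubmeanOn v S)
    (hS : closedBall (x : ℂ) s ⊆ S) (hm : ∀ z ∈ closedBall (x : ℂ) s, v z ≤ m)
    (hk : 0 < k) (hx : m - k ≤ v x) (hlam : 0 < lam) :
    volume {t ∈ Icc (x - s / 4) (x + s / 4) | v t ≤ m - lam} ≤
      ENNReal.ofReal (8 * s * Real.exp (-(lam / k))) := by
  have hvm : Measurable fun t : ℝ => v t := husc.measurable.comp Complex.measurable_ofReal
  have hA : MeasurableSet {t ∈ Icc (x - s / 4) (x + s / 4) | v t ≤ m - lam} :=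
    measurableSet_Icc.inter (measurableSet_le hvm measurable_const)
  rw [hA.measure_eq_iSup_isCompact]
  refine iSup₂_le fun E hE => iSup_le fun hEc => ?_
  rw [← ofReal_measureReal hEc.measure_lt_top.ne]
  exact ENNReal.ofReal_le_ofReal (volume_real_le_of_isCompact husc hb hs hsub hS hm hk hx hlam hEc
    (fun t ht => (hE ht).1) fun t ht => (hE ht).2)

/-- A bounded function with the sub-mean value property on the disc of radius two, with periodic
restriction to the real axis. -/
structure PeriodicTrace (v : ℂ → ℝ) (g : ℝ → ℝ) : Prop where
  usc : UpperSemicontinuous v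
  abs_le_one : ∀ z, |v z| ≤ 1
  submean : SubmeanOn v (ball 0 2)
  measurable : Measurable g
  trace_abs_le_one : ∀ x, |g x| ≤ 1
  periodic : Function.Periodic g 1
  trace_eq : ∀ x : ℝ, |x| < 2 → v x = g x

theorem PeriodicTrace.volume_bad_le {v : ℂ → ℝ} {g : ℝ → ℝ} (h : PeriodicTrace v g) {m e : ℝ}
    (he : 0 < e) (hinteg : ∫ x in Icc (0 : ℝ) 1, |g x - m| ≤ e ^ 2) {a b : ℝ}
    (hb : b ≤ a + 1) :
    volume {t ∈ Icc a b | e < |g t - m|} ≤ ENNReal.ofReal e := by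
  have hper : Function.Periodic (fun x => |g x - m|) 1 := fun x => by simp only [h.periodic x]
  have hmeas : Measurable fun x => |g x - m| := (h.measurable.sub_const m).abs
  have hbd : ∀ x, |(|g x - m|)| ≤ 1 + |m| := fun x => by
    rw [abs_abs]
    exact (abs_sub _ _).trans (by linarith [h.trace_abs_le_one x])
  have hII : IntegrableOn (fun x => |g x - m|) (Icc a (a + 1)) := by
    have : IsFiniteMeasure (volume.restrict (Icc a (a + 1))) := ⟨by simp⟩
    exact integrable_of_abs_le hmeas hbd
  have h1 : ∫ x in Icc a (a + 1), |g x - m| ≤ e ^ 2 := by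
    refine le_of_eq_of_le ?_ hinteg
    rw [integral_Icc_eq_integral_Ioc, integral_Icc_eq_integral_Ioc,
      ← intervalIntegral.integral_of_le (by linarith), ← intervalIntegral.integral_of_le zero_le_one]
    simpa using hper.intervalIntegral_add_eq a 0
  have h2 : {t ∈ Icc a b | e < |g t - m|} ⊆ {t ∈ Icc a (a + 1) | e ≤ |g t - m|} :=
    fun t ht => ⟨⟨ht.1.1, ht.1.2.trans hb⟩, ht.2.le⟩
  have h3 := mul_meas_ge_le_integral_of_nonneg (μ := volume.restrict (Icc a (a + 1)))
    (ae_of_all _ fun x => abs_nonneg (g x - m)) hII e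
  have h4 : (volume.restrict (Icc a (a + 1))).real {t | e ≤ |g t - m|} ≤ e := by
    have : e * (volume.restrict (Icc a (a + 1))).real {t | e ≤ |g t - m|} ≤ e * e := by
      linarith [sq e]
    exact le_of_mul_le_mul_left this he
  have h5 : volume {t ∈ Icc a (a + 1) | e ≤ |g t - m|} =
      (volume.restrict (Icc a (a + 1))) {t | e ≤ |g t - m|} := by
    rw [Measure.restrict_apply (measurableSet_le measurable_const hmeas), inter_comm]
    rfl
  calc volume {t ∈ Icc a b | e < |g t - m|} ≤ _ := measure_mono h2
    _ = _ := h5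
    _ ≤ ENNReal.ofReal e := by
      have : IsFiniteMeasure (volume.restrict (Icc a (a + 1))) := ⟨by simp⟩
      rw [← ofReal_measureReal]
      exact ENNReal.ofReal_le_ofReal h4

theorem PeriodicTrace.le_of_integral_le {v : ℂ → ℝ} {g : ℝ → ℝ} (H : PeriodicTrace v g) {m h : ℝ}
    (hm : -1 ≤ m) (hh : 0 < h) (hh1 : h ≤ 1 / 2)
    (hinteg : ∫ x in Icc (0 : ℝ) 1, |g x - m| ≤ h ^ 8) {x : ℝ} (hx0 : 0 ≤ x) (hx1 : x ≤ 9 / 8)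
    {z : ℂ} (hz : ‖z‖ ≤ 8 * h ^ 4) : v (x + z) ≤ m + 110 * h ^ 2 := by
  have hh2 : h ^ 2 ≤ 1 / 4 := by nlinarith
  have hh20 : 0 < h ^ 2 := by positivity
  have hh4 : h ^ 4 ≤ 1 / 16 := by nlinarith [show h ^ 4 = h ^ 2 * h ^ 2 by ring]
  have hh40 : 0 < h ^ 4 := by positivity
  have hh42 : h ^ 4 = (h ^ 2) ^ 2 := by ring
  have key := le_add_sqrt_of_measure_lt (v := fun z => v (x + z)) (H.usc.comp_add_left x)
    (fun z => H.abs_le_one _) (H.submean.comp_add_left x ?_) (M := m + h ^ 4) (δ := 2 * h ^ 4)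
    (by linarith) (by linarith) (by linarith) ?_ (z := z) (by linarith)
  · have h1 : √‖z‖ ≤ 3 * h ^ 2 := Real.sqrt_le_iff.2 ⟨by positivity, by nlinarith⟩
    have h2 : √(2 * h ^ 4) ≤ 3 / 2 * h ^ 2 := Real.sqrt_le_iff.2 ⟨by positivity, by nlinarith⟩
    have h3 : h ^ 4 ≤ h ^ 2 := by nlinarith
    linarith
  · intro z hz
    rw [mem_ball_zero_iff] at hz ⊢
    calc ‖(x : ℂ) + z‖ ≤ ‖(x : ℂ)‖ + ‖z‖ := norm_add_le _ _
      _ = |x| + ‖z‖ := by rw [Complex.norm_real, Real.norm_eq_abs]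
      _ < 2 := by rw [abs_of_nonneg hx0]; linarith
  · have h1 := H.volume_bad_le (m := m) hh40 (hinteg.trans_eq (by ring)) (a := x - 1 / 3)
      (b := x + 1 / 3) (by linarith)
    have h2 : {t ∈ Icc (-(1 / 3) : ℝ) (1 / 3) | m + h ^ 4 < v (x + t)} ⊆
        (fun t => x + t) ⁻¹' {t ∈ Icc (x - 1 / 3) (x + 1 / 3) | h ^ 4 < |g t - m|} := by
      rintro t ⟨ht, ht'⟩
      refine ⟨⟨by linarith [ht.1], by linarith [ht.2]⟩, ?_⟩
      have h3 := H.trace_eq (x + t) (abs_lt.2 ⟨by linarith [ht.1], by linarith [ht.2]⟩)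
      rw [Complex.ofReal_add] at h3
      rw [h3] at ht'
      exact lt_of_lt_of_le (by linarith) (le_abs_self _)
    calc _ ≤ _ := measure_mono h2
      _ = _ := measure_preimage_add volume x _
      _ ≤ _ := h1
      _ < _ := (ENNReal.ofReal_lt_ofReal_iff (by positivity)).2 (by linarith)

/-- Concentration for a subharmonic function of one variable that is close to a constant in
mean. -/
theorem PeriodicTrace.volume_deviation_le {v : ℂ → ℝ} {g : ℝ → ℝ} (H : PeriodicTrace v g)
    {m h : ℝ} (hm : |m| ≤ 1) (hh : 0 < h) (hinteg : ∫ x in Icc (0 : ℝ) 1, |g x - m| ≤ h ^ 8) :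
    volume {x ∈ Icc (0 : ℝ) 1 | 111 * h < |g x - m|} ≤
      ENNReal.ofReal (64 * Real.exp (-(1 / h))) := by
  rcases lt_or_ge (1 / 2) h with hh1 | hh1
  · have : {x ∈ Icc (0 : ℝ) 1 | 111 * h < |g x - m|} = ∅ := by
      rw [eq_empty_iff_forall_notMem]
      rintro x ⟨-, hx⟩
      have := abs_sub (g x) m
      have := H.trace_abs_le_one x
      linarith
    rw [this, measure_empty]
    exact zero_le
  have hm' := (abs_le.1 hm).1
  have hh2 : h ^ 2 ≤ h / 2 := by nlinarith
  have hh20 : 0 < h ^ 2 := by positivity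
  have hh4 : h ^ 4 ≤ 1 / 16 := by nlinarith [show h ^ 4 = h ^ 2 * h ^ 2 by ring]
  have hh42' : h ^ 4 ≤ h ^ 2 := by nlinarith [show h ^ 4 = h ^ 2 * h ^ 2 by ring]
  have hh40 : 0 < h ^ 4 := by positivity
  have hpiece : ∀ a : ℝ, 0 ≤ a → a ≤ 1 →
      volume {x ∈ Icc a (a + 2 * h ^ 4) | 111 * h < |g x - m|} ≤
        ENNReal.ofReal (64 * h ^ 4 * Real.exp (-(1 / h))) := by
    intro a ha0 ha1
    obtain ⟨y, hy, hyg⟩ : ∃ y ∈ Icc a (a + 2 * h ^ 4), |g y - m| ≤ h ^ 4 := by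
      by_contra! hcon
      have h1 := H.volume_bad_le (m := m) hh40 (hinteg.trans_eq (by ring)) (a := a)
        (b := a + 2 * h ^ 4) (by linarith)
      have h2 : {t ∈ Icc a (a + 2 * h ^ 4) | h ^ 4 < |g t - m|} = Icc a (a + 2 * h ^ 4) :=
        sep_eq_self_iff_mem_true.2 hcon
      rw [h2, Real.volume_Icc, ENNReal.ofReal_le_ofReal_iff hh40.le] at h1
      linarith
    have hy0 : 0 ≤ y := ha0.trans hy.1
    have hy1 : y ≤ 9 / 8 := by linarith [hy.2]
    have hball : closedBall (y : ℂ) (8 * h ^ 4) ⊆ ball 0 2 := by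
      intro z hz
      rw [mem_closedBall, dist_eq_norm] at hz
      rw [mem_ball_zero_iff]
      have h1 := norm_add_le (z - y) (y : ℂ)
      rw [sub_add_cancel, Complex.norm_real, Real.norm_eq_abs, abs_of_nonneg hy0] at h1
      linarith
    have h1 := volume_le_of_cartan H.usc H.abs_le_one (x := y) (s := 8 * h ^ 4)
      (m := m + 110 * h ^ 2) (lam := 111 * h) (k := 111 * h ^ 2) (by positivity) H.submean hball
      ?_ (by positivity) ?_ (by positivity)
    · calc _ ≤ _ := measure_mono ?_
        _ ≤ _ := h1
        _ = _ := by
          congr 1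
          have : 111 * h / (111 * h ^ 2) = 1 / h := by field_simp
          rw [this]; ring
      rintro t ⟨ht, ht'⟩
      refine ⟨⟨by linarith [ht.1, hy.2], by linarith [ht.2, hy.1]⟩, ?_⟩
      have h2 := H.le_of_integral_le hm' hh hh1 hinteg (x := t) (ha0.trans ht.1)
        (by linarith [ht.2]) (z := 0) (by simp; positivity)
      have h3 := H.trace_eq t (abs_lt.2 ⟨by linarith [ht.1], by linarith [ht.2]⟩)
      rw [add_zero, h3] at h2
      rw [h3]
      rcases lt_abs.1 ht' with h4 | h4 <;> linarith
    · intro z hz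
      rw [mem_closedBall, dist_eq_norm] at hz
      have := H.le_of_integral_le hm' hh hh1 hinteg hy0 hy1 hz
      rwa [add_sub_cancel] at this
    · rw [H.trace_eq y (abs_lt.2 ⟨by linarith, by linarith⟩)]
      have := (abs_le.1 hyg).1
      linarith
  set N := ⌈1 / (2 * h ^ 4)⌉₊ with hN
  have hcover : {x ∈ Icc (0 : ℝ) 1 | 111 * h < |g x - m|} ⊆ ⋃ j ∈ Finset.range N,
      {x ∈ Icc ((j : ℝ) * (2 * h ^ 4)) (j * (2 * h ^ 4) + 2 * h ^ 4) | 111 * h < |g x - m|} := by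
    rintro x ⟨hx, hxg⟩
    have hNpos : 0 < N := Nat.ceil_pos.2 (by positivity)
    have hN1 : 1 ≤ N * (2 * h ^ 4) := by
      rw [← div_le_iff₀ (by positivity)]; exact Nat.le_ceil _
    have hN2 : ((N - 1 : ℕ) : ℝ) = N - 1 := by rw [Nat.cast_sub hNpos]; simp
    simp only [mem_iUnion, Finset.mem_range]
    rcases lt_or_ge ⌊x / (2 * h ^ 4)⌋₊ N with hlt | hge
    · refine ⟨_, hlt, ⟨?_, ?_⟩, hxg⟩
      · rw [← le_div_iff₀ (by positivity)]
        exact Nat.floor_le (div_nonneg hx.1 (by positivity))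
      · have := (Nat.lt_floor_add_one (x / (2 * h ^ 4))).le
        rw [div_le_iff₀ (by positivity)] at this
        linarith
    · have h1 : (N : ℝ) ≤ x / (2 * h ^ 4) :=
        (Nat.cast_le.2 hge).trans (Nat.floor_le (div_nonneg hx.1 (by positivity)))
      rw [le_div_iff₀ (by positivity)] at h1
      refine ⟨N - 1, by omega, ⟨?_, ?_⟩, hxg⟩
      · rw [hN2]; linarith
      · rw [hN2]; linarith [hx.2]
  have hNle : (N : ℝ) ≤ 1 / (2 * h ^ 4) + 1 := (Nat.ceil_lt_add_one (by positivity)).le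
  calc _ ≤ _ := measure_mono hcover
    _ ≤ ∑ j ∈ Finset.range N, _ := measure_biUnion_finset_le _ _
    _ ≤ ∑ j ∈ Finset.range N, ENNReal.ofReal (64 * h ^ 4 * Real.exp (-(1 / h))) := by
      refine Finset.sum_le_sum fun j hj => hpiece _ (by positivity) ?_
      have h1 : (j : ℝ) + 1 ≤ N := by exact_mod_cast Finset.mem_range.1 hj
      rw [← le_div_iff₀ (by positivity)]
      linarith
    _ = ENNReal.ofReal (N * (64 * h ^ 4 * Real.exp (-(1 / h)))) := by
      rw [Finset.sum_const, Finset.card_range, nsmul_eq_mul,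
        ENNReal.ofReal_mul (p := (N : ℝ)) (Nat.cast_nonneg N), ENNReal.ofReal_natCast]
    _ ≤ _ := by
      refine ENNReal.ofReal_le_ofReal ?_
      have h1 : N * (64 * h ^ 4) ≤ (64 : ℝ) := by
        calc N * (64 * h ^ 4) ≤ (1 / (2 * h ^ 4) + 1) * (64 * h ^ 4) := by gcongr
          _ = 32 + 64 * h ^ 4 := by field_simp; ring
          _ ≤ 64 := by linarith
      calc N * (64 * h ^ 4 * Real.exp (-(1 / h))) = N * (64 * h ^ 4) * Real.exp (-(1 / h)) := by ring
        _ ≤ _ := by gcongr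

theorem integral_Icc_shift {g : ℝ → ℝ} (hg : Function.Periodic g 1) (t : ℝ) :
    ∫ x in Icc (0 : ℝ) 1, g (x + t) = ∫ x in Icc (0 : ℝ) 1, g x := by
  rw [integral_Icc_eq_integral_Ioc, integral_Icc_eq_integral_Ioc,
    ← intervalIntegral.integral_of_le zero_le_one, ← intervalIntegral.integral_of_le zero_le_one,
    intervalIntegral.integral_comp_add_right (fun x => g x)]
  simpa [add_comm] using hg.intervalIntegral_add_eq t 0

instance : IsProbabilityMeasure (volume.restrict (Icc (0 : ℝ) 1)) := ⟨by simp⟩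

/-- Averages over real translations are almost bounded by the mean value. -/
theorem PeriodicTrace.average_le {v : ℂ → ℝ} {g : ℝ → ℝ} (H : PeriodicTrace v g) {z : ℂ}
    (hz : ‖z‖ ≤ 2 / 3) :
    ∫ x in Icc (0 : ℝ) 1, v (x + z) ≤ (∫ x in Icc (0 : ℝ) 1, g x) + 30 * √‖z‖ := by
  have hcont : Continuous fun p : ℝ × ℂ => (p.1 : ℂ) + p.2 := by fun_prop
  have hmeas : Measurable (Function.uncurry fun (x : ℝ) (z : ℂ) => v (x + z)) :=
    H.usc.measurable.comp hcont.measurable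
  have husc : UpperSemicontinuous fun z : ℂ => ∫ x in Icc (0 : ℝ) 1, v (x + z) :=
    upperSemicontinuous_integral (F := fun (x : ℝ) (z : ℂ) => v (x + z)) (C := 1)
      (fun z => hmeas.comp (measurable_id.prodMk measurable_const)) (fun x z => H.abs_le_one _)
      fun x => H.usc.comp_add_left x
  have hsub : SubmeanOn (fun z : ℂ => ∫ x in Icc (0 : ℝ) 1, v (x + z)) (ball 0 (3 / 4)) := by
    refine SubmeanOn.integral (F := fun (x : ℝ) (z : ℂ) => v (x + z)) hmeas
      (fun x z => H.abs_le_one _) ?_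
    filter_upwards [ae_restrict_mem measurableSet_Icc] with x hx
    refine H.submean.comp_add_left x fun z hz => ?_
    rw [mem_ball_zero_iff] at hz ⊢
    calc ‖(x : ℂ) + z‖ ≤ ‖(x : ℂ)‖ + ‖z‖ := norm_add_le _ _
      _ = |x| + ‖z‖ := by rw [Complex.norm_real, Real.norm_eq_abs]
      _ < 2 := by rw [abs_of_nonneg hx.1]; linarith [hx.2]
  have habs : ∀ f : ℝ → ℝ, (∀ x, |f x| ≤ 1) → |∫ x in Icc (0 : ℝ) 1, f x| ≤ 1 := by
    intro f hf
    have := norm_integral_le_of_norm_le_const (f := f) (μ := volume.restrict (Icc (0 : ℝ) 1))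
      (ae_of_all _ hf)
    simpa using this
  have hreal : ∀ t : ℝ, t ∈ Icc (-(1 / 3) : ℝ) (1 / 3) →
      ∫ x in Icc (0 : ℝ) 1, v (x + t) = ∫ x in Icc (0 : ℝ) 1, g x := by
    intro t ht
    rw [← integral_Icc_shift H.periodic t]
    refine setIntegral_congr_fun measurableSet_Icc fun x hx => ?_
    have := H.trace_eq (x + t)
      (abs_lt.2 ⟨by linarith [ht.1, hx.1], by linarith [ht.2, hx.2]⟩)
    rw [Complex.ofReal_add] at this
    exact this
  have key : ∀ ε : ℝ, 0 < ε → ε ≤ 1 → ∫ x in Icc (0 : ℝ) 1, v (x + z) ≤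
      (∫ x in Icc (0 : ℝ) 1, g x) + 30 * √‖z‖ + 12 * ε := by
    intro ε hε hε1
    have := le_add_sqrt_of_measure_lt (v := fun z : ℂ => ∫ x in Icc (0 : ℝ) 1, v (x + z)) husc
      (fun z => habs _ fun x => H.abs_le_one _) hsub (M := ∫ x in Icc (0 : ℝ) 1, g x)
      (δ := ε ^ 2) (abs_le.1 (habs g H.trace_abs_le_one)).1 (by positivity)
      (by nlinarith) ?_ hz
    · rwa [Real.sqrt_sq hε.le] at this
    · have : {t ∈ Icc (-(1 / 3) : ℝ) (1 / 3) | ∫ x in Icc (0 : ℝ) 1, g x <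
          ∫ x in Icc (0 : ℝ) 1, v (x + t)} = ∅ := by
        rw [eq_empty_iff_forall_notMem]
        rintro t ⟨ht, ht'⟩
        exact ht'.ne (hreal t ht).symm
      rw [this, measure_empty]
      exact ENNReal.ofReal_pos.2 (by positivity)
  refine le_of_forall_pos_le_add fun ε hε => ?_
  have h1 := key (min (ε / 12) 1) (by positivity) (min_le_right _ _)
  have h2 := min_le_left (ε / 12) 1
  linarith

/-! ### Shifts of periodic traces -/

theorem Complex.volume_real_ball (c : ℂ) {r : ℝ} (hr : 0 ≤ r) :
    volume.real (ball c r) = Real.pi * r ^ 2 := by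
  rw [measureReal_def, Complex.volume_ball, ENNReal.toReal_mul, ENNReal.toReal_pow,
    ENNReal.toReal_ofReal hr]
  simp [mul_comm]

instance isFiniteMeasure_restrict_ball (c : ℂ) (r : ℝ) :
    IsFiniteMeasure (volume.restrict (ball c r)) :=
  ⟨by simpa using measure_ball_lt_top (μ := (volume : Measure ℂ)) (x := c) (r := r)⟩

theorem abs_setIntegral_ball_sub_le {v : ℂ → ℝ} (hv : Measurable v) (hb : ∀ z, |v z| ≤ 1)
    {c c' : ℂ} {s h : ℝ} (hs : 0 ≤ s) (hh : dist c c' ≤ h) :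
    |(∫ ζ in ball c s, v ζ) - ∫ ζ in ball c' s, v ζ| ≤ 2 * (Real.pi * (2 * s * h + h ^ 2)) := by
  have hh0 : 0 ≤ h := dist_nonneg.trans hh
  have key : ∀ y : ℂ, dist y c ≤ h →
      |(∫ ζ in ball c (s + h), v ζ) - ∫ ζ in ball y s, v ζ| ≤ Real.pi * (2 * s * h + h ^ 2) := by
    intro y hy
    have hsub : ball y s ⊆ ball c (s + h) := ball_subset_ball' (by linarith)
    have hinteg : IntegrableOn v (ball c (s + h)) := integrable_of_abs_le hv hb
    rw [← setIntegral_sdiff measurableSet_ball hinteg hsub]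
    have h1 := norm_setIntegral_le_of_norm_le_const (f := v) (C := 1) (μ := volume)
      (s := ball c (s + h) \ ball y s)
      ((measure_mono sdiff_subset).trans_lt measure_ball_lt_top) fun z _ => hb z
    rw [Real.norm_eq_abs, one_mul, measureReal_sdiff hsub measurableSet_ball,
      Complex.volume_real_ball _ (by positivity), Complex.volume_real_ball _ hs] at h1
    refine h1.trans_eq ?_
    ring
  have h1 := key c (by simpa using hh0)
  have h2 := key c' (by rwa [dist_comm])
  rw [abs_le] at *
  constructor <;> linarith [h1.1, h1.2, h2.1, h2.2]

/-- Modulus of continuity in mean of the real trace of a bounded subharmonic function. -/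
theorem PeriodicTrace.integral_abs_shift_le {v : ℂ → ℝ} {g : ℝ → ℝ} (H : PeriodicTrace v g)
    {k : ℝ} (hk : 0 ≤ k) : ∫ x in Icc (0 : ℝ) 1, |g (x + k ^ 4) - g x| ≤ 80 * k := by
  have hgi : ∀ t, Integrable (fun x => g (x + t)) (volume.restrict (Icc (0 : ℝ) 1)) := fun t =>
    integrable_of_abs_le (C := 1) (H.measurable.comp (measurable_id.add_const t))
      fun x => H.trace_abs_le_one _
  have hgi0 : Integrable g (volume.restrict (Icc (0 : ℝ) 1)) := by simpa using hgi 0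
  have habs : Integrable (fun x => |g (x + k ^ 4) - g x|) (volume.restrict (Icc (0 : ℝ) 1)) :=
    ((hgi _).sub hgi0).abs
  rcases lt_or_ge (1 / 40) k with hk1 | hk1
  · calc ∫ x in Icc (0 : ℝ) 1, |g (x + k ^ 4) - g x| ≤ ∫ x in Icc (0 : ℝ) 1, (2 : ℝ) := by
          refine integral_mono habs (integrable_const _) fun x => ?_
          have := abs_sub (g (x + k ^ 4)) (g x)
          have := H.trace_abs_le_one x
          have := H.trace_abs_le_one (x + k ^ 4)
          simp only
          linarith
      _ = 2 := by simp
      _ ≤ 80 * k := by linarith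
  rcases hk.eq_or_lt with rfl | hk0
  · simp
  set s := k ^ 2 with hs
  set h := k ^ 4 with hh
  have hs0 : 0 < s := by positivity
  have hh0 : 0 < h := by positivity
  have hs1 : s ≤ 1 / 1600 := by rw [hs]; nlinarith
  have hhs : h = s ^ 2 := by rw [hs, hh]; ring
  have hh1 : h ≤ 1 / 1600 := by rw [hhs]; nlinarith
  have hvm := H.usc.measurable
  set a := Real.pi * s ^ 2 with ha
  have ha0 : 0 < a := by have := Real.pi_pos; positivity
  set D : ℝ → ℝ := fun y => ∫ ζ in ball (y : ℂ) s, v ζ with hD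
  have hvi : ∀ (c : ℂ) r, Integrable v (volume.restrict (ball c r)) := fun c r =>
    integrable_of_abs_le hvm H.abs_le_one
  have hDlow : ∀ y : ℝ, 0 ≤ y → y ≤ 3 / 2 → a * g y ≤ D y := by
    intro y hy0 hy1
    have h1 := H.submean.setIntegral_ball_nonneg hvm H.abs_le_one (c := y) (r := s) fun z hz => by
      rw [mem_ball, dist_eq_norm] at hz
      rw [mem_ball_zero_iff]
      have h1 := norm_add_le (z - y) (y : ℂ)
      rw [sub_add_cancel, Complex.norm_real, Real.norm_eq_abs, abs_of_nonneg hy0] at h1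
      linarith
    rw [integral_sub (hvi _ _) (integrable_const _)] at h1
    simp only [integral_const, smul_eq_mul, measureReal_restrict_apply_univ] at h1
    rw [Complex.volume_real_ball _ hs0.le,
      H.trace_eq y (abs_lt.2 ⟨by linarith, by linarith⟩)] at h1
    linarith
  have hDtr : ∀ y : ℝ, D y = ∫ ζ in ball (0 : ℂ) s, v (y + ζ) := by
    intro y
    simp only [hD]
    rw [← integral_indicator measurableSet_ball, ← integral_indicator measurableSet_ball,
      ← integral_add_left_eq_self (fun ζ => (ball (y : ℂ) s).indicator v ζ) y]
    congr 1
    ext ζ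
    simp [indicator]
  have hmeas2 : ∀ t : ℝ, Measurable fun p : ℝ × ℂ => v ((p.1 : ℂ) + (t + p.2)) := fun t =>
    hvm.comp (by fun_prop)
  have hDmeas : ∀ t : ℝ, Measurable fun x : ℝ => D (x + t) := by
    intro t
    have h1 := ((hmeas2 t).stronglyMeasurable.integral_prod_right'
      (ν := volume.restrict (ball (0 : ℂ) s))).measurable
    convert h1 using 2 with x
    rw [hDtr]
    refine integral_congr_ae (ae_of_all _ fun ζ => ?_)
    simp only
    congr 1
    push_cast
    ring
  have hDb : ∀ y, |D y| ≤ a := by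
    intro y
    have := norm_setIntegral_le_of_norm_le_const (f := v) (C := 1) (μ := volume)
      (s := ball (y : ℂ) s) measure_ball_lt_top fun z _ => H.abs_le_one z
    rwa [Real.norm_eq_abs, one_mul, Complex.volume_real_ball _ hs0.le] at this
  have hDi : ∀ t : ℝ, Integrable (fun x => D (x + t)) (volume.restrict (Icc (0 : ℝ) 1)) :=
    fun t => integrable_of_abs_le (hDmeas t) fun x => hDb _
  have hDint : ∀ t : ℝ, 0 ≤ t → t ≤ 1 / 1600 → ∫ x in Icc (0 : ℝ) 1, D (x + t) ≤
      a * ((∫ x in Icc (0 : ℝ) 1, g x) + 30 * √(s + t)) := by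
    intro t ht0 ht1
    have h1 : ∫ x in Icc (0 : ℝ) 1, D (x + t) =
        ∫ ζ in ball (0 : ℂ) s, ∫ x in Icc (0 : ℝ) 1, v (x + (t + ζ)) := by
      rw [← integral_integral_swap (f := fun (x : ℝ) (ζ : ℂ) => v (x + (t + ζ)))]
      · refine integral_congr_ae (ae_of_all _ fun x => ?_)
        simp only
        rw [hDtr]
        refine integral_congr_ae (ae_of_all _ fun ζ => ?_)
        simp only
        congr 1
        push_cast
        ring
      · exact integrable_of_abs_le (hmeas2 t) fun p => H.abs_le_one _
    rw [h1]
    have h2 : Integrable (fun ζ : ℂ => ∫ x in Icc (0 : ℝ) 1, v (x + (t + ζ)))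
        (volume.restrict (ball (0 : ℂ) s)) :=
      (integrable_of_abs_le (μ := (volume.restrict (Icc (0 : ℝ) 1)).prod
        (volume.restrict (ball (0 : ℂ) s))) (hmeas2 t) fun p => H.abs_le_one _).integral_prod_right
    calc _ ≤ ∫ ζ in ball (0 : ℂ) s, ((∫ x in Icc (0 : ℝ) 1, g x) + 30 * √(s + t)) := by
          refine setIntegral_mono_on h2 (integrable_const _) measurableSet_ball fun ζ hζ => ?_
          rw [mem_ball_zero_iff] at hζ
          have h3 : ‖(t : ℂ) + ζ‖ ≤ s + t := by
            have := norm_add_le (t : ℂ) ζ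
            rw [Complex.norm_real, Real.norm_eq_abs, abs_of_nonneg ht0] at this
            linarith
          refine (H.average_le (z := t + ζ) (by linarith)).trans ?_
          gcongr
      _ = _ := by
          rw [integral_const, measureReal_restrict_apply_univ,
            Complex.volume_real_ball _ hs0.le, smul_eq_mul]
  have hpt : ∀ x ∈ Icc (0 : ℝ) 1, a * |g (x + h) - g x| ≤
      (D (x + h) - a * g (x + h)) + (D (x + 0) - a * g (x + 0)) +
        2 * (Real.pi * (2 * s * h + h ^ 2)) := by
    intro x hx
    have h1 := hDlow x hx.1 (by linarith [hx.2])
    have h2 := hDlow (x + h) (by linarith [hx.1]) (by linarith [hx.2])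
    have h3 : |D (x + h) - D x| ≤ _ := abs_setIntegral_ball_sub_le hvm H.abs_le_one
      (c := ((x + h : ℝ) : ℂ)) (c' := (x : ℂ)) (h := h) hs0.le (by
        rw [dist_eq_norm, ← Complex.ofReal_sub, Complex.norm_real, Real.norm_eq_abs]
        simp [abs_of_pos hh0])
    rw [add_zero, ← abs_of_pos ha0, ← abs_mul, abs_of_pos ha0]
    rw [abs_le] at h3 ⊢
    constructor <;> linarith [h3.1, h3.2]
  have hfin : a * ∫ x in Icc (0 : ℝ) 1, |g (x + h) - g x| ≤
      a * (30 * √(s + h)) + a * (30 * √(s + 0)) + 2 * (Real.pi * (2 * s * h + h ^ 2)) := by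
    rw [← integral_const_mul]
    have hI (t : ℝ) : Integrable (fun x => D (x + t) - a * g (x + t))
        (volume.restrict (Icc (0 : ℝ) 1)) := (hDi t).sub ((hgi t).const_mul a)
    have hI' : Integrable (fun x => (D (x + h) - a * g (x + h)) + (D (x + 0) - a * g (x + 0)))
        (volume.restrict (Icc (0 : ℝ) 1)) := (hI h).add (hI 0)
    have h1 := setIntegral_mono_on (habs.const_mul a) (hI'.add (integrable_const _))
      measurableSet_Icc hpt
    refine h1.trans ?_
    simp only [Pi.add_apply]
    rw [integral_add hI' (integrable_const _), integral_add (hI h) (hI 0),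
      integral_sub (hDi h) ((hgi h).const_mul a), integral_sub (hDi 0) ((hgi 0).const_mul a),
      integral_const_mul, integral_const_mul, integral_Icc_shift H.periodic, integral_Icc_shift H.periodic]
    have := hDint h hh0.le hh1
    have := hDint 0 le_rfl (by norm_num)
    simp only [integral_const, smul_eq_mul, probReal_univ, one_mul]
    linarith
  have h1 : √(s + h) ≤ 11 / 10 * k := by
    refine Real.sqrt_le_iff.2 ⟨by positivity, ?_⟩
    rw [hhs]
    have : (11 / 10 * k) ^ 2 = 121 / 100 * s := by rw [hs]; ring
    nlinarith
  have h2 : √(s + 0) = k := by rw [add_zero, hs, Real.sqrt_sq hk]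
  have h3 : 2 * (Real.pi * (2 * s * h + h ^ 2)) ≤ a * k := by
    have h4 : 2 * (Real.pi * (2 * s * h + h ^ 2)) = a * (4 * s + 2 * h) := by
      rw [ha, hhs]; ring
    have h5 : s ≤ 1 / 40 * k := by rw [hs]; nlinarith
    have h6 : h ≤ s := by rw [hhs]; nlinarith
    rw [h4]
    gcongr
    linarith
  rw [h2] at hfin
  have h4 : a * ∫ x in Icc (0 : ℝ) 1, |g (x + h) - g x| ≤ a * (80 * k) := by
    have : a * (30 * √(s + h)) ≤ a * (30 * (11 / 10 * k)) := by gcongr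
    have : 0 < a * k := by positivity
    nlinarith
  exact le_of_mul_le_mul_left h4 ha0

/-! ### The unit cube -/

theorem restrict_Icc_eq_pi (d : ℕ) :
    (volume : Measure (Fin d → ℝ)).restrict (Icc 0 1) =
      Measure.pi fun _ => (volume : Measure ℝ).restrict (Icc 0 1) := by
  rw [← Measure.restrict_pi_pi, ← volume_pi, ← pi_univ_Icc]
  rfl

instance isProbabilityMeasure_restrict_cube (d : ℕ) :
    IsProbabilityMeasure ((volume : Measure (Fin d → ℝ)).restrict (Icc 0 1)) := by
  rw [restrict_Icc_eq_pi]; infer_instance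

theorem measurable_insertNth {X : Type*} [MeasurableSpace X] {d : ℕ} (i : Fin (d + 1)) :
    Measurable fun z : X × (Fin d → X) => i.insertNth (α := fun _ => X) z.1 z.2 :=
  (MeasurableEquiv.piFinSuccAbove (fun _ : Fin (d + 1) => X) i).symm.measurable

theorem continuous_insertNth {X : Type*} [TopologicalSpace X] {d : ℕ} (i : Fin (d + 1)) :
    Continuous fun z : X × (Fin d → X) => i.insertNth (α := fun _ => X) z.1 z.2 := by
  refine continuous_pi fun j => ?_
  refine i.succAboveCases ?_ (fun j => ?_) j
  · simpa using continuous_fst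
  · simp only [Fin.insertNth_apply_succAbove]
    fun_prop

theorem measurePreserving_insertNth {d : ℕ} (i : Fin (d + 1)) :
    MeasurePreserving (fun z : ℝ × (Fin d → ℝ) => i.insertNth (α := fun _ => ℝ) z.1 z.2)
      ((volume.restrict (Icc (0 : ℝ) 1)).prod (volume.restrict (Icc (0 : Fin d → ℝ) 1)))
      (volume.restrict (Icc (0 : Fin (d + 1) → ℝ) 1)) := by
  rw [restrict_Icc_eq_pi, restrict_Icc_eq_pi]
  exact (measurePreserving_piFinSuccAbove
    (fun _ : Fin (d + 1) => (volume : Measure ℝ).restrict (Icc 0 1)) i).symm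

theorem integral_cube_succ {d : ℕ} (i : Fin (d + 1)) {F : (Fin (d + 1) → ℝ) → ℝ}
    (hF : Measurable F) {C : ℝ} (hC : ∀ θ, |F θ| ≤ C) :
    ∫ θ in Icc (0 : Fin (d + 1) → ℝ) 1, F θ =
      ∫ θ in Icc (0 : Fin d → ℝ) 1, ∫ x in Icc (0 : ℝ) 1,
        F (i.insertNth (α := fun _ => ℝ) x θ) := by
  rw [← (measurePreserving_insertNth i).map_eq, integral_map (measurable_insertNth i).aemeasurable
    hF.aestronglyMeasurable, integral_prod_symm]
  exact integrable_of_abs_le (hF.comp (measurable_insertNth i)) fun z => hC _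

theorem ae_mem_cube (d : ℕ) :
    ∀ᵐ θ ∂(volume.restrict (Icc (0 : Fin d → ℝ) 1)), θ ∈ Icc (0 : Fin d → ℝ) 1 :=
  ae_restrict_mem measurableSet_Icc

theorem abs_lt_two_of_mem_cube {d : ℕ} {θ : Fin d → ℝ} (hθ : θ ∈ Icc (0 : Fin d → ℝ) 1)
    (i : Fin d) : |θ i| < 2 := by
  have h1 : 0 ≤ θ i := hθ.1 i
  have h2 : θ i ≤ 1 := hθ.2 i
  rw [abs_of_nonneg h1]; linarith

/-! ### Periodic traces in several variables -/

/-- A bounded function `U` on `ℂ^d`, separately sub-mean on the polydisc of radius `2`, together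
with the `ℤ^d`-periodic extension `g` of its restriction to the real points. -/
structure MultiTrace (d : ℕ) (U : (Fin d → ℂ) → ℝ) (g : (Fin d → ℝ) → ℝ) : Prop where
  usc : UpperSemicontinuous U
  abs_le_one : ∀ w, |U w| ≤ 1
  submean : ∀ i w, (∀ j, w j ∈ ball (0 : ℂ) 2) →
    SubmeanOn (fun ζ => U (Function.update w i ζ)) (ball 0 2)
  measurable : Measurable g
  trace_abs_le_one : ∀ θ, |g θ| ≤ 1
  periodic : ∀ (θ : Fin d → ℝ) (k : Fin d → ℤ), g (fun i => θ i + k i) = g θ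
  trace_eq : ∀ θ : Fin d → ℝ, (∀ i, |θ i| < 2) → U (fun i => (θ i : ℂ)) = g θ

theorem insertNth_ofReal {d : ℕ} (i : Fin (d + 1)) (x : ℝ) (θ : Fin d → ℝ) :
    (fun j => ((i.insertNth (α := fun _ => ℝ) x θ j : ℝ) : ℂ)) =
      i.insertNth (α := fun _ => ℂ) (x : ℂ) fun j => (θ j : ℂ) := by
  funext j
  refine i.succAboveCases ?_ (fun j => ?_) j <;> simp

theorem insertNth_add_intCast {d : ℕ} (i : Fin (d + 1)) (x : ℝ) (θ : Fin d → ℝ) (a : ℤ)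
    (k : Fin d → ℤ) :
    (i.insertNth (α := fun _ => ℝ) (x + a) (fun j => θ j + k j) : Fin (d + 1) → ℝ) =
      fun j => i.insertNth (α := fun _ => ℝ) x θ j +
        ((i.insertNth (α := fun _ => ℤ) a k j : ℤ) : ℝ) := by
  funext j
  refine i.succAboveCases ?_ (fun j => ?_) j <;> simp

namespace MultiTrace

variable {d : ℕ}

theorem slice {U : (Fin (d + 1) → ℂ) → ℝ} {g : (Fin (d + 1) → ℝ) → ℝ}
    (H : MultiTrace (d + 1) U g) (i : Fin (d + 1)) {θ : Fin d → ℝ} (hθ : ∀ j, |θ j| < 2) :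
    PeriodicTrace (fun ζ => U (i.insertNth (α := fun _ => ℂ) ζ fun j => (θ j : ℂ)))
      (fun x => g (i.insertNth (α := fun _ => ℝ) x θ)) where
  usc := by
    have hc : Continuous fun ζ : ℂ => i.insertNth (α := fun _ => ℂ) ζ fun j => (θ j : ℂ) :=
      (continuous_insertNth i).comp (continuous_id.prodMk continuous_const)
    exact H.usc.comp hc
  abs_le_one _ := H.abs_le_one _
  submean := by
    have h := H.submean i (i.insertNth (α := fun _ => ℂ) 0 fun j => (θ j : ℂ)) (by
      intro j
      refine i.succAboveCases ?_ (fun j => ?_) j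
      · simp
      · simpa using hθ j)
    simpa [Fin.update_insertNth] using h
  measurable := by
    have hc : Measurable fun x : ℝ => i.insertNth (α := fun _ => ℝ) x θ :=
      (measurable_insertNth i).comp (measurable_id.prodMk measurable_const)
    exact H.measurable.comp hc
  trace_abs_le_one _ := H.trace_abs_le_one _
  periodic x := by
    have h := H.periodic (i.insertNth (α := fun _ => ℝ) x θ)
      (i.insertNth (α := fun _ => ℤ) 1 fun _ => 0)
    rw [← insertNth_add_intCast] at h
    simpa using h
  trace_eq x hx := by
    rw [← insertNth_ofReal]
    refine H.trace_eq _ fun j => ?_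
    refine i.succAboveCases ?_ (fun j => ?_) j
    · simpa using hx
    · simpa using hθ j

theorem integrable {U : (Fin d → ℂ) → ℝ} {g : (Fin d → ℝ) → ℝ} (H : MultiTrace d U g) :
    Integrable g (volume.restrict (Icc (0 : Fin d → ℝ) 1)) :=
  integrable_of_abs_le H.measurable H.trace_abs_le_one

theorem abs_integral_le_one {U : (Fin d → ℂ) → ℝ} {g : (Fin d → ℝ) → ℝ} (H : MultiTrace d U g) :
    |∫ θ in Icc (0 : Fin d → ℝ) 1, g θ| ≤ 1 := by
  have := norm_integral_le_of_norm_le_const (μ := volume.restrict (Icc (0 : Fin d → ℝ) 1))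
    (f := g) (C := 1) (Eventually.of_forall fun θ => H.trace_abs_le_one θ)
  simpa using this

theorem integral_sq_shift_le {U : (Fin (d + 1) → ℂ) → ℝ} {g : (Fin (d + 1) → ℝ) → ℝ}
    (H : MultiTrace (d + 1) U g) (i : Fin (d + 1)) {k : ℝ} (hk : 0 ≤ k) :
    ∫ θ in Icc (0 : Fin (d + 1) → ℝ) 1, (g (θ + Pi.single i (k ^ 4)) - g θ) ^ 2 ≤ 160 * k := by
  have hb : ∀ a b, |g a - g b| ≤ 2 := fun a b =>
    (abs_sub _ _).trans (by linarith [H.trace_abs_le_one a, H.trace_abs_le_one b])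
  have hm : Measurable fun θ => (g (θ + Pi.single i (k ^ 4)) - g θ) ^ 2 :=
    ((H.measurable.comp (measurable_id.add_const _)).sub H.measurable).pow_const 2
  rw [integral_cube_succ i hm (C := 4) (fun θ => by
    rw [abs_of_nonneg (sq_nonneg _), ← sq_abs]
    nlinarith [hb (θ + Pi.single i (k ^ 4)) θ, abs_nonneg (g (θ + Pi.single i (k ^ 4)) - g θ)])]
  have hle : ∀ᵐ θ ∂(volume.restrict (Icc (0 : Fin d → ℝ) 1)),
      ∫ x in Icc (0 : ℝ) 1, (g (i.insertNth (α := fun _ => ℝ) x θ + Pi.single i (k ^ 4)) -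
        g (i.insertNth (α := fun _ => ℝ) x θ)) ^ 2 ≤ 160 * k := by
    filter_upwards [ae_mem_cube d] with θ hθ
    have hS := H.slice i (abs_lt_two_of_mem_cube hθ)
    have h1 := hS.integral_abs_shift_le hk
    have heq : ∀ x : ℝ, i.insertNth (α := fun _ => ℝ) x θ + Pi.single i (k ^ 4) =
        i.insertNth (α := fun _ => ℝ) (x + k ^ 4) θ := by
      intro x
      funext j
      refine i.succAboveCases ?_ (fun j => ?_) j <;> simp
    simp only [heq]
    have hm1 : Measurable fun x => g (i.insertNth (α := fun _ => ℝ) (x + k ^ 4) θ) -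
        g (i.insertNth (α := fun _ => ℝ) x θ) :=
      (hS.measurable.comp (measurable_id.add_const _)).sub hS.measurable
    calc _ ≤ ∫ x in Icc (0 : ℝ) 1, 2 * |g (i.insertNth (α := fun _ => ℝ) (x + k ^ 4) θ) -
          g (i.insertNth (α := fun _ => ℝ) x θ)| := by
          refine integral_mono_of_nonneg (Eventually.of_forall fun x => sq_nonneg _)
            ((integrable_of_abs_le hm1 (C := 2) fun x => hb _ _).abs.const_mul 2)
            (Eventually.of_forall fun x => ?_)
          have := hb (i.insertNth (α := fun _ => ℝ) (x + k ^ 4) θ)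
            (i.insertNth (α := fun _ => ℝ) x θ)
          beta_reduce
          rw [← sq_abs]
          nlinarith [abs_nonneg (g (i.insertNth (α := fun _ => ℝ) (x + k ^ 4) θ) -
            g (i.insertNth (α := fun _ => ℝ) x θ))]
      _ ≤ _ := by rw [integral_const_mul]; linarith
  calc _ ≤ ∫ θ in Icc (0 : Fin d → ℝ) 1, 160 * k :=
        integral_mono_of_nonneg
          (Eventually.of_forall fun θ => integral_nonneg fun x => sq_nonneg _)
          (integrable_const _) hle
    _ = _ := by simp

end MultiTrace

/-! ### Fourier analysis of periodic functions on the cube -/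

section Torus

local instance measureSpaceUnitAddCircle : MeasureSpace UnitAddCircle := ⟨AddCircle.haarAddCircle⟩

local instance isAddHaarMeasureUnitAddCircle :
    Measure.IsAddHaarMeasure (volume : Measure UnitAddCircle) :=
  inferInstanceAs (Measure.IsAddHaarMeasure AddCircle.haarAddCircle)

local instance isProbabilityMeasureUnitAddCircle :
    IsProbabilityMeasure (volume : Measure UnitAddCircle) :=
  inferInstanceAs (IsProbabilityMeasure AddCircle.haarAddCircle)

open UnitAddTorus

variable {d : ℕ}

/-- The function on the torus induced by a function on `ℝ^d`, through representatives
in `(0, 1]^d`. -/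
def torusLift (f : (Fin d → ℝ) → ℝ) (t : UnitAddTorus (Fin d)) : ℝ :=
  f fun i => (AddCircle.equivIoc 1 0 (t i)).1

theorem torusLift_coe {f : (Fin d → ℝ) → ℝ}
    (hper : ∀ (θ : Fin d → ℝ) (k : Fin d → ℤ), f (fun i => θ i + k i) = f θ) (θ : Fin d → ℝ) :
    torusLift f (fun i => (θ i : UnitAddCircle)) = f θ := by
  have h : ∀ i, ∃ k : ℤ, (AddCircle.equivIoc (1 : ℝ) 0 (θ i : UnitAddCircle)).1 = θ i + k := by
    intro i
    have h1 : (((AddCircle.equivIoc (1 : ℝ) 0 (θ i : UnitAddCircle)).1 - θ i : ℝ) :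
        UnitAddCircle) = 0 := by
      rw [AddCircle.coe_sub, AddCircle.coe_equivIoc, sub_self]
    obtain ⟨k, hk⟩ := (AddCircle.coe_eq_zero_iff 1).1 h1
    exact ⟨k, by rw [zsmul_eq_mul, mul_one] at hk; linarith⟩
  choose k hk using h
  simp only [torusLift, hk]
  exact hper θ k

theorem measurable_torusLift {f : (Fin d → ℝ) → ℝ} (hf : Measurable f) :
    Measurable (torusLift f) :=
  hf.comp (measurable_pi_lambda _ fun i => measurable_subtype_coe.comp
    ((AddCircle.measurableEquivIoc 1 0).measurable.comp (measurable_pi_apply i)))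

theorem integral_torus {E : Type*} [NormedAddCommGroup E] [NormedSpace ℝ E]
    (F : UnitAddTorus (Fin d) → E) :
    ∫ t, F t = ∫ θ in Icc (0 : Fin d → ℝ) 1, F (fun i => (θ i : UnitAddCircle)) := by
  refine (UnitAddTorus.integral_preimage F 0).trans (setIntegral_congr_set ?_)
  have h := Measure.univ_pi_Ioc_ae_eq_Icc (μ := fun _ : Fin d => (volume : Measure ℝ))
    (f := 0) (g := 1)
  rw [← volume_pi] at h
  refine EventuallyEq.trans (Eventually.of_forall fun x => ?_) h
  refine propext ?_
  change (∀ i, x i ∈ Ioc ((0 : Fin d → ℝ) i) ((0 : Fin d → ℝ) i + 1)) ↔ x ∈ univ.pi _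
  simp

theorem integral_cube_shift {f : (Fin d → ℝ) → ℝ}
    (hper : ∀ (θ : Fin d → ℝ) (k : Fin d → ℤ), f (fun i => θ i + k i) = f θ) (a : Fin d → ℝ) :
    ∫ θ in Icc (0 : Fin d → ℝ) 1, f (θ + a) = ∫ θ in Icc (0 : Fin d → ℝ) 1, f θ := by
  have h := integral_add_right_eq_self (μ := (volume : Measure (UnitAddTorus (Fin d))))
    (torusLift f) fun i => (a i : UnitAddCircle)
  rw [integral_torus, integral_torus] at h
  have ha : ∀ θ : Fin d → ℝ, torusLift f ((fun i => (θ i : UnitAddCircle)) +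
      fun i => (a i : UnitAddCircle)) = f (θ + a) := fun θ => by
    rw [← torusLift_coe hper (θ + a)]; rfl
  simpa only [ha, torusLift_coe hper] using h

theorem hasSum_sq_norm_mFourierCoeff {F : UnitAddTorus (Fin d) → ℂ} (hF : Measurable F) {C : ℝ}
    (hC : ∀ t, ‖F t‖ ≤ C) :
    HasSum (fun k => ‖mFourierCoeff F k‖ ^ 2) (∫ t, ‖F t‖ ^ 2) := by
  have hL : MemLp F 2 (volume : Measure (UnitAddTorus (Fin d))) :=
    MemLp.of_bound hF.aestronglyMeasurable C (Eventually.of_forall hC)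
  have h := hasSum_sq_mFourierCoeff (hL.toLp F)
  have h1 : ∫ t, ‖hL.toLp F t‖ ^ 2 = ∫ t, ‖F t‖ ^ 2 :=
    integral_congr_ae (by filter_upwards [hL.coeFn_toLp] with t ht; rw [ht])
  have h2 : ∀ k, mFourierCoeff (hL.toLp F) k = mFourierCoeff F k := fun k =>
    integral_congr_ae (by filter_upwards [hL.coeFn_toLp] with t ht; rw [ht])
  simpa only [h1, h2] using h

theorem mFourier_add_apply (k : Fin d → ℤ) (s t : UnitAddTorus (Fin d)) :
    mFourier k (s + t) = mFourier k s * mFourier k t := by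
  simp only [mFourier, ContinuousMap.coe_mk, Pi.add_apply, ← Finset.prod_mul_distrib]
  refine Finset.prod_congr rfl fun i _ => ?_
  simp [fourier_apply, smul_add, AddCircle.toCircle_add]

theorem mFourierCoeff_comp_add_right (F : UnitAddTorus (Fin d) → ℂ) (a : UnitAddTorus (Fin d))
    (k : Fin d → ℤ) :
    mFourierCoeff (fun t => F (t + a)) k = mFourier k a * mFourierCoeff F k := by
  have h : mFourier k a * mFourier (-k) a = 1 := by
    rw [← mFourier_add, add_neg_cancel, mFourier_zero]; rfl
  unfold mFourierCoeff
  rw [← integral_add_right_eq_self (fun t => mFourier (-k) t • F t) a, ← integral_const_mul]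
  refine integral_congr_ae (Eventually.of_forall fun t => ?_)
  simp only [smul_eq_mul, mFourier_add_apply]
  linear_combination (-(mFourier (-k) t * F (t + a))) * h

theorem norm_mFourier_coe_sub_one_sq (k : Fin d → ℤ) (a : Fin d → ℝ) :
    ‖mFourier k (fun i => (a i : UnitAddCircle)) - 1‖ ^ 2 =
      4 * Real.sin (Real.pi * ∑ i, (k i : ℝ) * a i) ^ 2 := by
  have h : mFourier k (fun i => (a i : UnitAddCircle)) =
      Complex.exp (Complex.I * ((2 * Real.pi * ∑ i, (k i : ℝ) * a i : ℝ) : ℂ)) := by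
    simp only [mFourier, ContinuousMap.coe_mk, fourier_coe_apply, ← Complex.exp_sum]
    congr 1
    push_cast
    rw [Finset.mul_sum, Finset.mul_sum]
    refine Finset.sum_congr rfl fun i _ => ?_
    simp only [div_one]
    ring
  rw [h, Complex.norm_exp_I_mul_ofReal_sub_one, Real.norm_eq_abs, sq_abs, mul_pow]
  norm_num
  congr 2
  ring

/-- The Fourier weights of a bounded periodic function: their total mass is the variance, and
their transforms are the `L²` norms of the increments. -/
theorem exists_fourier_weights {g : (Fin d → ℝ) → ℝ} (hg : Measurable g) (hb : ∀ θ, |g θ| ≤ 1)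
    (hper : ∀ (θ : Fin d → ℝ) (k : Fin d → ℤ), g (fun i => θ i + k i) = g θ) :
    ∃ c : (Fin d → ℤ) → ℝ, (∀ k, 0 ≤ c k) ∧ c 0 = 0 ∧
      HasSum c (∫ θ in Icc (0 : Fin d → ℝ) 1, (g θ - ∫ η in Icc (0 : Fin d → ℝ) 1, g η) ^ 2) ∧
      ∀ a : Fin d → ℝ,
        HasSum (fun k => c k * (4 * Real.sin (Real.pi * ∑ i, (k i : ℝ) * a i) ^ 2))
          (∫ θ in Icc (0 : Fin d → ℝ) 1, (g (θ + a) - g θ) ^ 2) := by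
  set m := ∫ η in Icc (0 : Fin d → ℝ) 1, g η with hm
  set F : UnitAddTorus (Fin d) → ℂ := fun t => ((torusLift g t - m : ℝ) : ℂ) with hF
  have hFm : Measurable F :=
    Complex.measurable_ofReal.comp ((measurable_torusLift hg).sub_const m)
  have hFb : ∀ t, ‖F t‖ ≤ 1 + |m| := fun t => by
    rw [hF]
    simp only [Complex.norm_real, Real.norm_eq_abs]
    exact (abs_sub _ _).trans (by gcongr; exact hb _)
  have hFc : ∀ θ : Fin d → ℝ, F (fun i => (θ i : UnitAddCircle)) = ((g θ - m : ℝ) : ℂ) :=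
    fun θ => by rw [hF]; simp only [torusLift_coe hper]
  refine ⟨fun k => ‖mFourierCoeff F k‖ ^ 2, fun k => by positivity, ?_, ?_, fun a => ?_⟩
  · have h0 : mFourierCoeff F 0 = 0 := by
      unfold mFourierCoeff
      rw [integral_torus]
      simp only [neg_zero, mFourier_zero, ContinuousMap.one_apply, one_smul, hFc]
      rw [integral_complex_ofReal, integral_sub (integrable_of_abs_le hg hb) (integrable_const _)]
      simp [hm]
    simp [h0]
  · have h := hasSum_sq_norm_mFourierCoeff hFm hFb
    rw [integral_torus] at h
    simpa only [hFc, Complex.norm_real, Real.norm_eq_abs, sq_abs] using h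
  · set a' : UnitAddTorus (Fin d) := fun i => (a i : UnitAddCircle) with ha'
    have hFam : Measurable fun t => F (t + a') := hFm.comp (measurable_add_const a')
    have h := hasSum_sq_norm_mFourierCoeff (F := fun t => F (t + a') - F t) (hFam.sub hFm)
      (C := (1 + |m|) + (1 + |m|)) fun t => (norm_sub_le _ _).trans (add_le_add (hFb _) (hFb _))
    have hinteg : ∀ {G : UnitAddTorus (Fin d) → ℂ} (k : Fin d → ℤ), Measurable G →
        (∀ t, ‖G t‖ ≤ 1 + |m|) → Integrable (fun t => mFourier (-k) t • G t) := by
      intro G k hG hGb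
      refine Integrable.of_bound (C := 1 + |m|)
        (((mFourier (-k)).continuous.measurable.smul hG).aestronglyMeasurable)
        (Eventually.of_forall fun t => ?_)
      rw [norm_smul]
      have := ((mFourier (-k)).norm_coe_le_norm t).trans_eq mFourier_norm
      nlinarith [hGb t, norm_nonneg (G t)]
    have hcoef : ∀ k, ‖mFourierCoeff (fun t => F (t + a') - F t) k‖ ^ 2 =
        ‖mFourierCoeff F k‖ ^ 2 * (4 * Real.sin (Real.pi * ∑ i, (k i : ℝ) * a i) ^ 2) := by
      intro k
      have h1 : mFourierCoeff (fun t => F (t + a') - F t) k =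
          mFourierCoeff (fun t => F (t + a')) k - mFourierCoeff F k := by
        unfold mFourierCoeff
        rw [← integral_sub (hinteg k hFam fun t => hFb _) (hinteg k hFm hFb)]
        simp only [smul_sub]
      rw [h1, mFourierCoeff_comp_add_right, ← norm_mFourier_coe_sub_one_sq, ← ha',
        ← sub_one_mul, norm_mul]
      ring
    rw [integral_torus] at h
    have hFa : ∀ θ : Fin d → ℝ, F ((fun i => (θ i : UnitAddCircle)) + a') =
        ((g (θ + a) - m : ℝ) : ℂ) := fun θ => by
      rw [← hFc]; rfl
    simp only [hcoef, hFa, hFc, ← Complex.ofReal_sub, Complex.norm_real, Real.norm_eq_abs,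
      sq_abs, sub_sub_sub_cancel_right] at h
    exact h

end Torus

/-! ### The variance estimate -/

theorem two_mul_distToInt_le (x : ℝ) : 2 * distToInt x ≤ |Real.sin (Real.pi * x)| := by
  have h1 : distToInt x ≤ |x - round x| :=
    ciInf_le (f := fun k : ℤ => |x - k|) ⟨0, by rintro _ ⟨k, rfl⟩; exact abs_nonneg _⟩ (round x)
  have h2 : |x - round x| ≤ 1 / 2 := abs_sub_round x
  have h3 : |Real.sin (Real.pi * x)| = |Real.sin (Real.pi * |x - round x|)| := by
    have h4 : Real.pi * x = Real.pi * (x - round x) + (round x : ℤ) * Real.pi := by ring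
    have h5 : |Real.sin (Real.pi * x)| = |Real.sin (Real.pi * (x - round x))| := by
      conv_lhs => rw [h4, Real.sin_add_int_mul_pi]
      rw [abs_mul, abs_zpow, abs_neg, abs_one, one_zpow, one_mul]
    rw [h5]
    rcases abs_cases (x - round x) with h | h <;> rw [h.1]
    rw [mul_neg, Real.sin_neg, abs_neg]
  have h4 := Real.mul_le_sin (x := Real.pi * |x - round x|) (by positivity)
    (by nlinarith [Real.pi_pos])
  have h5 : 2 / Real.pi * (Real.pi * |x - round x|) = 2 * |x - round x| := by
    field_simp
  rw [h3]
  linarith [le_abs_self (Real.sin (Real.pi * |x - round x|))]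

theorem one_le_integral_sin_sq {x : ℝ} (hx : 1 ≤ |x|) :
    1 ≤ ∫ s in (0 : ℝ)..1, 4 * Real.sin (Real.pi * (x * s)) ^ 2 := by
  have hx0 : x ≠ 0 := by rintro rfl; norm_num at hx
  have h1 : ∀ s : ℝ, 4 * Real.sin (Real.pi * (x * s)) ^ 2 =
      2 - 2 * Real.cos ((2 * Real.pi * x) * s) := by
    intro s
    rw [Real.sin_sq_eq_half_sub]
    ring_nf
  simp only [h1]
  rw [intervalIntegral.integral_sub (by simp)
    (by apply Continuous.intervalIntegrable; fun_prop),
    intervalIntegral.integral_const_mul,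
    intervalIntegral.integral_comp_mul_left (fun s => Real.cos s) (by positivity), integral_cos]
  simp only [intervalIntegral.integral_const, sub_zero, mul_one, mul_zero, Real.sin_zero,
    smul_eq_mul, one_mul]
  have h2 : |(2 * Real.pi * x)⁻¹ * Real.sin (2 * Real.pi * x)| ≤ 1 / 2 := by
    rw [abs_mul, abs_inv]
    have h3 : 2 ≤ |2 * Real.pi * x| := by
      rw [abs_mul, abs_of_pos (by positivity)]
      nlinarith [Real.pi_gt_three]
    calc _ ≤ (2 : ℝ)⁻¹ * 1 := by
          gcongr
          exact Real.abs_sin_le_one _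
      _ = _ := by norm_num
  linarith [(abs_le.1 h2).2]

namespace MultiTrace

variable {d : ℕ}

/-- The variance is controlled by the increment along a Diophantine vector. -/
theorem variance_le {U : (Fin (d + 1) → ℂ) → ℝ} {g : (Fin (d + 1) → ℝ) → ℝ}
    (H : MultiTrace (d + 1) U g) {p q : ℝ} (hp : 0 < p) (hq : 0 < q) {ω : Fin (d + 1) → ℝ}
    (hω : Diophantine (d + 1) p q ω) {K : ℝ} (hK : 1 ≤ K) :
    ∫ θ in Icc (0 : Fin (d + 1) → ℝ) 1,
        (g θ - ∫ η in Icc (0 : Fin (d + 1) → ℝ) 1, g η) ^ 2 ≤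
      (((d + 1) * K) ^ q / (4 * p)) ^ 2 *
        (∫ θ in Icc (0 : Fin (d + 1) → ℝ) 1, (g (θ + ω) - g θ) ^ 2) +
      (d + 1) * (160 * K ^ (-(1 / 4) : ℝ)) := by
  have hK0 : 0 < K := by linarith
  obtain ⟨c, hc, hc0, hsum, hshift⟩ :=
    exists_fourier_weights H.measurable H.trace_abs_le_one H.periodic
  have htail : ∀ (i : Fin (d + 1)) (S : Finset (Fin (d + 1) → ℤ)),
      (∀ k ∈ S, K ≤ |(k i : ℝ)|) → ∑ k ∈ S, c k ≤ 160 * K ^ (-(1 / 4) : ℝ) := by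
    intro i S hS
    have hpt : ∀ s ∈ Icc (0 : ℝ) 1,
        ∑ k ∈ S, c k * (4 * Real.sin (Real.pi * ((k i : ℝ) / K * s)) ^ 2) ≤
          160 * K ^ (-(1 / 4) : ℝ) := by
      intro s hs
      have h4 : ((s / K) ^ (1 / 4 : ℝ)) ^ 4 = s / K := by
        rw [← Real.rpow_natCast, ← Real.rpow_mul (div_nonneg hs.1 hK0.le)]
        norm_num
      have h1 := H.integral_sq_shift_le i (k := (s / K) ^ (1 / 4 : ℝ))
        (Real.rpow_nonneg (div_nonneg hs.1 hK0.le) _)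
      rw [h4] at h1
      have h2 := sum_le_hasSum S (fun k _ => mul_nonneg (hc k) (by positivity))
        (hshift (Pi.single i (s / K)))
      have h3 : ∀ k : Fin (d + 1) → ℤ,
          ∑ j, (k j : ℝ) * (Pi.single i (s / K) : Fin (d + 1) → ℝ) j = (k i : ℝ) / K * s := by
        intro k
        rw [Finset.sum_eq_single i (fun j _ hj => by simp [hj]) (by simp), Pi.single_eq_same]
        ring
      simp only [h3] at h2
      refine h2.trans (h1.trans ?_)
      rw [Real.rpow_neg hK0.le, ← Real.inv_rpow hK0.le]
      have h5 : s / K ≤ K⁻¹ := by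
        rw [div_eq_mul_inv]
        exact mul_le_of_le_one_left (by positivity) hs.2
      have h6 : 0 ≤ s / K := div_nonneg hs.1 hK0.le
      gcongr
    have hii : ∀ k : Fin (d + 1) → ℤ, IntervalIntegrable
        (fun s : ℝ => c k * (4 * Real.sin (Real.pi * ((k i : ℝ) / K * s)) ^ 2)) volume 0 1 := by
      intro k
      apply Continuous.intervalIntegrable
      fun_prop
    calc ∑ k ∈ S, c k
        ≤ ∑ k ∈ S, ∫ s in (0 : ℝ)..1,
            c k * (4 * Real.sin (Real.pi * ((k i : ℝ) / K * s)) ^ 2) := by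
          refine Finset.sum_le_sum fun k hk => ?_
          rw [intervalIntegral.integral_const_mul]
          refine le_mul_of_one_le_right (hc k) (one_le_integral_sin_sq ?_)
          rw [abs_div, abs_of_pos hK0, le_div_iff₀ hK0, one_mul]
          exact hS k hk
      _ = ∫ s in (0 : ℝ)..1,
            ∑ k ∈ S, c k * (4 * Real.sin (Real.pi * ((k i : ℝ) / K * s)) ^ 2) :=
          (intervalIntegral.integral_finsetSum fun k _ => hii k).symm
      _ ≤ ∫ s in (0 : ℝ)..1, 160 * K ^ (-(1 / 4) : ℝ) := by
          refine intervalIntegral.integral_mono_on zero_le_one ?_ (by simp) hpt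
          apply Continuous.intervalIntegrable
          fun_prop
      _ = _ := by simp
  refine hasSum_le_of_sum_le hsum fun S => ?_
  classical
  set A := (((d + 1) * K) ^ q / (4 * p)) ^ 2 with hA
  have hlow : ∑ k ∈ S with ∀ i, |(k i : ℝ)| < K, c k ≤
      A * ∫ θ in Icc (0 : Fin (d + 1) → ℝ) 1, (g (θ + ω) - g θ) ^ 2 := by
    refine le_trans ?_ (mul_le_mul_of_nonneg_left (sum_le_hasSum
      (S.filter fun k => ∀ i, |(k i : ℝ)| < K)
      (fun k _ => mul_nonneg (hc k) (by positivity)) (hshift ω)) (sq_nonneg _))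
    rw [Finset.mul_sum]
    refine Finset.sum_le_sum fun k hk => ?_
    by_cases hk0 : k = 0
    · simp [hk0, hc0]
    have hkK := (Finset.mem_filter.1 hk).2
    have h1 := hω k hk0
    have h2 : 1 ≤ ∑ i, |k i| := by
      obtain ⟨i, hi⟩ := Function.ne_iff.1 hk0
      exact (Int.one_le_abs hi).trans
        (Finset.single_le_sum (f := fun i => |k i|) (fun j _ => abs_nonneg _) (Finset.mem_univ i))
    have h3 : ((∑ i, |k i| : ℤ) : ℝ) ≤ (d + 1) * K := by
      push_cast
      refine (Finset.sum_le_sum fun i _ => (hkK i).le).trans_eq ?_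
      simp
    have h4 : (0 : ℝ) < ((∑ i, |k i| : ℤ) : ℝ) := by exact_mod_cast (by omega)
    have h5 : p / ((d + 1) * K) ^ q ≤ distToInt (∑ i, (k i : ℝ) * ω i) := by
      refine le_trans ?_ h1
      gcongr
    have h6 := two_mul_distToInt_le (∑ i, (k i : ℝ) * ω i)
    have hX : (0 : ℝ) < ((d + 1) * K) ^ q := by positivity
    have h7 : 2 * (p / ((d + 1) * K) ^ q) ≤ |Real.sin (Real.pi * ∑ i, (k i : ℝ) * ω i)| := by
      linarith
    have h8 : 1 ≤ A * (4 * Real.sin (Real.pi * ∑ i, (k i : ℝ) * ω i) ^ 2) := by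
      calc (1 : ℝ) = A * (4 * (2 * (p / ((d + 1) * K) ^ q)) ^ 2) := by
            rw [hA]; field_simp; norm_num
        _ ≤ A * (4 * |Real.sin (Real.pi * ∑ i, (k i : ℝ) * ω i)| ^ 2) := by gcongr
        _ = _ := by rw [sq_abs]
    calc c k ≤ c k * (A * (4 * Real.sin (Real.pi * ∑ i, (k i : ℝ) * ω i) ^ 2)) :=
          le_mul_of_one_le_right (hc k) h8
      _ = _ := by ring
  have hhigh : ∑ k ∈ S with ¬ ∀ i, |(k i : ℝ)| < K, c k ≤
      (d + 1) * (160 * K ^ (-(1 / 4) : ℝ)) := by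
    calc ∑ k ∈ S with ¬ ∀ i, |(k i : ℝ)| < K, c k
        ≤ ∑ k ∈ S with ¬ ∀ i, |(k i : ℝ)| < K, ∑ i, if K ≤ |(k i : ℝ)| then c k else 0 := by
          refine Finset.sum_le_sum fun k hk => ?_
          simp only [Finset.mem_filter, not_forall, not_lt] at hk
          obtain ⟨-, i, hi⟩ := hk
          refine le_trans ?_ (Finset.single_le_sum
            (f := fun i => if K ≤ |(k i : ℝ)| then c k else 0) (fun j _ => ?_) (Finset.mem_univ i))
          · simp [hi]
          · split_ifs
            exacts [hc k, le_rfl]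
      _ = ∑ i, ∑ k ∈ (S.filter fun k => ¬ ∀ i, |(k i : ℝ)| < K).filter
            fun k => K ≤ |(k i : ℝ)|, c k := by
          rw [Finset.sum_comm]
          simp only [Finset.sum_filter]
      _ ≤ ∑ i : Fin (d + 1), 160 * K ^ (-(1 / 4) : ℝ) :=
          Finset.sum_le_sum fun i _ => htail i _ fun k hk => (Finset.mem_filter.1 hk).2
      _ = _ := by simp
  rw [← Finset.sum_filter_add_sum_filter_not S fun k => ∀ i, |(k i : ℝ)| < K]
  exact add_le_add hlow hhigh

end MultiTrace

/-! ### Marginals -/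

theorem abs_posPart_sub_le (a b m : ℝ) :
    |1 / 2 * max (a - m) 0 - 1 / 2 * max (b - m) 0| ≤ |a - b| := by
  rw [← mul_sub, abs_mul, abs_of_pos (by norm_num : (0 : ℝ) < 1 / 2)]
  have h := abs_max_sub_max_le_abs (a - m) (b - m) 0
  rw [sub_sub_sub_cancel_right] at h
  linarith [abs_nonneg (a - b)]

theorem abs_half_posPart_le_one {a m : ℝ} (ha : |a| ≤ 1) (hm : |m| ≤ 1) :
    |1 / 2 * max (a - m) 0| ≤ 1 := by
  rw [abs_of_nonneg (by positivity)]
  have : max (a - m) 0 ≤ 2 :=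
    max_le (by linarith [(abs_le.1 ha).2, (abs_le.1 hm).1]) (by norm_num)
  linarith

theorem SubmeanOn.posPart {v : ℂ → ℝ} {s : Set ℂ} (h : SubmeanOn v s) (hv : Measurable v)
    (hb : ∀ z, |v z| ≤ 1) {m : ℝ} (hm : |m| ≤ 1) :
    SubmeanOn (fun z => 1 / 2 * max (v z - m) 0) s := by
  intro c R hR hcs
  have hpm : Measurable fun z => 1 / 2 * max (v z - m) 0 :=
    ((hv.sub_const m).max measurable_const).const_mul _
  have hpi := circleIntegrable_of_bounded hpm (fun z => abs_half_posPart_le_one (hb z) hm) c R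
  have hvi := circleIntegrable_of_bounded hv hb c R
  have h1 := h c R hR hcs
  have h0 : (0 : ℝ) ≤ Real.circleAverage (fun z => 1 / 2 * max (v z - m) 0) c R := by
    have := Real.circleAverage_mono (f₁ := fun _ => (0 : ℝ)) (c := c) (R := R)
      (circleIntegrable_const _ _ _) hpi (fun z _ => by positivity)
    rwa [Real.circleAverage_const] at this
  have h2 : Real.circleAverage v c R ≤
      Real.circleAverage (fun z => 1 / 2 * max (v z - m) 0) c R +
        Real.circleAverage (fun z => 1 / 2 * max (v z - m) 0) c R + m := by
    have h3 := Real.circleAverage_mono hvi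
      ((hpi.add hpi).add (circleIntegrable_const m c R)) (fun z _ => by
        simp only [Pi.add_apply]
        linarith [le_max_left (v z - m) 0])
    rwa [Real.circleAverage_add (hpi.add hpi) (circleIntegrable_const m c R),
      Real.circleAverage_add hpi hpi, Real.circleAverage_const] at h3
  rcases max_cases (v c - m) 0 with hx | hx <;> simp only [hx.1] <;> linarith

namespace MultiTrace

variable {d : ℕ}

theorem posPart {U : (Fin d → ℂ) → ℝ} {g : (Fin d → ℝ) → ℝ} (H : MultiTrace d U g) {m : ℝ}
    (hm : |m| ≤ 1) :
    MultiTrace d (fun w => 1 / 2 * max (U w - m) 0) (fun θ => 1 / 2 * max (g θ - m) 0) where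
  usc := by
    have hc : Continuous fun t : ℝ => 1 / 2 * max (t - m) 0 := by fun_prop
    have hmono : Monotone fun t : ℝ => 1 / 2 * max (t - m) 0 := fun a b hab => by
      dsimp only
      gcongr
    exact hc.comp_upperSemicontinuous H.usc hmono
  abs_le_one w := abs_half_posPart_le_one (H.abs_le_one w) hm
  submean i w hw := by
    have hc : Continuous fun ζ : ℂ => Function.update w i ζ :=
      continuous_const.update i continuous_id
    exact (H.submean i w hw).posPart (H.usc.comp hc).measurable (fun z => H.abs_le_one _) hm
  measurable := ((H.measurable.sub_const m).max measurable_const).const_mul _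
  trace_abs_le_one θ := abs_half_posPart_le_one (H.trace_abs_le_one θ) hm
  periodic θ k := by rw [H.periodic]
  trace_eq θ hθ := by rw [H.trace_eq θ hθ]

/-- Integrating out one real variable. -/
theorem marginal {U : (Fin (d + 1) → ℂ) → ℝ} {g : (Fin (d + 1) → ℝ) → ℝ}
    (H : MultiTrace (d + 1) U g) :
    MultiTrace d
      (fun w => ∫ x in Icc (0 : ℝ) 1, U (Fin.insertNth (α := fun _ => ℂ) 0 (x : ℂ) w))
      (fun θ => ∫ x in Icc (0 : ℝ) 1, g (Fin.insertNth (α := fun _ => ℝ) 0 x θ)) where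
  usc := by
    refine upperSemicontinuous_integral (C := 1) (fun w => ?_) (fun x w => H.abs_le_one _)
      fun x => ?_
    · have hc : Continuous fun x : ℝ => Fin.insertNth (α := fun _ => ℂ) 0 (x : ℂ) w :=
        (continuous_insertNth 0).comp (Complex.continuous_ofReal.prodMk continuous_const)
      exact (H.usc.comp hc).measurable
    · have hc : Continuous fun w : Fin d → ℂ => Fin.insertNth (α := fun _ => ℂ) 0 (x : ℂ) w :=
        (continuous_insertNth 0).comp (continuous_const.prodMk continuous_id)
      exact H.usc.comp hc
  abs_le_one w := by
    have := norm_integral_le_of_norm_le_const (μ := volume.restrict (Icc (0 : ℝ) 1))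
      (f := fun x : ℝ => U (Fin.insertNth (α := fun _ => ℂ) 0 (x : ℂ) w)) (C := 1)
      (Eventually.of_forall fun x => H.abs_le_one _)
    simpa using this
  submean i w hw := by
    refine SubmeanOn.integral (C := 1)
      (F := fun (x : ℝ) ζ => U (Fin.insertNth (α := fun _ => ℂ) 0 (x : ℂ) (Function.update w i ζ)))
      ?_ (fun x ζ => H.abs_le_one _) ?_
    · have hc : Continuous fun z : ℝ × ℂ =>
          Fin.insertNth (α := fun _ => ℂ) 0 (z.1 : ℂ) (Function.update w i z.2) :=
        (continuous_insertNth 0).comp ((Complex.continuous_ofReal.comp continuous_fst).prodMk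
          (continuous_const.update i continuous_snd))
      exact (H.usc.comp hc).measurable
    · filter_upwards [ae_restrict_mem measurableSet_Icc] with x hx
      have h := H.submean (Fin.succAbove 0 i) (Fin.insertNth (α := fun _ => ℂ) 0 (x : ℂ) w) (by
        intro j
        refine Fin.succAboveCases 0 ?_ (fun j => ?_) j
        · rw [Fin.insertNth_apply_same, mem_ball_zero_iff, Complex.norm_real, Real.norm_eq_abs,
            abs_of_nonneg hx.1]
          linarith [hx.2]
        · rw [Fin.insertNth_apply_succAbove]
          exact hw j)
      simpa only [Fin.insertNth_update] using h
  measurable := by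
    have hm : Measurable fun z : (Fin d → ℝ) × ℝ =>
        g (Fin.insertNth (α := fun _ => ℝ) 0 z.2 z.1) :=
      H.measurable.comp ((measurable_insertNth 0).comp measurable_swap)
    exact hm.stronglyMeasurable.integral_prod_right'.measurable
  trace_abs_le_one θ := by
    have := norm_integral_le_of_norm_le_const (μ := volume.restrict (Icc (0 : ℝ) 1))
      (f := fun x : ℝ => g (Fin.insertNth (α := fun _ => ℝ) 0 x θ)) (C := 1)
      (Eventually.of_forall fun x => H.trace_abs_le_one _)
    simpa using this
  periodic θ k := by
    refine integral_congr_ae (Eventually.of_forall fun x => ?_)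
    have h := H.periodic (Fin.insertNth (α := fun _ => ℝ) 0 x θ)
      (Fin.insertNth (α := fun _ => ℤ) 0 0 k)
    rw [← insertNth_add_intCast] at h
    simpa only [Int.cast_zero, add_zero] using h
  trace_eq θ hθ := by
    refine setIntegral_congr_fun measurableSet_Icc fun x hx => ?_
    exact (H.slice 0 hθ).trace_eq x (by rw [abs_of_nonneg hx.1]; linarith [hx.2])

theorem integral_marginal {U : (Fin (d + 1) → ℂ) → ℝ} {g : (Fin (d + 1) → ℝ) → ℝ}
    (H : MultiTrace (d + 1) U g) :
    ∫ θ in Icc (0 : Fin d → ℝ) 1, ∫ x in Icc (0 : ℝ) 1,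
      g (Fin.insertNth (α := fun _ => ℝ) 0 x θ) = ∫ θ in Icc (0 : Fin (d + 1) → ℝ) 1, g θ :=
  (integral_cube_succ 0 H.measurable H.trace_abs_le_one).symm

theorem abs_marginal_shift_le {U : (Fin (d + 1) → ℂ) → ℝ} {g : (Fin (d + 1) → ℝ) → ℝ}
    (H : MultiTrace (d + 1) U g) {ω : Fin (d + 1) → ℝ} {ε : ℝ}
    (hε : ∀ θ, |g (θ + ω) - g θ| ≤ ε) (θ : Fin d → ℝ) :
    |(∫ x in Icc (0 : ℝ) 1, g (Fin.insertNth (α := fun _ => ℝ) 0 x (θ + Fin.tail ω))) -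
      ∫ x in Icc (0 : ℝ) 1, g (Fin.insertNth (α := fun _ => ℝ) 0 x θ)| ≤ ε := by
  have hper : Function.Periodic
      (fun x => g (Fin.insertNth (α := fun _ => ℝ) 0 x (θ + Fin.tail ω))) 1 := by
    intro x
    have h := H.periodic (Fin.insertNth (α := fun _ => ℝ) 0 x (θ + Fin.tail ω))
      (Fin.insertNth (α := fun _ => ℤ) 0 1 fun _ => 0)
    rw [← insertNth_add_intCast] at h
    simp only [Int.cast_one, Int.cast_zero, add_zero] at h
    exact h
  have heq : ∀ x, Fin.insertNth (α := fun _ => ℝ) 0 (x + ω 0) (θ + Fin.tail ω) =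
      Fin.insertNth (α := fun _ => ℝ) 0 x θ + ω := by
    intro x
    funext j
    refine Fin.succAboveCases 0 ?_ (fun j => ?_) j <;> simp
  have hm : ∀ θ : Fin d → ℝ, Measurable fun x : ℝ => Fin.insertNth (α := fun _ => ℝ) 0 x θ :=
    fun θ => (measurable_insertNth 0).comp (measurable_id.prodMk measurable_const)
  rw [← integral_Icc_shift hper (ω 0)]
  simp only [heq]
  have hi : Integrable (fun x => g (Fin.insertNth (α := fun _ => ℝ) 0 x θ + ω))
      (volume.restrict (Icc (0 : ℝ) 1)) :=
    integrable_of_abs_le (H.measurable.comp ((hm θ).add_const ω)) fun x => H.trace_abs_le_one _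
  have hi' : Integrable (fun x => g (Fin.insertNth (α := fun _ => ℝ) 0 x θ))
      (volume.restrict (Icc (0 : ℝ) 1)) :=
    integrable_of_abs_le (H.measurable.comp (hm θ)) fun x => H.trace_abs_le_one _
  rw [← integral_sub hi hi']
  have := norm_integral_le_of_norm_le_const (μ := volume.restrict (Icc (0 : ℝ) 1))
    (f := fun x : ℝ => g (Fin.insertNth (α := fun _ => ℝ) 0 x θ + ω) -
      g (Fin.insertNth (α := fun _ => ℝ) 0 x θ)) (C := ε)
    (Eventually.of_forall fun x => hε _)
  simpa using this

end MultiTrace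

theorem Diophantine.tail {d : ℕ} {p q : ℝ} {ω : Fin (d + 1) → ℝ} (h : Diophantine (d + 1) p q ω) :
    Diophantine d p q (Fin.tail ω) := by
  intro k hk
  have h1 := h (Fin.cons 0 k) (by
    intro h0
    refine hk (funext fun i => ?_)
    simpa using congrFun h0 i.succ)
  simpa [Fin.sum_univ_succ, Fin.tail] using h1

/-! ### Large deviations at polynomial scale -/

theorem MultiTrace.exists_integral_abs_sub_le (d : ℕ) {p q : ℝ} (hp : 0 < p) (hq : 1 ≤ q) :
    ∃ C : ℝ, 1 ≤ C ∧ ∀ (U : (Fin (d + 1) → ℂ) → ℝ) (g : (Fin (d + 1) → ℝ) → ℝ),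
      MultiTrace (d + 1) U g → ∀ ω, Diophantine (d + 1) p q ω → ∀ x : ℝ, 1 ≤ x →
      (∀ θ, |g (θ + ω) - g θ| ≤ 1 / x) →
      ∫ θ in Icc (0 : Fin (d + 1) → ℝ) 1, |g θ - ∫ η in Icc (0 : Fin (d + 1) → ℝ) 1, g η| ≤
        C * x ^ (-(1 / (16 * q))) := by
  have hq0 : 0 < q := by linarith
  set A : ℝ := (((d : ℝ) + 1) ^ q / (4 * p)) ^ 2 with hA
  have hA0 : 0 ≤ A := sq_nonneg _
  refine ⟨A + (d + 1) * 160 + 1, by nlinarith [Nat.cast_nonneg (α := ℝ) d], ?_⟩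
  intro U g H ω hω x hx hgx
  have hx0 : 0 < x := by linarith
  set m := ∫ η in Icc (0 : Fin (d + 1) → ℝ) 1, g η with hm
  set t := x ^ (-(1 / (16 * q))) with ht
  have ht0 : 0 < t := Real.rpow_pos_of_pos hx0 _
  have ht2 : t ^ 2 = x ^ (-(1 / (8 * q))) := by
    rw [ht, ← Real.rpow_natCast, ← Real.rpow_mul hx0.le]
    congr 1
    push_cast
    field_simp
    norm_num
  have hvar := H.variance_le hp hq0 hω (K := x ^ (1 / (2 * q)))
    (Real.one_le_rpow hx (by positivity))
  have hK4 : (x ^ (1 / (2 * q))) ^ (-(1 / 4) : ℝ) = t ^ 2 := by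
    rw [ht2, ← Real.rpow_mul hx0.le]
    congr 1
    field_simp
    norm_num
  have hKq : (((d : ℝ) + 1) * x ^ (1 / (2 * q))) ^ q = (d + 1) ^ q * x ^ (1 / 2 : ℝ) := by
    rw [Real.mul_rpow (by positivity) (by positivity), ← Real.rpow_mul hx0.le]
    congr 2
    field_simp
  have hx2 : (x ^ (1 / 2 : ℝ)) ^ 2 = x := by
    rw [← Real.rpow_natCast, ← Real.rpow_mul hx0.le]
    norm_num
  have hinc : ∫ θ in Icc (0 : Fin (d + 1) → ℝ) 1, (g (θ + ω) - g θ) ^ 2 ≤ (1 / x) ^ 2 := by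
    calc _ ≤ ∫ θ in Icc (0 : Fin (d + 1) → ℝ) 1, (1 / x) ^ 2 := by
          refine integral_mono_of_nonneg (Eventually.of_forall fun θ => sq_nonneg _)
            (integrable_const _) (Eventually.of_forall fun θ => ?_)
          exact sq_le_sq' (abs_le.1 (hgx θ)).1 (abs_le.1 (hgx θ)).2
      _ = _ := by simp
  have hxt : 1 / x ≤ t ^ 2 := by
    rw [ht2, one_div, ← Real.rpow_neg_one]
    refine Real.rpow_le_rpow_of_exponent_le hx ?_
    rw [neg_le_neg_iff, div_le_one (by positivity)]
    linarith
  have hvar2 : ∫ θ in Icc (0 : Fin (d + 1) → ℝ) 1, (g θ - m) ^ 2 ≤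
      (A + (d + 1) * 160) * t ^ 2 := by
    rw [hK4, hKq] at hvar
    have h1 : (((d : ℝ) + 1) ^ q * x ^ (1 / 2 : ℝ) / (4 * p)) ^ 2 = A * x := by
      rw [hA, div_pow, div_pow, mul_pow, hx2]
      ring
    rw [h1] at hvar
    have h2 : A * x * (1 / x) ^ 2 = A * (1 / x) := by field_simp
    have h3 := mul_le_mul_of_nonneg_left hinc (by positivity : 0 ≤ A * x)
    have h4 := mul_le_mul_of_nonneg_left hxt hA0
    linarith
  have hgm : Measurable fun θ => (g θ - m) ^ 2 := (H.measurable.sub_const m).pow_const 2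
  have hgb : ∀ θ, |(g θ - m) ^ 2| ≤ 4 := fun θ => by
    have h1 := abs_le.1 (H.trace_abs_le_one θ)
    have h2 := abs_le.1 H.abs_integral_le_one
    rw [abs_of_nonneg (sq_nonneg _)]
    nlinarith [h1.1, h1.2, h2.1, h2.2]
  calc ∫ θ in Icc (0 : Fin (d + 1) → ℝ) 1, |g θ - m|
      ≤ ∫ θ in Icc (0 : Fin (d + 1) → ℝ) 1, (t⁻¹ * (g θ - m) ^ 2 + t) := by
        refine integral_mono_of_nonneg (Eventually.of_forall fun θ => abs_nonneg _)
          (((integrable_of_abs_le hgm hgb).const_mul _).add (integrable_const _))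
          (Eventually.of_forall fun θ => ?_)
        beta_reduce
        rw [← sq_abs (g θ - m), inv_mul_eq_div, ← sub_nonneg]
        have : |g θ - m| ^ 2 / t + t - |g θ - m| =
            ((|g θ - m| - t) ^ 2 + |g θ - m| * t) / t := by field_simp; ring
        rw [this]
        positivity
    _ = t⁻¹ * (∫ θ in Icc (0 : Fin (d + 1) → ℝ) 1, (g θ - m) ^ 2) + t := by
        rw [integral_add ((integrable_of_abs_le hgm hgb).const_mul _) (integrable_const _),
          integral_const_mul]
        simp
    _ ≤ t⁻¹ * ((A + (d + 1) * 160) * t ^ 2) + t := by gcongr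
    _ = _ := by field_simp

theorem rpow_neg_le_rpow_neg {x a b : ℝ} (hx : 1 ≤ x) (h : a ≤ b) : x ^ (-b) ≤ x ^ (-a) :=
  Real.rpow_le_rpow_of_exponent_le hx (by linarith)

theorem exp_neg_rpow_div_le {x a b C D : ℝ} (hx : 1 ≤ x) (hab : a ≤ b) (hC : 0 < C) (hCD : C ≤ D) :
    Real.exp (-(x ^ b / C)) ≤ Real.exp (-(x ^ a / D)) := by
  have : x ^ a ≤ x ^ b := Real.rpow_le_rpow_of_exponent_le hx hab
  gcongr

/-- A measurable subset of the cube whose slices are small off a small set is small. -/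
theorem measure_cube_le_of_slices {d : ℕ} {B : Set (Fin (d + 1) → ℝ)} (hB : MeasurableSet B)
    {N : Set (Fin d → ℝ)} {ε : ENNReal}
    (h : ∀ θ ∈ Icc (0 : Fin d → ℝ) 1, θ ∉ N →
      volume.restrict (Icc (0 : ℝ) 1) {x | Fin.insertNth (α := fun _ => ℝ) 0 x θ ∈ B} ≤ ε) :
    volume.restrict (Icc (0 : Fin (d + 1) → ℝ) 1) B ≤
      volume.restrict (Icc (0 : Fin d → ℝ) 1) N + ε := by
  set μ := volume.restrict (Icc (0 : Fin d → ℝ) 1) with hμ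
  set N' := toMeasurable μ N with hN'
  rw [← (measurePreserving_insertNth (d := d) 0).measure_preimage hB.nullMeasurableSet,
    Measure.prod_apply_symm (measurable_insertNth 0 hB), ← measure_toMeasurable N]
  calc _ ≤ ∫⁻ θ, N'.indicator 1 θ + ε ∂μ := by
        refine lintegral_mono_ae ?_
        filter_upwards [ae_mem_cube d] with θ hθ
        by_cases hN : θ ∈ N'
        · rw [indicator_of_mem hN]
          exact (prob_le_one (μ := volume.restrict (Icc (0 : ℝ) 1))).trans le_self_add
        · refine le_trans ?_ le_add_self
          exact h θ hθ fun hθN => hN (subset_toMeasurable μ N hθN)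
    _ = _ := by
        rw [lintegral_add_right _ measurable_const,
          lintegral_indicator_one (measurableSet_toMeasurable μ N)]
        simp

theorem MultiTrace.exists_measure_deviation_le (d : ℕ) {p q : ℝ} (hp : 0 < p) (hq : 1 ≤ q) :
    ∃ κ C : ℝ, 0 < κ ∧ 1 ≤ C ∧ ∀ (U : (Fin d → ℂ) → ℝ) (g : (Fin d → ℝ) → ℝ),
      MultiTrace d U g → ∀ ω, Diophantine d p q ω → ∀ x : ℝ, 1 ≤ x →
      (∀ θ, |g (θ + ω) - g θ| ≤ 1 / x) →
      volume.restrict (Icc (0 : Fin d → ℝ) 1)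
          {θ | C * x ^ (-κ) < |g θ - ∫ η in Icc (0 : Fin d → ℝ) 1, g η|} ≤
        ENNReal.ofReal (C * Real.exp (-(x ^ κ / C))) := by
  induction d with
  | zero =>
    refine ⟨1, 1, one_pos, le_rfl, fun U g H ω hω x hx hgx => ?_⟩
    have hx0 : 0 < x := by linarith
    have h0 : ∀ θ, g θ = g 0 := fun θ => congrArg g (Subsingleton.elim _ _)
    have hempty : {θ | 1 * x ^ (-1 : ℝ) < |g θ - ∫ η in Icc (0 : Fin 0 → ℝ) 1, g η|} = ∅ := by
      rw [eq_empty_iff_forall_notMem]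
      intro θ hθ
      have h1 : (0 : ℝ) < x ^ (-1 : ℝ) := Real.rpow_pos_of_pos hx0 _
      rw [mem_ofPred_eq] at hθ
      simp only [h0] at hθ
      rw [integral_const, probReal_univ, one_smul, sub_self, abs_zero] at hθ
      linarith
    rw [hempty, measure_empty]
    exact zero_le
  | succ d ih =>
    obtain ⟨κ, C, hκ, hC, ih⟩ := ih
    obtain ⟨C₁, hC₁, hmean⟩ := MultiTrace.exists_integral_abs_sub_le d hp hq
    have hq0 : 0 < q := by linarith
    set b := 1 / (16 * q) with hb
    have hb0 : 0 < b := by positivity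
    set κ₂ := min b κ with hκ₂
    have hκ₂0 : 0 < κ₂ := lt_min hb0 hκ
    set C₂ := 4 * C₁ + 5 * C with hC₂
    have hC₂1 : 1 ≤ C₂ := by linarith
    refine ⟨κ₂ / 8, 111 * C₂ + 64 + 2 * C, by positivity, by linarith, ?_⟩
    intro U g H ω hω x hx hgx
    have hx0 : 0 < x := by linarith
    set m := ∫ η in Icc (0 : Fin (d + 1) → ℝ) 1, g η with hm
    have hm1 : |m| ≤ 1 := H.abs_integral_le_one
    have hmean := hmean U g H ω hω x hx hgx
    rw [← hm] at hmean
    have hP := H.posPart hm1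
    have hPgx : ∀ θ, |1 / 2 * max (g (θ + ω) - m) 0 - 1 / 2 * max (g θ - m) 0| ≤ 1 / x :=
      fun θ => (abs_posPart_sub_le _ _ _).trans (hgx θ)
    have bad₀ := ih _ _ H.marginal (Fin.tail ω) hω.tail x hx (H.abs_marginal_shift_le hgx)
    have badP := ih _ _ hP.marginal (Fin.tail ω) hω.tail x hx (hP.abs_marginal_shift_le hPgx)
    rw [H.integral_marginal, ← hm] at bad₀
    rw [hP.integral_marginal] at badP
    set mP := ∫ θ in Icc (0 : Fin (d + 1) → ℝ) 1, 1 / 2 * max (g θ - m) 0 with hmP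
    have hmP1 : mP ≤ C₁ * x ^ (-b) := by
      refine le_trans ?_ hmean
      refine integral_mono_of_nonneg (Eventually.of_forall fun θ => by positivity)
        (H.integrable.sub (integrable_const m)).abs (Eventually.of_forall fun θ => ?_)
      have h1 : max (g θ - m) 0 ≤ |g θ - m| := max_le (le_abs_self _) (abs_nonneg _)
      have h2 : 0 ≤ max (g θ - m) 0 := le_max_right _ _
      beta_reduce
      linarith
    set s := C₂ * x ^ (-κ₂) with hs
    have hs0 : 0 < s := by positivity
    set h := s ^ (1 / 8 : ℝ) with hh
    have hh0 : 0 < h := by positivity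
    have hh8 : h ^ 8 = s := by
      rw [hh, ← Real.rpow_natCast, ← Real.rpow_mul hs0.le]
      norm_num
    have hhle : h ≤ C₂ * x ^ (-(κ₂ / 8)) := by
      rw [hh, hs, Real.mul_rpow (by positivity) (by positivity), ← Real.rpow_mul hx0.le]
      have h1 : C₂ ^ (1 / 8 : ℝ) ≤ C₂ := by
        conv_rhs => rw [← Real.rpow_one C₂]
        exact Real.rpow_le_rpow_of_exponent_le hC₂1 (by norm_num)
      have h2 : -κ₂ * (1 / 8) = -(κ₂ / 8) := by ring
      rw [h2]
      gcongr
    have hxk : 0 < x ^ (-(κ₂ / 8)) := by positivity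
    have hinv : x ^ (κ₂ / 8) / (111 * C₂ + 64 + 2 * C) ≤ 1 / h := by
      have h1 : x ^ (κ₂ / 8) * x ^ (-(κ₂ / 8)) = 1 := by
        rw [← Real.rpow_add hx0, add_neg_cancel, Real.rpow_zero]
      rw [div_le_div_iff₀ (by positivity) hh0]
      calc x ^ (κ₂ / 8) * h ≤ x ^ (κ₂ / 8) * (C₂ * x ^ (-(κ₂ / 8))) := by gcongr
        _ = C₂ := by linear_combination C₂ * h1
        _ ≤ _ := by linarith
    have hBm : MeasurableSet {θ | (111 * C₂ + 64 + 2 * C) * x ^ (-(κ₂ / 8)) < |g θ - m|} :=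
      measurableSet_lt measurable_const (continuous_abs.measurable.comp (H.measurable.sub_const m))
    refine (measure_cube_le_of_slices hBm
      (N := {θ | C * x ^ (-κ) <
          |(∫ x in Icc (0 : ℝ) 1, g (Fin.insertNth (α := fun _ => ℝ) 0 x θ)) - m|} ∪
        {θ | C * x ^ (-κ) < |(∫ x in Icc (0 : ℝ) 1,
          1 / 2 * max (g (Fin.insertNth (α := fun _ => ℝ) 0 x θ) - m) 0) - mP|})
      (ε := ENNReal.ofReal (64 * Real.exp (-(1 / h)))) ?_).trans ?_
    · intro θ hθ hθN
      rw [mem_union, not_or, mem_ofPred_eq, mem_ofPred_eq, not_lt, not_lt] at hθN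
      have hS := H.slice 0 (abs_lt_two_of_mem_cube hθ)
      have hSi : Integrable (fun x => g (Fin.insertNth (α := fun _ => ℝ) 0 x θ))
        (volume.restrict (Icc (0 : ℝ) 1)) := integrable_of_abs_le hS.measurable hS.trace_abs_le_one
      have hPm : Measurable
          fun x => 1 / 2 * max (g (Fin.insertNth (α := fun _ => ℝ) 0 x θ) - m) 0 :=
        ((hS.measurable.sub_const m).max measurable_const).const_mul _
      have hPi := integrable_of_abs_le (μ := volume.restrict (Icc (0 : ℝ) 1)) hPm
        (fun x => abs_half_posPart_le_one (hS.trace_abs_le_one x) hm1)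
      have hinteg : ∫ x in Icc (0 : ℝ) 1, |g (Fin.insertNth (α := fun _ => ℝ) 0 x θ) - m| ≤
          h ^ 8 := by
        have h1 : ∀ x, |g (Fin.insertNth (α := fun _ => ℝ) 0 x θ) - m| =
            4 * (1 / 2 * max (g (Fin.insertNth (α := fun _ => ℝ) 0 x θ) - m) 0) -
              (g (Fin.insertNth (α := fun _ => ℝ) 0 x θ) - m) := by
          intro x
          rcases abs_cases (g (Fin.insertNth (α := fun _ => ℝ) 0 x θ) - m) with ha | ha
          · rw [ha.1, max_eq_left ha.2]; ring
          · rw [ha.1, max_eq_right ha.2.le]; ring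
        have hSm : Integrable (fun x => g (Fin.insertNth (α := fun _ => ℝ) 0 x θ) - m)
          (volume.restrict (Icc (0 : ℝ) 1)) := hSi.sub (integrable_const m)
        simp only [h1]
        rw [integral_sub (hPi.const_mul 4) hSm, integral_const_mul,
          integral_sub hSi (integrable_const m), integral_const, probReal_univ, one_smul, hh8]
        have h2 := (abs_le.1 hθN.1).1
        have h3 := (abs_le.1 hθN.2).2
        have h4 : x ^ (-b) ≤ x ^ (-κ₂) := rpow_neg_le_rpow_neg hx (min_le_left _ _)
        have h5 : x ^ (-κ) ≤ x ^ (-κ₂) := rpow_neg_le_rpow_neg hx (min_le_right _ _)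
        have h6 := mul_le_mul_of_nonneg_left h4 (by linarith : 0 ≤ C₁)
        have h7 := mul_le_mul_of_nonneg_left h5 (by linarith : 0 ≤ C)
        rw [hs, hC₂]
        linarith
      refine le_trans ?_ (hS.volume_deviation_le hm1 hh0 hinteg)
      rw [Measure.restrict_apply' measurableSet_Icc]
      refine measure_mono fun y hy => ⟨hy.2, ?_⟩
      refine lt_of_le_of_lt ?_ hy.1
      calc 111 * h ≤ 111 * (C₂ * x ^ (-(κ₂ / 8))) := by gcongr
        _ ≤ (111 * C₂ + 64 + 2 * C) * x ^ (-(κ₂ / 8)) := by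
          rw [← mul_assoc]
          gcongr
          linarith
    · refine (add_le_add_left ((measure_union_le _ _).trans (add_le_add bad₀ badP)) _).trans ?_
      rw [← ENNReal.ofReal_add (by positivity) (by positivity),
        ← ENNReal.ofReal_add (by positivity) (by positivity)]
      refine ENNReal.ofReal_le_ofReal ?_
      set E := Real.exp (-(x ^ (κ₂ / 8) / (111 * C₂ + 64 + 2 * C))) with hE
      have h1 : Real.exp (-(x ^ κ / C)) ≤ E :=
        exp_neg_rpow_div_le hx (by linarith [min_le_right b κ]) (by linarith) (by linarith)
      have h2 : Real.exp (-(1 / h)) ≤ E := by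
        rw [hE]
        gcongr
      have hE0 : 0 < E := Real.exp_pos _
      calc C * Real.exp (-(x ^ κ / C)) + C * Real.exp (-(x ^ κ / C)) + 64 * Real.exp (-(1 / h))
          ≤ C * E + C * E + 64 * E := by gcongr
        _ ≤ _ := by nlinarith

/-! ### Joint upper semicontinuity of separately subharmonic functions -/

theorem eventually_piecewise_lt {d : ℕ} {U : (Fin d → ℂ) → ℝ} (hb : ∀ w, |U w| ≤ 1)
    (husc : ∀ i w, UpperSemicontinuous fun ζ => U (Function.update w i ζ))
    (hsub : ∀ i w, (∀ j, w j ∈ ball (0 : ℂ) 2) →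
      SubmeanOn (fun ζ => U (Function.update w i ζ)) (ball 0 2))
    (S : Finset (Fin d)) :
    ∀ w₀ : Fin d → ℂ, (∀ j, w₀ j ∈ ball (0 : ℂ) 2) → ∀ y, U w₀ < y →
      ∀ᶠ z in 𝓝 w₀, U (S.piecewise z w₀) < y := by
  induction S using Finset.induction_on with
  | empty =>
    intro w₀ _ y hy
    simpa using hy
  | insert i S hi ih =>
    intro w₀ hw₀ y hy
    obtain ⟨y', hy1, hy2⟩ := exists_between hy
    have hslice : ∀ᶠ ζ in 𝓝 (w₀ i), U (Function.update w₀ i ζ) < y' :=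
      husc i w₀ (w₀ i) y' (by simpa using hy1)
    obtain ⟨ε₁, hε₁, hball₁⟩ := Metric.eventually_nhds_iff_ball.1 hslice
    obtain ⟨ε₂, hε₂, hball₂⟩ := Metric.isOpen_iff.1 isOpen_ball (w₀ i) (hw₀ i)
    set r : ℝ := min ε₁ (ε₂ / 2) with hr_def
    have hr : 0 < r := lt_min hε₁ (half_pos hε₂)
    have hrε₁ : r ≤ ε₁ := min_le_left _ _
    have hrε₂ : r ≤ ε₂ / 2 := min_le_right _ _
    have hvol : volume.real (ball (w₀ i) r) = Real.pi * r ^ 2 :=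
      Complex.volume_real_ball _ hr.le
    have hpos : 0 < Real.pi * r ^ 2 := by positivity
    set F : (Fin d → ℂ) → ℂ → ℝ := fun z =>
      (ball (z i) r).indicator fun ζ => U (Function.update (S.piecewise z w₀) i ζ) with hF
    set f : ℂ → ℝ := (ball (w₀ i) r).indicator fun ζ => U (Function.update w₀ i ζ) with hf
    have hsubset : ball (w₀ i) r ⊆ ball 0 2 := (ball_subset_ball (by linarith)).trans hball₂
    have hfint : ∫ ζ in ball (0 : ℂ) 2, f ζ < y * (Real.pi * r ^ 2) := by
      rw [hf, setIntegral_indicator measurableSet_ball, inter_eq_right.2 hsubset]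
      calc ∫ ζ in ball (w₀ i) r, U (Function.update w₀ i ζ)
          ≤ ∫ _ in ball (w₀ i) r, y' := by
            refine setIntegral_mono_on
              (integrable_of_abs_le (husc i w₀).measurable fun ζ => hb _)
              (integrable_const _) measurableSet_ball fun ζ hζ => ?_
            exact (hball₁ ζ (ball_subset_ball hrε₁ hζ)).le
        _ = y' * (Real.pi * r ^ 2) := by
            rw [setIntegral_const, hvol, smul_eq_mul, mul_comm]
        _ < y * (Real.pi * r ^ 2) := mul_lt_mul_of_pos_right hy2 hpos
    have hindicator : ∀ (s : Set ℂ) (v : ℂ → ℝ), (∀ ζ, |v ζ| ≤ 1) →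
        ∀ ζ, |s.indicator v ζ| ≤ 1 := by
      intro s v hv ζ
      by_cases h : ζ ∈ s
      · simpa [h] using hv ζ
      · simp [h]
    have hlim : ∀ᵐ ζ ∂volume.restrict (ball (0 : ℂ) 2),
        ∀ a, f ζ < a → ∀ᶠ z in 𝓝 w₀, F z ζ < a := by
      have hsphere : ∀ᵐ ζ ∂volume.restrict (ball (0 : ℂ) 2), ζ ∉ sphere (w₀ i) r :=
        ae_restrict_of_ae (measure_eq_zero_iff_ae_notMem.1
          (Measure.addHaar_sphere volume (w₀ i) r))
      filter_upwards [hsphere, ae_restrict_mem measurableSet_ball] with ζ hζ hζ2 a ha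
      have hcont : Tendsto (fun z : Fin d → ℂ => dist ζ (z i)) (𝓝 w₀) (𝓝 (dist ζ (w₀ i))) :=
        (continuous_const.dist (continuous_apply i)).tendsto w₀
      rcases lt_or_gt_of_ne (show dist ζ (w₀ i) ≠ r from hζ) with h | h
      · have hmem : ζ ∈ ball (w₀ i) r := h
        rw [hf, indicator_of_mem hmem] at ha
        have hw : ∀ j, Function.update w₀ i ζ j ∈ ball (0 : ℂ) 2 := by
          intro j
          by_cases hj : j = i
          · subst hj; simpa using hζ2
          · simpa [hj] using hw₀ j
        have hupd : Tendsto (fun z : Fin d → ℂ => Function.update z i ζ) (𝓝 w₀)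
            (𝓝 (Function.update w₀ i ζ)) :=
          (continuous_id.update i continuous_const).tendsto w₀
        filter_upwards [hupd.eventually (ih _ hw a ha), hcont.eventually (gt_mem_nhds h)]
          with z hz hzr
        have hzmem : ζ ∈ ball (z i) r := hzr
        rw [hF]
        dsimp only
        rw [indicator_of_mem hzmem, Finset.update_piecewise_of_notMem (hi := hi)]
        convert hz using 2
        refine Finset.piecewise_congr _ (fun j hj => ?_) fun _ _ => rfl
        rw [Function.update_of_ne]
        exact fun h => hi (h ▸ hj)
      · have hmem : ζ ∉ ball (w₀ i) r := fun h' => (lt_asymm h h')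
        rw [hf, indicator_of_notMem hmem] at ha
        filter_upwards [hcont.eventually (lt_mem_nhds h)] with z hz
        have hzmem : ζ ∉ ball (z i) r := fun h' => (lt_asymm hz h')
        rw [hF]
        dsimp only
        rwa [indicator_of_notMem hzmem]
    have hFint : ∀ᶠ z in 𝓝 w₀, ∫ ζ in ball (0 : ℂ) 2, F z ζ < y * (Real.pi * r ^ 2) :=
      eventually_integral_lt (C := 1)
        (fun z => ((husc i _).measurable).indicator measurableSet_ball)
        (fun z => hindicator _ _ fun ζ => hb _)
        (((husc i w₀).measurable).indicator measurableSet_ball)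
        (hindicator _ _ fun ζ => hb _) hlim hfint
    have hnear : ∀ᶠ z in 𝓝 w₀, z i ∈ ball (w₀ i) r :=
      (continuous_apply i).tendsto w₀ (ball_mem_nhds _ hr)
    have hpoly : ∀ᶠ z in 𝓝 w₀, ∀ j, z j ∈ ball (0 : ℂ) 2 :=
      eventually_all.2 fun j =>
        (continuous_apply j).tendsto w₀ (isOpen_ball.mem_nhds (hw₀ j))
    filter_upwards [hFint, hnear, hpoly] with z hz hzr hzP
    have hW : ∀ j, S.piecewise z w₀ j ∈ ball (0 : ℂ) 2 := by
      intro j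
      by_cases hj : j ∈ S
      · simpa [hj] using hzP j
      · simpa [hj] using hw₀ j
    have hzsub : ball (z i) r ⊆ ball 0 2 := by
      refine Subset.trans (fun ζ hζ => ?_) hball₂
      have h1 : dist ζ (z i) < r := hζ
      have h2 : dist (z i) (w₀ i) < r := hzr
      have := dist_triangle ζ (z i) (w₀ i)
      rw [mem_ball]
      linarith
    have hmean := (hsub i _ hW).setIntegral_ball_nonneg (husc i _).measurable
      (C := 1) (fun ζ => hb _) hzsub
    rw [integral_sub (integrable_of_abs_le (husc i _).measurable fun ζ => hb _)
      (integrable_const _), setIntegral_const, Complex.volume_real_ball _ hr.le,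
      smul_eq_mul] at hmean
    rw [hF, setIntegral_indicator measurableSet_ball, inter_eq_right.2 hzsub] at hz
    rw [Finset.piecewise_insert]
    nlinarith

theorem upperSemicontinuous_polydisc_extension {d : ℕ}
    {U : (Fin d → ℂ) → ℝ} (hb : ∀ w, |U w| ≤ 1)
    (hout : ∀ w, (¬ ∀ j, w j ∈ ball (0 : ℂ) 2) → U w = 1)
    (husc : ∀ i w, UpperSemicontinuous fun ζ => U (Function.update w i ζ))
    (hsub : ∀ i w, (∀ j, w j ∈ ball (0 : ℂ) 2) →
      SubmeanOn (fun ζ => U (Function.update w i ζ)) (ball 0 2)) :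
    UpperSemicontinuous U := by
  intro w₀
  refine upperSemicontinuousAt_iff.2 fun y hy => ?_
  by_cases hw : ∀ j, w₀ j ∈ ball (0 : ℂ) 2
  · simpa using eventually_piecewise_lt hb husc hsub Finset.univ w₀ hw y hy
  · rw [hout w₀ hw] at hy
    exact Eventually.of_forall fun w => ((abs_le.1 (hb w)).2).trans_lt hy

theorem SubharmonicOn.extend {v V : ℂ → ℝ} (h : SubharmonicOn v (ball 0 2))
    (hb : ∀ z, |V z| ≤ 1) (hin : ∀ z ∈ ball (0 : ℂ) 2, V z = v z)
    (hout : ∀ z ∉ ball (0 : ℂ) 2, V z = 1) :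
    UpperSemicontinuous V ∧ SubmeanOn V (ball 0 2) := by
  have husc : UpperSemicontinuous V := by
    intro z
    refine upperSemicontinuousAt_iff.2 fun y hy => ?_
    by_cases hz : z ∈ ball (0 : ℂ) 2
    · rw [hin z hz] at hy
      have h1 := h.1 z hz y hy
      rw [isOpen_ball.nhdsWithin_eq hz] at h1
      filter_upwards [h1, isOpen_ball.mem_nhds hz] with x hx hx2
      rwa [hin x hx2]
    · rw [hout z hz] at hy
      exact Eventually.of_forall fun w => ((abs_le.1 (hb w)).2).trans_lt hy
  refine ⟨husc, fun c R hR hs => le_circleAverage_of_local husc hb ?_ hR hs⟩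
  intro z hz
  obtain ⟨r₀, hr₀, hmean⟩ := h.2 z hz
  obtain ⟨ε, hε, hball⟩ := Metric.isOpen_iff.1 isOpen_ball z hz
  refine ⟨min r₀ ε, lt_min hr₀ hε, fun r hr hr' => ?_⟩
  have h1 := hmean r hr (hr'.trans_le (min_le_left _ _))
  rw [hin z hz, Real.circleAverage_def, smul_eq_mul, ← one_div]
  convert h1 using 3
  funext θ
  refine hin _ (hball ?_)
  have : dist (circleMap z r θ) z = r := by
    simp [dist_eq_norm, circleMap, abs_of_pos hr]
  rw [mem_ball, this]
  exact hr'.trans_le (min_le_right _ _)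

/-- A bounded separately subharmonic function on the polydisc of radius `2`, extended by its
maximal value `1`, together with its restriction to the real torus. -/
theorem exists_multiTrace {d : ℕ} {u : (Fin d → ℂ) → ℝ}
    (hu : ∀ w : Fin d → ℂ, (∀ i, w i ∈ ball (0 : ℂ) 2) → u w ∈ Icc (-1 : ℝ) 1)
    (hsub : ∀ (i : Fin d) (w : Fin d → ℂ), (∀ j, w j ∈ ball (0 : ℂ) 2) →
      SubharmonicOn (fun ζ => u (Function.update w i ζ)) (ball (0 : ℂ) 2))
    (hper : ∀ (θ : Fin d → ℝ) (k : Fin d → ℤ),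
      u (fun i => ((θ i + (k i : ℝ) : ℝ) : ℂ)) = u (fun i => ((θ i : ℝ) : ℂ))) :
    ∃ U, MultiTrace d U fun θ => u fun i => ((θ i : ℝ) : ℂ) := by
  classical
  set U : (Fin d → ℂ) → ℝ := fun w => if ∀ i, w i ∈ ball (0 : ℂ) 2 then u w else 1 with hU
  have hin : ∀ w : Fin d → ℂ, (∀ i, w i ∈ ball (0 : ℂ) 2) → U w = u w := fun w hw => if_pos hw
  have hout : ∀ w : Fin d → ℂ, (¬ ∀ i, w i ∈ ball (0 : ℂ) 2) → U w = 1 := fun w hw => if_neg hw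
  have hb : ∀ w, |U w| ≤ 1 := by
    intro w
    by_cases hw : ∀ i, w i ∈ ball (0 : ℂ) 2
    · rw [hin w hw]
      exact abs_le.2 (hu w hw)
    · rw [hout w hw, abs_one]
  have hmem : ∀ (i : Fin d) (w : Fin d → ℂ) (ζ : ℂ), (∀ j, w j ∈ ball (0 : ℂ) 2) →
      ((∀ j, Function.update w i ζ j ∈ ball (0 : ℂ) 2) ↔ ζ ∈ ball (0 : ℂ) 2) := by
    intro i w ζ hw
    refine ⟨fun h => by simpa using h i, fun h j => ?_⟩
    by_cases hj : j = i
    · subst hj; simpa using h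
    · simpa [hj] using hw j
  have hslice : ∀ (i : Fin d) (w : Fin d → ℂ), (∀ j, w j ∈ ball (0 : ℂ) 2) →
      UpperSemicontinuous (fun ζ => U (Function.update w i ζ)) ∧
        SubmeanOn (fun ζ => U (Function.update w i ζ)) (ball 0 2) := fun i w hw =>
    (hsub i w hw).extend (fun ζ => hb _) (fun ζ hζ => hin _ ((hmem i w ζ hw).2 hζ))
      fun ζ hζ => hout _ fun h => hζ ((hmem i w ζ hw).1 h)
  have husc : ∀ i w, UpperSemicontinuous fun ζ => U (Function.update w i ζ) := by
    intro i w
    by_cases hw : ∀ j, Function.update w i 0 j ∈ ball (0 : ℂ) 2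
    · simpa using (hslice i _ hw).1
    · have hconst : (fun ζ => U (Function.update w i ζ)) = fun _ => (1 : ℝ) := by
        funext ζ
        refine hout _ fun h => hw fun j => ?_
        by_cases hj : j = i
        · subst hj; simp
        · simpa [hj] using h j
      rw [hconst]
      exact upperSemicontinuous_const
  have hUusc : UpperSemicontinuous U :=
    upperSemicontinuous_polydisc_extension hb hout husc fun i w hw => (hslice i w hw).2
  have htrace : ∀ θ : Fin d → ℝ, (∀ i, |θ i| < 2) →
      U (fun i => (θ i : ℂ)) = u fun i => (θ i : ℂ) := fun θ hθ =>
    hin _ fun i => by simpa using hθ i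
  have hfract : (fun θ : Fin d → ℝ => u fun i => ((θ i : ℝ) : ℂ)) =
      fun θ => U fun i => ((Int.fract (θ i) : ℝ) : ℂ) := by
    funext θ
    rw [htrace (fun i => Int.fract (θ i)) fun i => by
      rw [abs_of_nonneg (Int.fract_nonneg _)]
      linarith [Int.fract_lt_one (θ i)], ← hper (fun i => Int.fract (θ i)) fun i => ⌊θ i⌋]
    simp only [Int.fract_add_floor]
  refine ⟨U, hUusc, hb, fun i w hw => (hslice i w hw).2, ?_, fun θ => ?_, hper, htrace⟩
  · rw [hfract]
    refine hUusc.measurable.comp (measurable_pi_lambda _ fun i => ?_)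
    exact Complex.measurable_ofReal.comp (measurable_fract.comp (measurable_pi_apply i))
  · rw [congrFun hfract θ]
    exact hb _

/-! ### Small values of the scale parameter -/

theorem exists_one_le_mul_rpow_le (d : ℕ) :
    ∃ K : ℝ, 1 ≤ K ∧ ((d : ℝ) + 1) * (160 * K ^ (-(1 / 4) : ℝ)) ≤ 1 / 8 := by
  have ha : (1 : ℝ) ≤ (d + 1) * 1280 := by
    have : (0 : ℝ) ≤ d := d.cast_nonneg
    linarith
  refine ⟨((d + 1) * 1280) ^ 4, one_le_pow₀ ha, le_of_eq ?_⟩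
  have h : (((d : ℝ) + 1) * 1280) ^ (4 : ℕ) = (((d : ℝ) + 1) * 1280) ^ (4 : ℝ) := by
    rw [← Real.rpow_natCast]; norm_num
  rw [h, ← Real.rpow_mul (by linarith)]
  norm_num
  rw [Real.rpow_neg_one]
  field_simp
  norm_num

theorem MultiTrace.exists_measure_deviation_le_one_sub (d : ℕ) {p q : ℝ} (hp : 0 < p)
    (hq : 0 < q) :
    ∃ η : ℝ, 0 < η ∧ ∀ (U : (Fin (d + 1) → ℂ) → ℝ) (g : (Fin (d + 1) → ℝ) → ℝ),
      MultiTrace (d + 1) U g → ∀ ω, Diophantine (d + 1) p q ω →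
      (∀ θ, |g (θ + ω) - g θ| ≤ 1) → ∀ δ : ℝ, 1 - η ≤ δ → δ ≤ 1 →
      (volume.restrict (Icc (0 : Fin (d + 1) → ℝ) 1)).real
          {θ | δ < |g θ - ∫ η in Icc (0 : Fin (d + 1) → ℝ) 1, g η|} ≤ 1 - η := by
  obtain ⟨K, hK1, hK⟩ := exists_one_le_mul_rpow_le d
  set M : ℝ := (((d + 1) * K) ^ q / (4 * p)) ^ 2 with hM
  have hM0 : 0 ≤ M := sq_nonneg _
  refine ⟨min (1 / 8) (1 / (24 * (M + 1))), by positivity, fun U g H ω hω hgω δ hδ hδ1 => ?_⟩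
  set η : ℝ := min (1 / 8) (1 / (24 * (M + 1))) with hη
  have hη0 : 0 < η := by positivity
  have hη8 : η ≤ 1 / 8 := min_le_left _ _
  have hηM : M * (3 * η) ≤ 1 / 8 := by
    have h1 : η * (24 * (M + 1)) ≤ 1 := by
      have := min_le_right (1 / 8) (1 / (24 * (M + 1)))
      rwa [← hη, le_div_iff₀ (by positivity)] at this
    nlinarith
  set μ := volume.restrict (Icc (0 : Fin (d + 1) → ℝ) 1) with hμ
  set m := ∫ η, g η ∂μ with hm
  have hm1 := abs_le.1 H.abs_integral_le_one
  rw [← hm] at hm1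
  set E : Set (Fin (d + 1) → ℝ) := {θ | δ < |g θ - m|} with hE
  have hEm : MeasurableSet E :=
    measurableSet_lt measurable_const (H.measurable.sub_const m).abs
  set b : (Fin (d + 1) → ℝ) → ℝ := Eᶜ.indicator 1 with hb
  have hbm : Measurable b := measurable_one.indicator hEm.compl
  have hbE : ∀ θ, δ < |g θ - m| → b θ = 0 := fun θ hθ =>
    indicator_of_notMem (not_not.2 hθ) _
  have hbE' : ∀ θ, ¬ δ < |g θ - m| → b θ = 1 := fun θ hθ =>
    indicator_of_mem (show θ ∈ Eᶜ from hθ) _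
  have hb0 : ∀ θ, 0 ≤ b θ := fun θ => indicator_nonneg (fun _ _ => zero_le_one) θ
  have hb1 : ∀ θ, |b θ| ≤ 1 := fun θ => by
    by_cases h : δ < |g θ - m|
    · simp [hbE θ h]
    · simp [hbE' θ h]
  have hbper : ∀ (θ : Fin (d + 1) → ℝ) (k : Fin (d + 1) → ℤ),
      b (fun i => θ i + k i) = b θ := by
    intro θ k
    by_cases h : δ < |g θ - m|
    · rw [hbE θ h, hbE _ (by rwa [H.periodic])]
    · rw [hbE' θ h, hbE' _ (by rwa [H.periodic])]
  have hbi : Integrable b μ := integrable_of_abs_le hbm hb1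
  have hbi' : Integrable (fun θ => b (θ + ω)) μ :=
    integrable_of_abs_le (hbm.comp (measurable_add_const ω)) fun θ => hb1 _
  have hgi : Integrable g μ := H.integrable
  by_contra! hcon
  have hbint : ∫ θ, b θ ∂μ < η := by
    rw [hb, integral_indicator_one hEm.compl, probReal_compl_eq_one_sub hEm]
    linarith
  have hgm : ∫ θ, (g θ - m) ∂μ = 0 := by
    rw [integral_sub hgi (integrable_const _), integral_const]
    simp [hm]
  have hga : ∀ θ, -1 ≤ g θ ∧ g θ ≤ 1 := fun θ => abs_le.1 (H.trace_abs_le_one θ)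
  have hupper : ∃ θ, m + δ < g θ := by
    by_contra! hA
    have h1 : ∫ θ, (g θ - m) ∂μ ≤ ∫ θ, (-δ + 3 * b θ) ∂μ := by
      refine integral_mono (hgi.sub (integrable_const _))
        ((integrable_const _).add (hbi.const_mul _)) fun θ => ?_
      dsimp only
      by_cases h : δ < |g θ - m|
      · rw [hbE θ h]
        rcases lt_abs.1 h with h | h <;> linarith [hA θ]
      · rw [hbE' θ h]
        linarith [hga θ]
    rw [hgm, integral_add (integrable_const _) (hbi.const_mul _), integral_const,
      integral_const_mul] at h1
    simp only [probReal_univ, one_smul] at h1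
    linarith
  have hlower : ∃ θ, g θ < m - δ := by
    by_contra! hA
    have h1 : ∫ θ, (δ - 3 * b θ) ∂μ ≤ ∫ θ, (g θ - m) ∂μ := by
      refine integral_mono ((integrable_const _).sub (hbi.const_mul _))
        (hgi.sub (integrable_const _)) fun θ => ?_
      dsimp only
      by_cases h : δ < |g θ - m|
      · rw [hbE θ h]
        rcases lt_abs.1 h with h | h <;> linarith [hA θ]
      · rw [hbE' θ h]
        linarith [hga θ]
    rw [hgm, integral_sub (integrable_const _) (hbi.const_mul _), integral_const,
      integral_const_mul] at h1
    simp only [probReal_univ, one_smul] at h1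
    linarith
  obtain ⟨θ₁, hθ₁⟩ := hupper
  obtain ⟨θ₂, hθ₂⟩ := hlower
  have hmu : m < η := by linarith [hga θ₁]
  have hml : -η < m := by linarith [hga θ₂]
  have hshift : ∫ θ, (g (θ + ω) - g θ) ^ 2 ∂μ ≤ 3 * η := by
    calc ∫ θ, (g (θ + ω) - g θ) ^ 2 ∂μ ≤ ∫ θ, (η + b θ + b (θ + ω)) ∂μ := by
          refine integral_mono_of_nonneg (Eventually.of_forall fun θ => sq_nonneg _)
            (((integrable_const _).add hbi).add hbi') (Eventually.of_forall fun θ => ?_)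
          dsimp only
          have hjump := abs_le.1 (hgω θ)
          by_cases h : δ < |g θ - m|
          · by_cases h' : δ < |g (θ + ω) - m|
            · rw [hbE θ h, hbE _ h']
              have h1 := hga θ
              have h2 := hga (θ + ω)
              have hclose : |g (θ + ω) - g θ| ≤ 2 * η := by
                rw [abs_le]
                rcases lt_abs.1 h with h | h <;> rcases lt_abs.1 h' with h' | h' <;>
                  constructor <;> linarith
              rw [← sq_abs]
              nlinarith [abs_nonneg (g (θ + ω) - g θ)]
            · rw [hbE' _ h']
              nlinarith [hb0 θ]
          · rw [hbE' θ h]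
            nlinarith [hb0 (θ + ω)]
      _ = η + ∫ θ, b θ ∂μ + ∫ θ, b θ ∂μ := by
          have hi : Integrable (fun θ => η + b θ) μ := (integrable_const _).add hbi
          rw [integral_add hi hbi', integral_add (integrable_const _) hbi, integral_const,
            integral_cube_shift hbper]
          simp [hμ]
      _ ≤ 3 * η := by linarith
  have hvar : 1 / 2 ≤ ∫ θ, (g θ - m) ^ 2 ∂μ := by
    have h1 : ∫ θ, (49 / 64 - 49 / 64 * b θ) ∂μ ≤ ∫ θ, (g θ - m) ^ 2 ∂μ := by
      refine integral_mono ((integrable_const _).sub (hbi.const_mul _))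
        (integrable_of_abs_le (C := 4) ((H.measurable.sub_const m).pow_const 2) fun θ => ?_)
        fun θ => ?_
      · rw [abs_of_nonneg (sq_nonneg _)]
        nlinarith [hga θ]
      · dsimp only
        by_cases h : δ < |g θ - m|
        · rw [hbE θ h, ← sq_abs (g θ - m)]
          nlinarith
        · rw [hbE' θ h]
          nlinarith [sq_nonneg (g θ - m)]
    rw [integral_sub (integrable_const _) (hbi.const_mul _), integral_const,
      integral_const_mul] at h1
    simp only [probReal_univ, one_smul] at h1
    linarith
  have hmain := H.variance_le hp hq hω hK1
  rw [← hM, ← hμ, ← hm] at hmain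
  have := mul_le_mul_of_nonneg_left hshift hM0
  linarith

end Helpers

/-- **Goldstein–Schlag, Proposition 9.1**: a bounded, separately subharmonic function on
`D(0,2)^d` whose shift along a Diophantine `ω` moves it by less than `1/n` concentrates
around its mean: `mes{θ ∈ 𝕋^d : |u(θ) − ⟨u⟩| > n^{−τ}} < exp(−c₀ n^σ)`, with `σ, τ, c₀`
depending only on `d` and the Diophantine parameters. -/
theorem subharmonic_large_deviation
    (d : ℕ) (hd : 0 < d) (p q : ℝ) (hp : 0 < p) (hq : (d : ℝ) < q) :
    ∃ σ τ c₀ : ℝ, 0 < σ ∧ 0 < τ ∧ 0 < c₀ ∧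
      ∀ u : (Fin d → ℂ) → ℝ,
        (∀ w : Fin d → ℂ, (∀ i, w i ∈ Metric.ball (0 : ℂ) 2) →
          u w ∈ Set.Icc (-1 : ℝ) 1) →
        (∀ (i : Fin d) (w : Fin d → ℂ), (∀ j, w j ∈ Metric.ball (0 : ℂ) 2) →
          SubharmonicOn (fun ζ => u (Function.update w i ζ)) (Metric.ball (0 : ℂ) 2)) →
        (∀ (θ : Fin d → ℝ) (k : Fin d → ℤ),
          u (fun i => ((θ i + (k i : ℝ) : ℝ) : ℂ)) = u (fun i => ((θ i : ℝ) : ℂ))) →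
        ∀ ω : Fin d → ℝ, Diophantine d p q ω →
        ∀ n : ℕ, 1 ≤ n →
        (∀ θ : Fin d → ℝ,
          |u (fun i => ((θ i + ω i : ℝ) : ℂ)) - u (fun i => ((θ i : ℝ) : ℂ))| <
            1 / (n : ℝ)) →
        volume {θ ∈ Set.Icc (0 : Fin d → ℝ) 1 |
            ((n : ℝ) ^ (-τ) : ℝ) <
              |u (fun i => ((θ i : ℝ) : ℂ)) -
                ∫ θ' in Set.Icc (0 : Fin d → ℝ) 1, u (fun i => ((θ' i : ℝ) : ℂ))|}
          < ENNReal.ofReal (Real.exp (-c₀ * (n : ℝ) ^ σ)) := by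
  obtain ⟨d, rfl⟩ : ∃ d', d = d' + 1 := ⟨d - 1, by omega⟩
  have hq1 : 1 ≤ q := by
    have h : (0 : ℝ) ≤ d := d.cast_nonneg
    push_cast at hq
    linarith
  obtain ⟨κ, C, hκ, hC, hlarge⟩ := MultiTrace.exists_measure_deviation_le (d + 1) hp hq1
  obtain ⟨η, hη, hsmall⟩ :=
    MultiTrace.exists_measure_deviation_le_one_sub d hp (one_pos.trans_le hq1)
  have hC0 : 0 < C := one_pos.trans_le hC
  obtain ⟨N, hN1, hN⟩ : ∃ N : ℝ, 1 ≤ N ∧ ∀ x, N ≤ x → 2 * C ^ 2 ≤ x ^ (κ / 2) := by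
    obtain ⟨N, hN⟩ := eventually_atTop.1
      ((tendsto_rpow_atTop (half_pos hκ)).eventually_ge_atTop (2 * C ^ 2))
    exact ⟨max 1 N, le_max_left _ _, fun x hx => hN x ((le_max_right _ _).trans hx)⟩
  have hN0 : 0 < N := one_pos.trans_le hN1
  have hlogN : 0 ≤ Real.log N := Real.log_nonneg hN1
  have hNκ : 0 < N ^ κ := Real.rpow_pos_of_pos hN0 _
  set τ := min (κ / 2) (η / (Real.log N + 1)) with hτ
  have hτ0 : 0 < τ := by positivity
  have hτκ : τ ≤ κ / 2 := min_le_left _ _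
  have hτη : τ * Real.log N ≤ η := by
    have h : τ * (Real.log N + 1) ≤ η := by
      have := min_le_right (κ / 2) (η / (Real.log N + 1))
      rwa [← hτ, le_div_iff₀ (by linarith)] at this
    linarith
  set c₀ := min (1 / (2 * C)) (η / (2 * N ^ κ)) with hc₀
  have hc₀0 : 0 < c₀ := by positivity
  have hcC : c₀ ≤ 1 / (2 * C) := min_le_left _ _
  have hcη : c₀ * N ^ κ ≤ η / 2 := by
    have := min_le_right (1 / (2 * C)) (η / (2 * N ^ κ))
    rw [← hc₀, le_div_iff₀ (by positivity)] at this
    linarith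
  refine ⟨κ, τ, c₀, hκ, hτ0, hc₀0, fun u hu hsub hper ω hω n hn hshift => ?_⟩
  obtain ⟨U, H⟩ := exists_multiTrace hu hsub hper
  have hn1 : (1 : ℝ) ≤ n := by exact_mod_cast hn
  have hn0 : (0 : ℝ) < n := one_pos.trans_le hn1
  set g : (Fin (d + 1) → ℝ) → ℝ := fun θ => u fun i => ((θ i : ℝ) : ℂ) with hg
  have hgω : ∀ θ, |g (θ + ω) - g θ| ≤ 1 / (n : ℝ) := fun θ => (hshift θ).le
  have hset : volume {θ ∈ Set.Icc (0 : Fin (d + 1) → ℝ) 1 | ((n : ℝ) ^ (-τ) : ℝ) <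
        |g θ - ∫ θ' in Set.Icc (0 : Fin (d + 1) → ℝ) 1, g θ'|} =
      volume.restrict (Set.Icc (0 : Fin (d + 1) → ℝ) 1) {θ | ((n : ℝ) ^ (-τ) : ℝ) <
        |g θ - ∫ θ' in Set.Icc (0 : Fin (d + 1) → ℝ) 1, g θ'|} := by
    rw [Measure.restrict_apply' measurableSet_Icc, Set.inter_comm]
    rfl
  refine hset.trans_lt ?_
  rcases le_or_gt N n with hNn | hNn
  · have hpow := hN n hNn
    have hsplit : (n : ℝ) ^ κ = (n : ℝ) ^ (κ / 2) * (n : ℝ) ^ (κ / 2) := by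
      rw [← Real.rpow_add hn0, add_halves]
    have hle : C * (n : ℝ) ^ (-κ) ≤ (n : ℝ) ^ (-τ) := by
      refine le_trans ?_ (rpow_neg_le_rpow_neg hn1 hτκ)
      have hpos : 0 < (n : ℝ) ^ (κ / 2) := Real.rpow_pos_of_pos hn0 _
      rw [Real.rpow_neg hn0.le, Real.rpow_neg hn0.le, hsplit, mul_inv, ← mul_assoc]
      refine mul_le_of_le_one_left (by positivity) ?_
      rw [← div_eq_mul_inv, div_le_one hpos]
      nlinarith
    refine (measure_mono fun θ hθ => hle.trans_lt hθ).trans_lt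
      ((hlarge U g H ω hω n hn1 hgω).trans_lt ?_)
    rw [ENNReal.ofReal_lt_ofReal_iff (Real.exp_pos _), ← Real.exp_log hC0, ← Real.exp_add,
      Real.exp_lt_exp, Real.exp_log hC0]
    have hlog : Real.log C ≤ C - 1 := Real.log_le_sub_one_of_pos hC0
    have hx : 2 * C ^ 2 ≤ (n : ℝ) ^ κ :=
      hpow.trans (Real.rpow_le_rpow_of_exponent_le hn1 (by linarith))
    have h1 : c₀ * (n : ℝ) ^ κ ≤ (n : ℝ) ^ κ / C / 2 := by
      refine (mul_le_mul_of_nonneg_right hcC (by positivity)).trans_eq ?_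
      field_simp
    have h2 : 2 * C ≤ (n : ℝ) ^ κ / C := by
      rw [le_div_iff₀ hC0]
      linarith
    linarith
  · have hδ : 1 - η ≤ (n : ℝ) ^ (-τ) := by
      have h1 : Real.log n ≤ Real.log N := Real.log_le_log hn0 hNn.le
      rw [Real.rpow_def_of_pos hn0]
      nlinarith [Real.add_one_le_exp (Real.log n * -τ)]
    have hmeas := hsmall U g H ω hω
      (fun θ => (hgω θ).trans (div_le_one_of_le₀ hn1 hn0.le)) _ hδ
      (Real.rpow_le_one_of_one_le_of_nonpos hn1 (by linarith))
    rw [← ofReal_measureReal, ENNReal.ofReal_lt_ofReal_iff (Real.exp_pos _)]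
    have h1 : (n : ℝ) ^ κ ≤ N ^ κ := Real.rpow_le_rpow hn0.le hNn.le hκ.le
    have h2 := mul_le_mul_of_nonneg_left h1 hc₀0.le
    linarith [Real.add_one_le_exp (-c₀ * (n : ℝ) ^ κ)]

end
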